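/- arXiv:2111.11494 — 5 statements merged into one kernel-verified Lean document; each statement's English description precedes it below -/
import Mathlib

section
/- Let S be a smooth surface in ℝ³ with position vector R(s,t) = (x(s,t), y(s,t), z(s,t)) over a domain Ω ⊆ ℝ², with second fundamental form coefficients e, f, g and nonnegative Gaussian curvature (eg − f² ≥ 0). Let λ = −f + i√(eg − f²) and let L = g ∂/∂s + λ ∂/∂t be the complex vector field of asymptotic directions. Suppose U^j = (u^j, v^j, w^j) : Ω → ℝ³ is a C² solution of the system x_s u^j_s + y_s v^j_s + z_s w^j_s = F^j, x_s u^j_t + y_s v^j_t + z_s w^j_t + x_t u^j_s + y_t v^j_s + z_t w^j_s = G^j, x_t u^j_t + y_t v^j_t + z_t w^j_t = H^j for given functions F^j, G^j, H^j on Ω. Then the ℂ-valued function h^j = LR · U^j satisfies the equation C L h^j = A h^j − B conj(h^j) + C [g² F^j + g λ G^j + λ² H^j] on Ω, where A = (LR × conj(L)R) · (L²R × conj(L)R), B = (LR × conj(L)R) · (L²R × LR), and C = (LR × conj(L)R) · (LR × conj(L)R), the cross and dot products being the ℂ-bilinear extensions to ℂ³ of the standard ones on ℝ³. -/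
open scoped BigOperators

noncomputable section

/-- Dot product of two 3-vectors (ℂ-bilinear extension when over ℂ). -/
def dot3 {R : Type*} [CommRing R] (v w : Fin 3 → R) : R :=
  v 0 * w 0 + v 1 * w 1 + v 2 * w 2

/-- Cross product of two 3-vectors (ℂ-bilinear extension when over ℂ). -/
def cross3 {R : Type*} [CommRing R] (v w : Fin 3 → R) : Fin 3 → R :=
  ![v 1 * w 2 - v 2 * w 1, v 2 * w 0 - v 0 * w 2, v 0 * w 1 - v 1 * w 0]

/-- Euclidean norm of a real 3-vector. -/
def enorm3 (v : Fin 3 → ℝ) : ℝ := Real.sqrt (dot3 v v)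

/-- Partial derivative with respect to the first variable `s`. -/
def pds {E : Type*} [NormedAddCommGroup E] [NormedSpace ℝ E]
    (f : ℝ × ℝ → E) (p : ℝ × ℝ) : E :=
  deriv (fun s => f (s, p.2)) p.1

/-- Partial derivative with respect to the second variable `t`. -/
def pdt {E : Type*} [NormedAddCommGroup E] [NormedSpace ℝ E]
    (f : ℝ × ℝ → E) (p : ℝ × ℝ) : E :=
  deriv (fun t => f (p.1, t)) p.2

/-- Componentwise `s`-derivative of a 3-vector valued map. -/
def vds (V : ℝ × ℝ → Fin 3 → ℝ) (p : ℝ × ℝ) : Fin 3 → ℝ := fun i => pds (fun q => V q i) p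

/-- Componentwise `t`-derivative of a 3-vector valued map. -/
def vdt (V : ℝ × ℝ → Fin 3 → ℝ) (p : ℝ × ℝ) : Fin 3 → ℝ := fun i => pdt (fun q => V q i) p

section helpers

variable {E : Type*} [NormedAddCommGroup E] [NormedSpace ℝ E]

lemma hasDerivAt_slice_s {f : ℝ × ℝ → E} {p : ℝ × ℝ} (hf : DifferentiableAt ℝ f p) :
    HasDerivAt (fun s => f (s, p.2)) (fderiv ℝ f p (1, 0)) p.1 := by
  have h1 : HasDerivAt (fun s : ℝ => (s, p.2)) ((1 : ℝ), (0 : ℝ)) p.1 :=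
    (hasDerivAt_id p.1).prodMk (hasDerivAt_const p.1 p.2)
  have h2 : HasFDerivAt f (fderiv ℝ f p) (p.1, p.2) := hf.hasFDerivAt
  exact h2.comp_hasDerivAt p.1 h1

lemma hasDerivAt_slice_t {f : ℝ × ℝ → E} {p : ℝ × ℝ} (hf : DifferentiableAt ℝ f p) :
    HasDerivAt (fun t => f (p.1, t)) (fderiv ℝ f p (0, 1)) p.2 := by
  have h1 : HasDerivAt (fun t : ℝ => (p.1, t)) ((0 : ℝ), (1 : ℝ)) p.2 :=
    (hasDerivAt_const p.2 p.1).prodMk (hasDerivAt_id p.2)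
  have h2 : HasFDerivAt f (fderiv ℝ f p) (p.1, p.2) := hf.hasFDerivAt
  exact h2.comp_hasDerivAt p.2 h1

lemma pds_eq {f : ℝ × ℝ → E} {p : ℝ × ℝ} (hf : DifferentiableAt ℝ f p) :
    pds f p = fderiv ℝ f p (1, 0) := (hasDerivAt_slice_s hf).deriv

lemma pdt_eq {f : ℝ × ℝ → E} {p : ℝ × ℝ} (hf : DifferentiableAt ℝ f p) :
    pdt f p = fderiv ℝ f p (0, 1) := (hasDerivAt_slice_t hf).deriv

lemma contDiffOn_pds {Ω : Set (ℝ × ℝ)} (hΩ : IsOpen Ω) {f : ℝ × ℝ → E}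
    (hf : ContDiffOn ℝ (⊤ : ℕ∞) f Ω) : ContDiffOn ℝ (⊤ : ℕ∞) (pds f) Ω := by
  have h1 : ContDiffOn ℝ (⊤ : ℕ∞) (fun q => fderiv ℝ f q (1, 0)) Ω :=
    (hf.fderiv_of_isOpen hΩ (by simp)).clm_apply contDiffOn_const
  exact h1.congr fun q hq =>
    pds_eq ((hf.contDiffAt (hΩ.mem_nhds hq)).differentiableAt (by simp))

lemma contDiffOn_pdt {Ω : Set (ℝ × ℝ)} (hΩ : IsOpen Ω) {f : ℝ × ℝ → E}
    (hf : ContDiffOn ℝ (⊤ : ℕ∞) f Ω) : ContDiffOn ℝ (⊤ : ℕ∞) (pdt f) Ω := by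
  have h1 : ContDiffOn ℝ (⊤ : ℕ∞) (fun q => fderiv ℝ f q (0, 1)) Ω :=
    (hf.fderiv_of_isOpen hΩ (by simp)).clm_apply contDiffOn_const
  exact h1.congr fun q hq =>
    pdt_eq ((hf.contDiffAt (hΩ.mem_nhds hq)).differentiableAt (by simp))

lemma diffAt_of {Ω : Set (ℝ × ℝ)} (hΩ : IsOpen Ω) {f : ℝ × ℝ → E}
    (hf : ContDiffOn ℝ (⊤ : ℕ∞) f Ω) {p : ℝ × ℝ} (hp : p ∈ Ω) : DifferentiableAt ℝ f p :=
  (hf.contDiffAt (hΩ.mem_nhds hp)).differentiableAt (by simp)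

lemma pds_pdt_comm {Ω : Set (ℝ × ℝ)} (hΩ : IsOpen Ω) {f : ℝ × ℝ → E}
    (hf : ContDiffOn ℝ (⊤ : ℕ∞) f Ω) {p : ℝ × ℝ} (hp : p ∈ Ω) :
    pds (pdt f) p = pdt (pds f) p := by
  rw [pds_eq (diffAt_of hΩ (contDiffOn_pdt hΩ hf) hp),
    pdt_eq (diffAt_of hΩ (contDiffOn_pds hΩ hf) hp)]
  have e1 : pdt f =ᶠ[nhds p] fun q => fderiv ℝ f q (0, 1) :=
    Filter.eventuallyEq_of_mem (hΩ.mem_nhds hp) fun q hq => pdt_eq (diffAt_of hΩ hf hq)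
  have e2 : pds f =ᶠ[nhds p] fun q => fderiv ℝ f q (1, 0) :=
    Filter.eventuallyEq_of_mem (hΩ.mem_nhds hp) fun q hq => pds_eq (diffAt_of hΩ hf hq)
  have hd : DifferentiableAt ℝ (fderiv ℝ f) p :=
    diffAt_of hΩ (hf.fderiv_of_isOpen hΩ (by simp)) hp
  rw [e1.fderiv_eq, e2.fderiv_eq, fderiv_clm_apply hd (by fun_prop),
    fderiv_clm_apply hd (by fun_prop)]
  have hs : IsSymmSndFDerivAt ℝ f p :=
    (hf.contDiffAt (hΩ.mem_nhds hp)).isSymmSndFDerivAt (by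
      simp only [minSmoothness_of_isRCLikeNormedField]; exact WithTop.coe_le_coe.2 le_top)
  simpa using hs (1, 0) (0, 1)

lemma dA {a b : ℝ × ℝ → ℂ} {p : ℝ × ℝ} (ha : DifferentiableAt ℝ a p)
    (hb : DifferentiableAt ℝ b p) :
    pds (fun q => a q * b q) p = pds a p * b p + a p * pds b p :=
  by
    have h1 := hasDerivAt_slice_s ha
    have h2 := hasDerivAt_slice_s hb
    rw [pds_eq ha, pds_eq hb]
    exact (h1.mul h2).deriv

lemma dB {a b : ℝ × ℝ → ℂ} {p : ℝ × ℝ} (ha : DifferentiableAt ℝ a p)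
    (hb : DifferentiableAt ℝ b p) :
    pdt (fun q => a q * b q) p = pdt a p * b p + a p * pdt b p :=
  by
    have h1 := hasDerivAt_slice_t ha
    have h2 := hasDerivAt_slice_t hb
    rw [pdt_eq ha, pdt_eq hb]
    exact (h1.mul h2).deriv

lemma aA {a b : ℝ × ℝ → ℂ} {p : ℝ × ℝ} (ha : DifferentiableAt ℝ a p)
    (hb : DifferentiableAt ℝ b p) :
    pds (fun q => a q + b q) p = pds a p + pds b p := by
  rw [pds_eq ha, pds_eq hb]
  exact ((hasDerivAt_slice_s ha).add (hasDerivAt_slice_s hb)).deriv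

lemma aB {a b : ℝ × ℝ → ℂ} {p : ℝ × ℝ} (ha : DifferentiableAt ℝ a p)
    (hb : DifferentiableAt ℝ b p) :
    pdt (fun q => a q + b q) p = pdt a p + pdt b p := by
  rw [pdt_eq ha, pdt_eq hb]
  exact ((hasDerivAt_slice_t ha).add (hasDerivAt_slice_t hb)).deriv

lemma cA {a : ℝ × ℝ → ℝ} {p : ℝ × ℝ} (ha : DifferentiableAt ℝ a p) :
    pds (fun q => (a q : ℂ)) p = ((pds a p : ℝ) : ℂ) := by
  rw [pds_eq ha]
  exact (hasDerivAt_slice_s ha).ofReal_comp.deriv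

lemma cB {a : ℝ × ℝ → ℝ} {p : ℝ × ℝ} (ha : DifferentiableAt ℝ a p) :
    pdt (fun q => (a q : ℂ)) p = ((pdt a p : ℝ) : ℂ) := by
  rw [pdt_eq ha]
  exact (hasDerivAt_slice_t ha).ofReal_comp.deriv

lemma cD {a : ℝ × ℝ → ℝ} {p : ℝ × ℝ} (ha : DifferentiableAt ℝ a p) :
    DifferentiableAt ℝ (fun q => (a q : ℂ)) p :=
  Complex.ofRealCLM.differentiableAt.comp p ha

lemma mD {a b : ℝ × ℝ → ℂ} {p : ℝ × ℝ} (ha : DifferentiableAt ℝ a p)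
    (hb : DifferentiableAt ℝ b p) : DifferentiableAt ℝ (fun q => a q * b q) p := ha.mul hb

lemma aD {a b : ℝ × ℝ → ℂ} {p : ℝ × ℝ} (ha : DifferentiableAt ℝ a p)
    (hb : DifferentiableAt ℝ b p) : DifferentiableAt ℝ (fun q => a q + b q) p := ha.add hb

lemma lagrange3 (V P Q U : Fin 3 → ℂ) (h : dot3 V (cross3 P Q) = 0) :
    dot3 (cross3 P Q) (cross3 P Q) * dot3 V U
      = dot3 (cross3 P Q) (cross3 V Q) * dot3 P U
        - dot3 (cross3 P Q) (cross3 V P) * dot3 Q U := by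
  have : dot3 (cross3 P Q) (cross3 P Q) * dot3 V U - dot3 V (cross3 P Q) * dot3 (cross3 P Q) U
      = dot3 (cross3 P Q) (cross3 V Q) * dot3 P U
        - dot3 (cross3 P Q) (cross3 V P) * dot3 Q U := by
    simp [dot3, cross3]; ring
  rw [← this, h]; ring

end helpers

/-- Proposition 2.1 / "Wild Strawberries".
For a surface with nonnegative curvature and the complex vector field
`L = g ∂/∂s + λ ∂/∂t` of asymptotic directions, if `U = (u,v,w)` is a `C²` solution of the
bending system with right-hand sides `F, G, H`, then `h = LR · U` satisfies
`C·Lh = A·h − B·conj h + C·(g²F + gλG + λ²H)`. -/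
theorem bending_field_satisfies_BersVekua_equation
    (Ω : Set (ℝ × ℝ)) (hΩ : IsOpen Ω)
    (R : ℝ × ℝ → Fin 3 → ℝ) (hR : ContDiffOn ℝ (⊤ : ℕ∞) R Ω)
    (hreg : ∀ p ∈ Ω, cross3 (vds R p) (vdt R p) ≠ 0)
    (e f g : ℝ × ℝ → ℝ)
    (he : ∀ p, e p = dot3 (vds (vds R) p)
        ((enorm3 (cross3 (vds R p) (vdt R p)))⁻¹ • cross3 (vds R p) (vdt R p)))
    (hf : ∀ p, f p = dot3 (vdt (vds R) p)
        ((enorm3 (cross3 (vds R p) (vdt R p)))⁻¹ • cross3 (vds R p) (vdt R p)))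
    (hg : ∀ p, g p = dot3 (vdt (vdt R) p)
        ((enorm3 (cross3 (vds R p) (vdt R p)))⁻¹ • cross3 (vds R p) (vdt R p)))
    (hK : ∀ p ∈ Ω, 0 ≤ e p * g p - f p ^ 2)
    (lam : ℝ × ℝ → ℂ)
    (hlam : ∀ p, lam p = -(f p : ℂ) + Complex.I * ((Real.sqrt (e p * g p - f p ^ 2) : ℝ) : ℂ))
    (LR L2R : ℝ × ℝ → Fin 3 → ℂ)
    (hLR : ∀ p i, LR p i = (g p : ℂ) * ((vds R p i : ℝ) : ℂ) + lam p * ((vdt R p i : ℝ) : ℂ))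
    (hL2R : ∀ p i, L2R p i = (g p : ℂ) * pds (fun q => LR q i) p + lam p * pdt (fun q => LR q i) p)
    (F G H : ℝ × ℝ → ℝ)
    (U : ℝ × ℝ → Fin 3 → ℝ) (hU : ContDiffOn ℝ 2 U Ω)
    (hsys1 : ∀ p ∈ Ω, dot3 (vds R p) (vds U p) = F p)
    (hsys2 : ∀ p ∈ Ω, dot3 (vds R p) (vdt U p) + dot3 (vdt R p) (vds U p) = G p)
    (hsys3 : ∀ p ∈ Ω, dot3 (vdt R p) (vdt U p) = H p)
    (h : ℝ × ℝ → ℂ)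
    (hh : ∀ p, h p = dot3 (LR p) (fun i => ((U p i : ℝ) : ℂ)))
    (A B C : ℝ × ℝ → ℂ)
    (hA : ∀ p, A p = dot3 (cross3 (LR p) (fun i => starRingEnd ℂ (LR p i)))
        (cross3 (L2R p) (fun i => starRingEnd ℂ (LR p i))))
    (hB : ∀ p, B p = dot3 (cross3 (LR p) (fun i => starRingEnd ℂ (LR p i)))
        (cross3 (L2R p) (LR p)))
    (hC : ∀ p, C p = dot3 (cross3 (LR p) (fun i => starRingEnd ℂ (LR p i)))
        (cross3 (LR p) (fun i => starRingEnd ℂ (LR p i)))) :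
    ∀ p ∈ Ω,
      C p * ((g p : ℂ) * pds h p + lam p * pdt h p)
        = A p * h p - B p * starRingEnd ℂ (h p)
          + C p * ((g p : ℂ) ^ 2 * ((F p : ℝ) : ℂ) + (g p : ℂ) * lam p * ((G p : ℝ) : ℂ)
              + lam p ^ 2 * ((H p : ℝ) : ℂ)) := by
  intro p hp
  -- smoothness of R and its derivatives
  have sR : ∀ i, ContDiffOn ℝ (⊤ : ℕ∞) (fun q => R q i) Ω := fun i => contDiffOn_pi.1 hR i
  have sRs : ∀ i, ContDiffOn ℝ (⊤ : ℕ∞) (fun q => vds R q i) Ω := fun i => contDiffOn_pds hΩ (sR i)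
  have sRt : ∀ i, ContDiffOn ℝ (⊤ : ℕ∞) (fun q => vdt R q i) Ω := fun i => contDiffOn_pdt hΩ (sR i)
  have dRs : ∀ i, DifferentiableAt ℝ (fun q => vds R q i) p := fun i => diffAt_of hΩ (sRs i) hp
  have dRt : ∀ i, DifferentiableAt ℝ (fun q => vdt R q i) p := fun i => diffAt_of hΩ (sRt i) hp
  have dRss : ∀ i, DifferentiableAt ℝ (fun q => vds (vds R) q i) p :=
    fun i => diffAt_of hΩ (contDiffOn_pds hΩ (sRs i)) hp
  have dRst : ∀ i, DifferentiableAt ℝ (fun q => vdt (vds R) q i) p :=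
    fun i => diffAt_of hΩ (contDiffOn_pdt hΩ (sRs i)) hp
  have dRtt : ∀ i, DifferentiableAt ℝ (fun q => vdt (vdt R) q i) p :=
    fun i => diffAt_of hΩ (contDiffOn_pdt hΩ (sRt i)) hp
  have dU : ∀ i, DifferentiableAt ℝ (fun q => U q i) p := fun i =>
    ((contDiffOn_pi.1 hU i).contDiffAt (hΩ.mem_nhds hp)).differentiableAt (by norm_num)
  have symm : ∀ i, pds (fun q => vdt R q i) p = vdt (vds R) p i :=
    fun i => pds_pdt_comm hΩ (sR i) hp
  have hconj : starRingEnd ℂ (h p)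
      = dot3 (fun i => starRingEnd ℂ (LR p i)) (fun i => ((U p i : ℝ) : ℂ)) := by
    rw [hh]; simp [dot3]
  have hlc : starRingEnd ℂ (lam p)
      = -(f p : ℂ) - Complex.I * ((Real.sqrt (e p * g p - f p ^ 2) : ℝ) : ℂ) := by
    rw [hlam]; simp [sub_eq_add_neg]
  have hQ : ∀ i, starRingEnd ℂ (LR p i)
      = (g p : ℂ) * ((vds R p i : ℝ) : ℂ) + starRingEnd ℂ (lam p) * ((vdt R p i : ℝ) : ℂ) := by
    intro i; rw [hLR]; simp
  have hW : ∀ i, cross3 (LR p) (fun i => starRingEnd ℂ (LR p i)) i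
      = (g p : ℂ) * (starRingEnd ℂ (lam p) - lam p)
        * ((cross3 (vds R p) (vdt R p) i : ℝ) : ℂ) := by
    intro i
    fin_cases i <;> simp only [cross3, hQ, hLR] <;> simp <;> ring
  rcases (hK p hp).eq_or_lt with h0 | hpos
  · have hW0 : cross3 (LR p) (fun i => starRingEnd ℂ (LR p i)) = 0 := by
      funext i
      rw [hW, hlc, hlam, ← h0]; simp
    have hA0 : A p = 0 := by rw [hA, hW0]; simp [dot3]
    have hB0 : B p = 0 := by rw [hB, hW0]; simp [dot3]
    have hC0 : C p = 0 := by rw [hC, hW0]; simp [dot3]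
    rw [hA0, hB0, hC0]; ring
  -- the unit normal is differentiable
  have dX : ∀ i, DifferentiableAt ℝ (fun q => cross3 (vds R q) (vdt R q) i) p := by
    intro i
    fin_cases i
    · exact ((dRs 1).mul (dRt 2)).sub ((dRs 2).mul (dRt 1))
    · exact ((dRs 2).mul (dRt 0)).sub ((dRs 0).mul (dRt 2))
    · exact ((dRs 0).mul (dRt 1)).sub ((dRs 1).mul (dRt 0))
  have hXX : dot3 (cross3 (vds R p) (vdt R p)) (cross3 (vds R p) (vdt R p)) > 0 := by
    have hne := hreg p hp
    generalize cross3 (vds R p) (vdt R p) = X at hne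
    by_contra hcon
    apply hne
    unfold dot3 at hcon
    have h0 : X 0 = 0 := by nlinarith [mul_self_nonneg (X 0), mul_self_nonneg (X 1), mul_self_nonneg (X 2)]
    have h1 : X 1 = 0 := by nlinarith [mul_self_nonneg (X 0), mul_self_nonneg (X 1), mul_self_nonneg (X 2)]
    have h2 : X 2 = 0 := by nlinarith [mul_self_nonneg (X 0), mul_self_nonneg (X 1), mul_self_nonneg (X 2)]
    funext i; fin_cases i <;> simpa
  have dn : DifferentiableAt ℝ (fun q => (enorm3 (cross3 (vds R q) (vdt R q)))⁻¹) p := by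
    have : DifferentiableAt ℝ (fun q => enorm3 (cross3 (vds R q) (vdt R q))) p := by
      unfold enorm3
      refine DifferentiableAt.sqrt ?_ hXX.ne'
      exact (((dX 0).mul (dX 0)).add ((dX 1).mul (dX 1))).add ((dX 2).mul (dX 2))
    exact this.inv (Real.sqrt_pos.2 hXX).ne'
  have dII : ∀ V : ℝ × ℝ → Fin 3 → ℝ, (∀ i, DifferentiableAt ℝ (fun q => V q i) p) →
      DifferentiableAt ℝ (fun q => dot3 (V q)
        ((enorm3 (cross3 (vds R q) (vdt R q)))⁻¹ • cross3 (vds R q) (vdt R q))) p := by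
    intro V hV
    exact (((hV 0).mul (dn.mul (dX 0))).add ((hV 1).mul (dn.mul (dX 1)))).add
      ((hV 2).mul (dn.mul (dX 2)))
  have de : DifferentiableAt ℝ e p := by rw [funext he]; exact dII _ dRss
  have df : DifferentiableAt ℝ f p := by rw [funext hf]; exact dII _ dRst
  have dg : DifferentiableAt ℝ g p := by rw [funext hg]; exact dII _ dRtt
  have dl : DifferentiableAt ℝ lam p := by
    rw [funext hlam]
    have hs : DifferentiableAt ℝ (fun q => Real.sqrt (e q * g q - f q ^ 2)) p :=
      DifferentiableAt.sqrt ((de.mul dg).sub (df.pow 2)) hpos.ne'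
    exact (cD df).neg.add ((cD hs).const_mul Complex.I)
  have hquad : lam p ^ 2 + 2 * lam p * (f p : ℂ) + (e p : ℂ) * (g p : ℂ) = 0 := by
    have hsq : ((Real.sqrt (e p * g p - f p ^ 2) : ℝ) : ℂ) ^ 2
        = (e p : ℂ) * (g p : ℂ) - (f p : ℂ) ^ 2 := by
      exact_mod_cast Real.sq_sqrt hpos.le
    rw [hlam]
    linear_combination (-1 : ℂ) * hsq + ((Real.sqrt (e p * g p - f p ^ 2) : ℝ) : ℂ) ^ 2 * Complex.I_sq
  -- derivatives of LR
  have eLR : ∀ i, (fun q => LR q i)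
      = fun q => (g q : ℂ) * ((vds R q i : ℝ) : ℂ) + lam q * ((vdt R q i : ℝ) : ℂ) :=
    fun i => funext fun q => hLR q i
  have dLR : ∀ i, DifferentiableAt ℝ (fun q => LR q i) p := by
    intro i; rw [eLR]
    exact ((cD dg).mul (cD (dRs i))).add (dl.mul (cD (dRt i)))
  have hLRs : ∀ i, pds (fun q => LR q i) p
      = ((pds g p : ℝ) : ℂ) * ((vds R p i : ℝ) : ℂ) + (g p : ℂ) * ((vds (vds R) p i : ℝ) : ℂ)
        + (pds lam p * ((vdt R p i : ℝ) : ℂ) + lam p * ((vdt (vds R) p i : ℝ) : ℂ)) := by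
    intro i
    rw [eLR, aA (mD (cD dg) (cD (dRs i))) (mD dl (cD (dRt i))), dA (cD dg) (cD (dRs i)),
      dA dl (cD (dRt i)), cA dg, cA (dRs i), cA (dRt i), symm]
    rfl
  have hLRt : ∀ i, pdt (fun q => LR q i) p
      = ((pdt g p : ℝ) : ℂ) * ((vds R p i : ℝ) : ℂ) + (g p : ℂ) * ((vdt (vds R) p i : ℝ) : ℂ)
        + (pdt lam p * ((vdt R p i : ℝ) : ℂ) + lam p * ((vdt (vdt R) p i : ℝ) : ℂ)) := by
    intro i
    rw [eLR, aB (mD (cD dg) (cD (dRs i))) (mD dl (cD (dRt i))), dB (cD dg) (cD (dRs i)),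
      dB dl (cD (dRt i)), cB dg, cB (dRs i), cB (dRt i)]
    rfl
  -- derivatives of h
  have eh : h = fun q => LR q 0 * ((U q 0 : ℝ) : ℂ) + LR q 1 * ((U q 1 : ℝ) : ℂ)
      + LR q 2 * ((U q 2 : ℝ) : ℂ) := funext hh
  have dm : ∀ i, DifferentiableAt ℝ (fun q => LR q i * ((U q i : ℝ) : ℂ)) p :=
    fun i => (dLR i).mul (cD (dU i))
  have hhs : pds h p = dot3 (fun i => pds (fun q => LR q i) p) (fun i => ((U p i : ℝ) : ℂ))
      + dot3 (LR p) (fun i => ((vds U p i : ℝ) : ℂ)) := by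
    rw [eh, aA (aD (dm 0) (dm 1)) (dm 2), aA (dm 0) (dm 1), dA (dLR 0) (cD (dU 0)),
      dA (dLR 1) (cD (dU 1)), dA (dLR 2) (cD (dU 2)), cA (dU 0), cA (dU 1), cA (dU 2)]
    simp only [dot3, vds]; ring
  have hht : pdt h p = dot3 (fun i => pdt (fun q => LR q i) p) (fun i => ((U p i : ℝ) : ℂ))
      + dot3 (LR p) (fun i => ((vdt U p i : ℝ) : ℂ)) := by
    rw [eh, aB (aD (dm 0) (dm 1)) (dm 2), aB (dm 0) (dm 1), dB (dLR 0) (cD (dU 0)),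
      dB (dLR 1) (cD (dU 1)), dB (dLR 2) (cD (dU 2)), cB (dU 0), cB (dU 1), cB (dU 2)]
    simp only [dot3, vdt]; ring
  -- L h
  have hLh : (g p : ℂ) * pds h p + lam p * pdt h p
      = dot3 (L2R p) (fun i => ((U p i : ℝ) : ℂ))
        + ((g p : ℂ) ^ 2 * ((F p : ℝ) : ℂ) + (g p : ℂ) * lam p * ((G p : ℝ) : ℂ)
              + lam p ^ 2 * ((H p : ℝ) : ℂ)) := by
    rw [hhs, hht, ← hsys1 p hp, ← hsys2 p hp, ← hsys3 p hp]
    simp only [dot3, hL2R, hLR p]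
    push_cast
    ring
  -- L²R is tangential
  have hn : enorm3 (cross3 (vds R p) (vdt R p)) ≠ 0 := (Real.sqrt_pos.2 hXX).ne'
  have key : ∀ (V : Fin 3 → ℝ) (k : ℝ), k = dot3 V
      ((enorm3 (cross3 (vds R p) (vdt R p)))⁻¹ • cross3 (vds R p) (vdt R p)) →
      dot3 V (cross3 (vds R p) (vdt R p)) = enorm3 (cross3 (vds R p) (vdt R p)) * k := by
    intro V k hk
    rw [hk]; simp only [dot3, Pi.smul_apply, smul_eq_mul]; field_simp
  have keyC : ∀ (V : Fin 3 → ℝ) (k : ℝ), k = dot3 V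
      ((enorm3 (cross3 (vds R p) (vdt R p)))⁻¹ • cross3 (vds R p) (vdt R p)) →
      dot3 (fun i => (V i : ℂ)) (fun i => ((cross3 (vds R p) (vdt R p) i : ℝ) : ℂ))
        = (enorm3 (cross3 (vds R p) (vdt R p)) : ℂ) * (k : ℂ) := by
    intro V k hk
    have := congrArg (fun x : ℝ => (x : ℂ)) (key V k hk)
    simpa [dot3] using this
  have ke := keyC _ _ (he p)
  have kf := keyC _ _ (hf p)
  have kg := keyC _ _ (hg p)
  have ts : dot3 (fun i => ((vds R p i : ℝ) : ℂ))
      (fun i => ((cross3 (vds R p) (vdt R p) i : ℝ) : ℂ)) = 0 := by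
    simp [dot3, cross3]; ring
  have tt : dot3 (fun i => ((vdt R p i : ℝ) : ℂ))
      (fun i => ((cross3 (vds R p) (vdt R p) i : ℝ) : ℂ)) = 0 := by
    simp [dot3, cross3]; ring
  have htan : dot3 (L2R p) (cross3 (LR p) (fun i => starRingEnd ℂ (LR p i))) = 0 := by
    generalize enorm3 (cross3 (vds R p) (vdt R p)) = n at *
    simp only [dot3, hW, hL2R, hLRs, hLRt] at ke kf kg ts tt ⊢
    generalize cross3 (vds R p) (vdt R p) = X at *
    linear_combination ((g p : ℂ) * (starRingEnd ℂ (lam p) - lam p)) *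
      ((g p : ℂ) ^ 2 * ke + 2 * (g p : ℂ) * lam p * kf + lam p ^ 2 * kg
        + ((g p : ℂ) * ((pds g p : ℝ) : ℂ) + lam p * ((pdt g p : ℝ) : ℂ)) * ts
        + ((g p : ℂ) * pds lam p + lam p * pdt lam p) * tt
        + (n : ℂ) * (g p : ℂ) * hquad)
  have hL := lagrange3 (L2R p) (LR p) (fun i => starRingEnd ℂ (LR p i))
    (fun i => ((U p i : ℝ) : ℂ)) htan
  rw [hLh, mul_add, hconj, hh p, hA, hB, hC, hL]
end
end

section
/- Let m ≥ 2 and let z : ℝ² \ {0} → ℝ be given in polar coordinates s = r cos θ, t = r sin θ by z = r^m P(θ) with P ∈ C^∞(S¹). Then the Hessian determinant of z satisfies the identity z_ss z_tt − z_st² = r^{2m−4} (m−1) [m² P(θ)² + m P(θ) P''(θ) − (m−1) P'(θ)²] for all r > 0 and all θ. -/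
noncomputable section

/-- First partial derivatives of a function which is `r ^ k * Q θ` in polar coordinates. -/
theorem polar_partials (k : ℝ) (Q : ℝ → ℝ) (f : ℝ × ℝ → ℝ)
    (hf : ∀ r : ℝ, 0 < r → ∀ θ : ℝ, f (r * Real.cos θ, r * Real.sin θ) = r ^ k * Q θ)
    (r : ℝ) (hr : 0 < r) (θ q : ℝ) (hQ : HasDerivAt Q q θ)
    (hd : DifferentiableAt ℝ f (r * Real.cos θ, r * Real.sin θ)) :
    pds f (r * Real.cos θ, r * Real.sin θ)
        = r ^ (k - 1) * (k * Q θ * Real.cos θ - q * Real.sin θ) ∧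
      pdt f (r * Real.cos θ, r * Real.sin θ)
        = r ^ (k - 1) * (k * Q θ * Real.sin θ + q * Real.cos θ) := by
  obtain ⟨L, hL⟩ := hd
  have e1 : pds f (r * Real.cos θ, r * Real.sin θ) = L (1, 0) :=
    (HasFDerivAt.comp_hasDerivAt (r * Real.cos θ) (f := fun s : ℝ => (s, r * Real.sin θ)) hL
      ((hasDerivAt_id _).prodMk (hasDerivAt_const _ _))).deriv
  have e2 : pdt f (r * Real.cos θ, r * Real.sin θ) = L (0, 1) :=
    (HasFDerivAt.comp_hasDerivAt (r * Real.sin θ) (f := fun t : ℝ => (r * Real.cos θ, t)) hL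
      ((hasDerivAt_const _ _).prodMk (hasDerivAt_id _))).deriv
  have hlin : ∀ x y : ℝ, L (x, y) = x * L (1, 0) + y * L (0, 1) := by
    intro x y
    have h : ((x, y) : ℝ × ℝ) = x • ((1, 0) : ℝ × ℝ) + y • ((0, 1) : ℝ × ℝ) := by simp
    rw [h, map_add, map_smul, map_smul, smul_eq_mul, smul_eq_mul]
  have d1 : HasDerivAt (fun ρ : ℝ => f (ρ * Real.cos θ, ρ * Real.sin θ))
      (L (1 * Real.cos θ, 1 * Real.sin θ)) r :=
    HasFDerivAt.comp_hasDerivAt r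
      (f := fun ρ : ℝ => (ρ * Real.cos θ, ρ * Real.sin θ)) hL
      (((hasDerivAt_id r).mul_const _).prodMk ((hasDerivAt_id r).mul_const _))
  have d1' : HasDerivAt (fun ρ : ℝ => f (ρ * Real.cos θ, ρ * Real.sin θ))
      (k * r ^ (k - 1) * Q θ) r := by
    refine ((Real.hasDerivAt_rpow_const (p := k) (Or.inl hr.ne')).mul_const
      (Q θ)).congr_of_eventuallyEq ?_
    filter_upwards [lt_mem_nhds hr] with ρ hρ using hf ρ hρ θ
  have d2 : HasDerivAt (fun φ : ℝ => f (r * Real.cos φ, r * Real.sin φ))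
      (L (r * -Real.sin θ, r * Real.cos θ)) θ :=
    HasFDerivAt.comp_hasDerivAt θ
      (f := fun φ : ℝ => (r * Real.cos φ, r * Real.sin φ)) hL
      (((Real.hasDerivAt_cos θ).const_mul r).prodMk ((Real.hasDerivAt_sin θ).const_mul r))
  have d2' : HasDerivAt (fun φ : ℝ => f (r * Real.cos φ, r * Real.sin φ)) (r ^ k * q) θ := by
    have : (fun φ : ℝ => f (r * Real.cos φ, r * Real.sin φ)) = fun φ => r ^ k * Q φ :=
      funext fun φ => hf r hr φ
    rw [this]
    exact hQ.const_mul _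
  have E1 := d1.unique d1'
  have E2 := d2.unique d2'
  rw [hlin] at E1 E2
  have hk : r ^ k = r * r ^ (k - 1) := by
    rw [Real.rpow_sub_one hr.ne']
    field_simp
  have E3 : -Real.sin θ * L (1, 0) + Real.cos θ * L (0, 1) = r ^ (k - 1) * q := by
    apply mul_left_cancel₀ hr.ne'
    rw [hk] at E2
    linear_combination E2
  have hcs := Real.sin_sq_add_cos_sq θ
  rw [e1, e2]
  constructor
  · linear_combination Real.cos θ * E1 - Real.sin θ * E3 - L (1, 0) * hcs
  · linear_combination Real.sin θ * E1 + Real.cos θ * E3 - L (0, 1) * hcs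

theorem pds_pdt_differentiableAt (z : ℝ × ℝ → ℝ)
    (hzsm : ContDiffOn ℝ (⊤ : ℕ∞) z {p : ℝ × ℝ | p ≠ 0}) (p : ℝ × ℝ) (hp : p ≠ 0) :
    DifferentiableAt ℝ z p ∧ DifferentiableAt ℝ (pds z) p ∧ DifferentiableAt ℝ (pdt z) p := by
  have hopen : IsOpen {p : ℝ × ℝ | p ≠ 0} := isOpen_ne
  have hc : ∀ q : ℝ × ℝ, q ≠ 0 → ContDiffAt ℝ (⊤ : ℕ∞) z q := fun q hq =>
    hzsm.contDiffAt (hopen.mem_nhds hq)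
  have hd : ∀ q : ℝ × ℝ, q ≠ 0 → DifferentiableAt ℝ z q := fun q hq =>
    (hc q hq).differentiableAt (by simp)
  have hfd : DifferentiableAt ℝ (fderiv ℝ z) p :=
    ((hc p hp).fderiv_right (m := 1) (WithTop.coe_le_coe.2 (le_top : (1 + 1 : ℕ∞) ≤ ⊤))).differentiableAt (by simp)
  refine ⟨hd p hp, ?_, ?_⟩
  · refine (hfd.clm_apply (differentiableAt_const ((1, 0) : ℝ × ℝ))).congr_of_eventuallyEq ?_
    filter_upwards [hopen.mem_nhds hp] with q hq
    exact (HasFDerivAt.comp_hasDerivAt q.1 (f := fun s : ℝ => (s, q.2)) (hd q hq).hasFDerivAt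
      ((hasDerivAt_id _).prodMk (hasDerivAt_const _ _))).deriv
  · refine (hfd.clm_apply (differentiableAt_const ((0, 1) : ℝ × ℝ))).congr_of_eventuallyEq ?_
    filter_upwards [hopen.mem_nhds hp] with q hq
    exact (HasFDerivAt.comp_hasDerivAt q.2 (f := fun t : ℝ => (q.1, t)) (hd q hq).hasFDerivAt
      ((hasDerivAt_const _ _).prodMk (hasDerivAt_id _))).deriv

/-- For a homogeneous function `z = r^m P(θ)` of order `m ≥ 2` (in polar
coordinates `s = r cos θ`, `t = r sin θ`), the Hessian determinant satisfies
`z_ss z_tt − z_st² = r^{2m−4}(m−1)[m²P² + m P P'' − (m−1)P'²]`. -/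
theorem hessian_det_of_homogeneous
    (m : ℝ) (hm : 2 ≤ m)
    (P : ℝ → ℝ) (hP : ContDiff ℝ (⊤ : ℕ∞) P)
    (hper : ∀ θ, P (θ + 2 * Real.pi) = P θ)
    (z : ℝ × ℝ → ℝ)
    (hz : ∀ r : ℝ, 0 < r → ∀ θ : ℝ, z (r * Real.cos θ, r * Real.sin θ) = r ^ m * P θ)
    (hzsm : ContDiffOn ℝ (⊤ : ℕ∞) z {p : ℝ × ℝ | p ≠ 0}) :
    ∀ r : ℝ, 0 < r → ∀ θ : ℝ,
      pds (pds z) (r * Real.cos θ, r * Real.sin θ)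
          * pdt (pdt z) (r * Real.cos θ, r * Real.sin θ)
        - (pdt (pds z) (r * Real.cos θ, r * Real.sin θ)) ^ 2
      = r ^ (2 * m - 4) * (m - 1)
          * (m ^ 2 * P θ ^ 2 + m * P θ * deriv (deriv P) θ - (m - 1) * (deriv P θ) ^ 2) := by
  intro r hr θ
  have hne : ∀ r : ℝ, 0 < r → ∀ θ : ℝ, ((r * Real.cos θ, r * Real.sin θ) : ℝ × ℝ) ≠ 0 := by
    intro r hr θ h
    have h1 : r * Real.cos θ = 0 := congrArg Prod.fst h
    have h2 : r * Real.sin θ = 0 := congrArg Prod.snd h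
    have h3 := Real.sin_sq_add_cos_sq θ
    rw [(mul_eq_zero.mp h1).resolve_left hr.ne', (mul_eq_zero.mp h2).resolve_left hr.ne'] at h3
    norm_num at h3
  have hP1 : ∀ θ, HasDerivAt P (deriv P θ) θ := fun θ =>
    (hP.differentiable (by simp) θ).hasDerivAt
  have hP' : ContDiff ℝ 1 (deriv P) := by
    have h2 : ContDiff ℝ (1 + 1) P := hP.of_le (WithTop.coe_le_coe.2 (le_top : (1 + 1 : ℕ∞) ≤ ⊤))
    exact (contDiff_succ_iff_deriv.mp h2).2.2
  have hP2 : HasDerivAt (deriv P) (deriv (deriv P) θ) θ :=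
    (hP'.differentiable (by simp) θ).hasDerivAt
  have hD := fun r hr θ => pds_pdt_differentiableAt z hzsm _ (hne r hr θ)
  have F := fun r hr θ => polar_partials m P z hz r hr θ _ (hP1 θ) (hD r hr θ).1
  have hc := Real.hasDerivAt_cos θ
  have hs := Real.hasDerivAt_sin θ
  have A := polar_partials (m - 1)
    (fun θ => m * P θ * Real.cos θ - deriv P θ * Real.sin θ) (pds z)
    (fun r hr θ => (F r hr θ).1) r hr θ _
    ((((hP1 θ).const_mul m).mul hc).sub (hP2.mul hs)) (hD r hr θ).2.1
  have B := polar_partials (m - 1)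
    (fun θ => m * P θ * Real.sin θ + deriv P θ * Real.cos θ) (pdt z)
    (fun r hr θ => (F r hr θ).2) r hr θ _
    ((((hP1 θ).const_mul m).mul hs).add (hP2.mul hc)) (hD r hr θ).2.2
  rw [A.1, A.2, B.2]
  have hpow : r ^ (2 * m - 4) = r ^ (m - 1 - 1) * r ^ (m - 1 - 1) := by
    rw [← Real.rpow_add hr]
    congr 1
    ring
  rw [hpow]
  have hcs : Real.sin θ ^ 2 = 1 - Real.cos θ ^ 2 := by
    linarith [Real.sin_sq_add_cos_sq θ]
  generalize r ^ (m - 1 - 1) = R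
  generalize deriv (deriv P) θ = p2
  generalize deriv P θ = p1
  generalize P θ = p0
  generalize Real.cos θ = c at *
  generalize Real.sin θ = s at *
  clear * - hcs
  have hs4 : s ^ 4 = (1 - c ^ 2) ^ 2 := by rw [← hcs]; ring
  ring_nf
  simp only [hs4, hcs]
  ring
end
end

section
/- Let S ⊂ ℝ³ be the graph of a homogeneous function z(s,t) = r^m P(θ) of order m ≥ 2 with P ∈ C^∞(S¹), P > 0, z smooth on ℝ² \ {0}, and suppose m² P(θ)² + m P(θ) P''(θ) − (m−1) P'(θ)² > 0 for all θ outside a finite set {θ_1, …, θ_ℓ}. Assume the functions c_1(θ) = [z_st/√(z_tt z_ss − z_st²)]·(d/dθ) log(z_tt) and c_2(θ) = [z_st/√(z_tt z_ss − z_st²)]·(d/dθ) log(z_ss) are in L¹([0,2π]), and set b_1 = ∫_0^{2π} b(θ) dθ with b(θ) = √(z_tt z_ss − z_st²)/((m²−m) r^{m−2} P(θ)), and b_2 = −(1/4) ∫_0^{2π} (c_1(θ) − c_2(θ)) dθ. If b_1 − b_2 ∉ πℤ and (2m−1) b_1 − b_2 ∉ πℤ, then for every k ∈ ℕ there exist U^1,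 U^2 ∈ C^k(ℝ², ℝ³) such that the deformation of S with position vector R(s,t) + 2ε U^1(s,t) + 2ε² U^2(s,t), where R(s,t) = (s, t, z(s,t)), is a nontrivial infinitesimal bending of order 2. -/
open scoped BigOperators

noncomputable section

lemma lin_ode_exists {E : Type*} [NormedAddCommGroup E] [NormedSpace ℝ E] [CompleteSpace E]
    (A : ℝ → E →L[ℝ] E) (hA : Continuous A) (K : ℝ) (hK : 0 < K) (hb : ∀ t, ‖A t‖ ≤ K) (x0 : E) :
    ∃ y : ℝ → E, y 0 = x0 ∧ ∀ t, HasDerivAt y (A t (y t)) t := by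
  set k : ℝ := 2 * K with hk
  have hkpos : 0 < k := by positivity
  have hch : ∀ t : ℝ, 0 < Real.cosh (k * t) := fun t => Real.cosh_pos _
  have hchc : Continuous fun t : ℝ => Real.cosh (k * t) := by fun_prop
  have hIntg : ∀ (t C : ℝ), |∫ τ in (0:ℝ)..t, K * C * Real.cosh (k * τ)|
      = |C| * |Real.sinh (k * t)| / 2 := by
    intro t C
    have : ∫ τ in (0:ℝ)..t, K * C * Real.cosh (k * τ) = C * Real.sinh (k * t) / 2 := by
      have hd : ∀ x ∈ Set.uIcc 0 t, HasDerivAt (fun x => C * Real.sinh (k * x) / 2)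
          (K * C * Real.cosh (k * x)) x := by
        intro x _
        have h1 : HasDerivAt (fun x : ℝ => k * x) k x := by
          simpa using (hasDerivAt_id x).const_mul k
        have := ((h1.sinh).const_mul C).div_const 2
        exact this.congr_deriv (by rw [hk]; ring)
      rw [intervalIntegral.integral_eq_sub_of_hasDerivAt hd
        (Continuous.intervalIntegrable (by fun_prop) _ _)]
      simp
    rw [this, abs_div, abs_mul]; simp
  have hsc : ∀ t : ℝ, |Real.sinh (k * t)| ≤ Real.cosh (k * t) := by
    intro t
    rw [← Real.cosh_abs, Real.abs_sinh]
    exact (Real.sinh_lt_cosh _).le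
  have hbd : ∀ (u : ℝ → E) (C : ℝ), 0 ≤ C → (∀ t, ‖u t‖ ≤ C) → ∀ t,
      ‖∫ τ in (0:ℝ)..t, A τ (Real.cosh (k * τ) • u τ)‖ ≤ C / 2 * Real.cosh (k * t) := by
    intro u C hC hu t
    have h1 : ‖∫ τ in (0:ℝ)..t, A τ (Real.cosh (k * τ) • u τ)‖
        ≤ |∫ τ in (0:ℝ)..t, K * C * Real.cosh (k * τ)| := by
      apply intervalIntegral.norm_integral_le_abs_of_norm_le
      · refine Filter.Eventually.of_forall fun τ => ?_
        calc ‖A τ (Real.cosh (k * τ) • u τ)‖ ≤ ‖A τ‖ * ‖Real.cosh (k * τ) • u τ‖ :=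
              (A τ).le_opNorm _
          _ ≤ K * (Real.cosh (k * τ) * C) := by
              rw [norm_smul, Real.norm_of_nonneg (hch τ).le]
              have := hu τ
              have := hb τ
              have := hch τ
              gcongr
          _ = _ := by ring
      · exact Continuous.intervalIntegrable (by fun_prop) _ _
    rw [hIntg, abs_of_nonneg hC] at h1
    have := hsc t
    calc _ ≤ _ := h1
      _ ≤ C * Real.cosh (k * t) / 2 := by gcongr
      _ = _ := by ring
  have hcont1 : ∀ u : ℝ → E, Continuous u →
      Continuous fun τ => A τ (Real.cosh (k * τ) • u τ) := by
    intro u hu; exact hA.clm_apply (hchc.smul hu)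
  have hcont : ∀ u : ℝ → E, Continuous u →
      Continuous fun t => (Real.cosh (k * t))⁻¹ • (x0 + ∫ τ in (0:ℝ)..t, A τ (Real.cosh (k * τ) • u τ)) := by
    intro u hu
    refine (hchc.inv₀ fun t => (hch t).ne').smul (continuous_const.add ?_)
    exact intervalIntegral.continuous_primitive
      (fun a b => (hcont1 u hu).intervalIntegrable a b) 0
  let Φ : BoundedContinuousFunction ℝ E → BoundedContinuousFunction ℝ E := fun u =>
    BoundedContinuousFunction.ofNormedAddCommGroup _ (hcont u u.continuous) (‖x0‖ + ‖u‖ / 2) (by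
      intro t
      rw [norm_smul, norm_inv, Real.norm_of_nonneg (hch t).le]
      have h1 := hbd u ‖u‖ (norm_nonneg _) u.norm_coe_le_norm t
      have h2 := Real.one_le_cosh (k * t)
      rw [inv_mul_le_iff₀ (hch t)]
      refine (norm_add_le _ _).trans ?_
      nlinarith [norm_nonneg x0])
  have hΦ : ContractingWith (1/2) Φ := by
    refine ⟨by norm_num, LipschitzWith.of_dist_le_mul fun u v => ?_⟩
    rw [BoundedContinuousFunction.dist_le (by positivity)]
    intro t
    have h1 := hbd (fun t => u t - v t) (dist u v) dist_nonneg
      (fun t => by rw [← dist_eq_norm]; exact BoundedContinuousFunction.dist_coe_le_dist t) t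
    have h2 : Φ u t - Φ v t = (Real.cosh (k * t))⁻¹ •
        ∫ τ in (0:ℝ)..t, A τ (Real.cosh (k * τ) • (u τ - v τ)) := by
      simp only [Φ, BoundedContinuousFunction.coe_ofNormedAddCommGroup]
      rw [← smul_sub, add_sub_add_left_eq_sub, ← intervalIntegral.integral_sub
        ((hcont1 u u.continuous).intervalIntegrable _ _) ((hcont1 v v.continuous).intervalIntegrable _ _)]
      congr 2
      ext τ
      rw [smul_sub, map_sub]
    rw [dist_eq_norm, h2, norm_smul, norm_inv, Real.norm_of_nonneg (hch t).le,
      inv_mul_le_iff₀ (hch t)]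
    refine h1.trans (le_of_eq ?_)
    push_cast; ring
  obtain ⟨u, hu⟩ : ∃ u, Φ u = u := ⟨_, hΦ.fixedPoint_isFixedPt⟩
  have hu' : ∀ t, Real.cosh (k * t) • u t = x0 + ∫ τ in (0:ℝ)..t, A τ (Real.cosh (k * τ) • u τ) := by
    intro t
    have : Φ u t = u t := by rw [hu]
    rw [← this]
    simp only [Φ, BoundedContinuousFunction.coe_ofNormedAddCommGroup]
    rw [smul_smul, mul_inv_cancel₀ (hch t).ne', one_smul]
  refine ⟨fun t => Real.cosh (k * t) • u t, ?_, fun t => ?_⟩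
  · simpa using hu' 0
  · have h1 := intervalIntegral.integral_hasDerivAt_right
      ((hcont1 u u.continuous).intervalIntegrable 0 t)
      ((hcont1 u u.continuous).stronglyMeasurableAtFilter _ _) (hcont1 u u.continuous).continuousAt
    have h2 := h1.const_add x0
    refine h2.congr_of_eventuallyEq (Filter.Eventually.of_forall fun t => ?_)
    exact hu' t

/-- Solutions of the homogeneous equation together with their derivative. -/
structure IsSol (q y y' : ℝ → ℝ) : Prop where
  d0 : ∀ x, HasDerivAt y (y' x) x
  d1 : ∀ x, HasDerivAt y' (-(q x * y x)) x

lemma sol_exists (q : ℝ → ℝ) (hq : Continuous q) (Q : ℝ) (hQ : ∀ x, |q x| ≤ Q) (a b : ℝ) :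
    ∃ y y' : ℝ → ℝ, y 0 = a ∧ y' 0 = b ∧ IsSol q y y' := by
  let A : ℝ → (ℝ × ℝ) →L[ℝ] (ℝ × ℝ) := fun t =>
    (ContinuousLinearMap.snd ℝ ℝ ℝ).prod (-(q t) • ContinuousLinearMap.fst ℝ ℝ ℝ)
  have hQ0 : 0 ≤ Q := (abs_nonneg _).trans (hQ 0)
  have hA : Continuous A := by
    have : A = fun t => (ContinuousLinearMap.inl ℝ ℝ ℝ).comp (ContinuousLinearMap.snd ℝ ℝ ℝ) +
        (-(q t)) • (ContinuousLinearMap.inr ℝ ℝ ℝ).comp (ContinuousLinearMap.fst ℝ ℝ ℝ) := by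
      funext t
      ext <;> simp [A]
    rw [this]
    fun_prop
  obtain ⟨Y, h0, hY⟩ := lin_ode_exists A hA (Q + 1) (by positivity) (by
    intro t
    refine ContinuousLinearMap.opNorm_le_bound _ (by positivity) fun v => ?_
    have h1 : ‖v.1‖ ≤ ‖v‖ := norm_fst_le v
    have h2 : ‖v.2‖ ≤ ‖v‖ := norm_snd_le v
    simp only [A, ContinuousLinearMap.prod_apply, Prod.norm_def]
    refine max_le ?_ ?_
    · simp only [ContinuousLinearMap.coe_snd']
      rw [← Prod.norm_def]
      nlinarith [norm_nonneg v]
    · rw [← Prod.norm_def]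
      simp only [smul_apply, ContinuousLinearMap.coe_fst', neg_smul, norm_neg, norm_smul]
      have := hQ t
      calc ‖q t‖ * ‖v.1‖ ≤ Q * ‖v‖ := by gcongr; exact this
        _ ≤ _ := by nlinarith [norm_nonneg v]) (a, b)
  refine ⟨fun t => (Y t).1, fun t => (Y t).2, by simp [h0], by simp [h0], ?_, ?_⟩
  · intro x
    have := (hasFDerivAt_fst (𝕜 := ℝ) (E := ℝ) (F := ℝ) (p := Y x)).comp_hasDerivAt x (hY x)
    exact this.congr_deriv (by simp [A])
  · intro x
    have := (hasFDerivAt_snd (𝕜 := ℝ) (E := ℝ) (F := ℝ) (p := Y x)).comp_hasDerivAt x (hY x)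
    exact this.congr_deriv (by simp [A])

/-- Wronskian is constant. -/
lemma wronskian_const {q y y' w w' : ℝ → ℝ} (h : IsSol q y y') (k : IsSol q w w') (a b : ℝ) :
    y a * w' a - y' a * w a = y b * w' b - y' b * w b := by
  refine is_const_of_deriv_eq_zero (f := fun x => y x * w' x - y' x * w x) ?_ ?_ a b
  · intro x
    exact (((h.d0 x).mul (k.d1 x)).sub ((h.d1 x).mul (k.d0 x))).differentiableAt
  · intro x
    exact ((((h.d0 x).mul (k.d1 x)).sub ((h.d1 x).mul (k.d0 x))).congr_deriv (by ring)).deriv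

lemma IsSol.lin {q y y' w w' : ℝ → ℝ} (h : IsSol q y y') (k : IsSol q w w') (a b : ℝ) :
    IsSol q (fun x => a * y x + b * w x) (fun x => a * y' x + b * w' x) := by
  refine ⟨fun x => ((h.d0 x).const_mul a).add ((k.d0 x).const_mul b), fun x => ?_⟩
  exact (((h.d1 x).const_mul a).add ((k.d1 x).const_mul b)).congr_deriv (by ring)

/-- Fundamental system. -/
structure Fund (q C C' S S' : ℝ → ℝ) : Prop where
  hC : IsSol q C C'
  hS : IsSol q S S'
  c0 : C 0 = 1
  c0' : C' 0 = 0
  s0 : S 0 = 0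
  s0' : S' 0 = 1

lemma fund_exists (q : ℝ → ℝ) (hq : Continuous q) (Q : ℝ) (hQ : ∀ x, |q x| ≤ Q) :
    ∃ C C' S S' : ℝ → ℝ, Fund q C C' S S' := by
  obtain ⟨C, C', a, b, c⟩ := sol_exists q hq Q hQ 1 0
  obtain ⟨S, S', d, e, f⟩ := sol_exists q hq Q hQ 0 1
  exact ⟨C, C', S, S', c, f, a, b, d, e⟩

lemma Fund.wr {q C C' S S' : ℝ → ℝ} (h : Fund q C C' S S') (x : ℝ) :
    C x * S' x - C' x * S x = 1 := by
  rw [wronskian_const h.hC h.hS x 0, h.c0, h.c0', h.s0, h.s0']; ring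

lemma Fund.repr {q C C' S S' y y' : ℝ → ℝ} (h : Fund q C C' S S') (k : IsSol q y y') (x : ℝ) :
    y x = y 0 * C x + y' 0 * S x ∧ y' x = y 0 * C' x + y' 0 * S' x := by
  have h1 := wronskian_const h.hC k x 0
  have h2 := wronskian_const k h.hS x 0
  rw [h.c0, h.c0'] at h1
  rw [h.s0, h.s0'] at h2
  have h3 := h.wr x
  constructor
  · linear_combination (-y x) * h3 + C x * h2 + S x * h1
  · linear_combination (-y' x) * h3 + C' x * h2 + S' x * h1


/-- Prufer angle density. -/
def pruf (q y y' : ℝ → ℝ) (x : ℝ) : ℝ := (y' x ^ 2 + q x * y x ^ 2) / (y x ^ 2 + y' x ^ 2)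

lemma IsSol.cont {q y y' : ℝ → ℝ} (h : IsSol q y y') : Continuous y :=
  continuous_iff_continuousAt.2 fun x => (h.d0 x).continuousAt
lemma IsSol.cont' {q y y' : ℝ → ℝ} (h : IsSol q y y') : Continuous y' :=
  continuous_iff_continuousAt.2 fun x => (h.d1 x).continuousAt

lemma prufer {q y y' : ℝ → ℝ} (hq : Continuous q) (h : IsSol q y y') (y0 : y 0 = 0) (y0' : y' 0 = 1)
    (hN : ∀ x, 0 < y x ^ 2 + y' x ^ 2) (Φ : ℝ → ℝ)
    (hΦ : ∀ x, Φ x = ∫ t in (0:ℝ)..x, pruf q y y' t) :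
    (∀ x, ∃ c, 0 < c ∧ y x = c * Real.sin (Φ x) ∧ y' x = c * Real.cos (Φ x)) ∧
    (∀ x, HasDerivAt Φ (Real.cos (Φ x) ^ 2 + q x * Real.sin (Φ x) ^ 2) x) := by
  have hy := h.cont
  have hy' := h.cont'
  have hG : Continuous (pruf q y y') := by
    unfold pruf
    exact Continuous.div (by fun_prop) (by fun_prop) fun x => (hN x).ne'
  have hΦd : ∀ x, HasDerivAt Φ (pruf q y y' x) x := by
    intro x
    have : Φ = fun x => ∫ t in (0:ℝ)..x, pruf q y y' t := funext hΦ
    rw [this]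
    exact intervalIntegral.integral_hasDerivAt_right (hG.intervalIntegrable 0 x)
      (hG.stronglyMeasurableAtFilter _ _) hG.continuousAt
  have hΦ0 : Φ 0 = 0 := by simp [hΦ]
  have ha : ∀ x, y x * Real.cos (Φ x) - y' x * Real.sin (Φ x) = 0 := by
    have hconst : ∀ x, (y x * Real.cos (Φ x) - y' x * Real.sin (Φ x)) ^ 2 / (y x ^ 2 + y' x ^ 2) = 0 := by
      intro x
      have : ∀ u v : ℝ, (fun x => (y x * Real.cos (Φ x) - y' x * Real.sin (Φ x)) ^ 2 / (y x ^ 2 + y' x ^ 2)) u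
          = (fun x => (y x * Real.cos (Φ x) - y' x * Real.sin (Φ x)) ^ 2 / (y x ^ 2 + y' x ^ 2)) v := by
        have hd : ∀ x, HasDerivAt (fun x => (y x * Real.cos (Φ x) - y' x * Real.sin (Φ x)) ^ 2
            / (y x ^ 2 + y' x ^ 2)) 0 x := by
          intro x
          have h1 := (((h.d0 x).mul (hΦd x).cos).sub ((h.d1 x).mul (hΦd x).sin)).pow 2
          have h2 := ((h.d0 x).pow 2).add ((h.d1 x).pow 2)
          have h3 := h1.div h2 (hN x).ne'
          refine h3.congr_deriv ?_
          have := (hN x).ne'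
          simp only [Pi.pow_apply, Pi.sub_apply, Pi.mul_apply, Pi.add_apply, pruf]
          field_simp
          ring
        exact is_const_of_deriv_eq_zero (fun x => (hd x).differentiableAt) (fun x => (hd x).deriv)
      have := this x 0
      simp only [hΦ0, y0] at this
      simpa using this
    intro x
    have := hconst x
    rw [div_eq_zero_iff] at this
    rcases this with h1 | h1
    · exact pow_eq_zero_iff (two_ne_zero) |>.1 h1
    · exact absurd h1 (hN x).ne'
  have hΦc : Continuous Φ := continuous_iff_continuousAt.2 fun x => (hΦd x).continuousAt
  have hmain : ∀ x, ∃ c, 0 < c ∧ y x = c * Real.sin (Φ x) ∧ y' x = c * Real.cos (Φ x) := by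
    set c : ℝ → ℝ := fun x => y x * Real.sin (Φ x) + y' x * Real.cos (Φ x) with hc
    have hcc : Continuous c := by fun_prop
    have hs : ∀ x, c x ^ 2 = y x ^ 2 + y' x ^ 2 := by
      intro x
      have h1 := Real.sin_sq_add_cos_sq (Φ x)
      simp only [hc]
      linear_combination (y x ^2 + y' x ^2) * h1
        - (y x * Real.cos (Φ x) - y' x * Real.sin (Φ x)) * ha x
    have hne : ∀ x, c x ≠ 0 := by
      intro x hx
      have := hs x
      have := hN x
      rw [hx] at *
      nlinarith
    intro x
    refine ⟨c x, ?_, ?_, ?_⟩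
    · by_contra hneg
      push Not at hneg
      obtain ⟨w, hw⟩ := mem_range_of_exists_le_of_exists_ge hcc ⟨x, hneg⟩
        ⟨0, show (0:ℝ) ≤ c 0 by simp [hc, hΦ0, y0, y0']⟩
      exact hne w hw
    · have h1 := Real.sin_sq_add_cos_sq (Φ x)
      simp only [hc]
      linear_combination (-(y x)) * h1 + Real.cos (Φ x) * ha x
    · have h1 := Real.sin_sq_add_cos_sq (Φ x)
      simp only [hc]
      linear_combination (-(y' x)) * h1 - Real.sin (Φ x) * ha x
  refine ⟨hmain, fun x => (hΦd x).congr_deriv ?_⟩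
  obtain ⟨c, hc, h1, h2⟩ := hmain x
  have h3 := Real.sin_sq_add_cos_sq (Φ x)
  have := hN x
  unfold pruf
  rw [div_eq_iff this.ne', h1, h2]
  linear_combination (-(c^2 * (Real.cos (Φ x) ^ 2 + q x * Real.sin (Φ x) ^ 2))) * h3

/-- Continuous dependence. -/
lemma cont_dep {B : ℝ → ℝ} {Bm : ℝ} (hBm : ∀ x, |B x| ≤ Bm)
    {y y' : ℝ → ℝ → ℝ} (h : ∀ ν, IsSol (fun x => 1 + ν * B x) (y ν) (y' ν)) (a b : ℝ)
    (h0 : ∀ ν, y ν 0 = a) (h0' : ∀ ν, y' ν 0 = b) (L : ℝ) (hL : 0 ≤ L) :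
    Continuous (fun p : ℝ × ℝ => (y p.1 (max 0 (min p.2 L)), y' p.1 (max 0 (min p.2 L)))) := by
  have hBm0 : 0 ≤ Bm := (abs_nonneg _).trans (hBm 0)
  have key : ∀ ν₀ : ℝ, ∃ D, ∀ ν, |ν - ν₀| ≤ 1 → ∀ t ∈ Set.Icc 0 L,
      ‖((y ν t, y' ν t) : ℝ × ℝ) - (y ν₀ t, y' ν₀ t)‖ ≤ D * |ν - ν₀| := by
    intro ν₀
    obtain ⟨Y, hY⟩ := isCompact_Icc (a := (0:ℝ)) (b := L) |>.exists_bound_of_continuousOn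
      (h ν₀).cont.continuousOn
    set K : ℝ := 1 + 1 + (|ν₀| + 1) * Bm with hK
    have hKpos : 0 < K := by positivity
    refine ⟨Bm * Y / K * (Real.exp (K * L)), fun ν hν t ht => ?_⟩
    have hY0 : 0 ≤ Y := (norm_nonneg _).trans (hY t ht)
    have hν' : |ν| ≤ |ν₀| + 1 := by
      have := abs_sub_abs_le_abs_sub ν ν₀
      linarith
    have hd : ∀ x, HasDerivAt (fun t => ((y ν t, y' ν t) : ℝ × ℝ) - (y ν₀ t, y' ν₀ t))
        ((y' ν x, -((1 + ν * B x) * y ν x)) - (y' ν₀ x, -((1 + ν₀ * B x) * y ν₀ x))) x := by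
      intro x
      exact ((((h ν).d0 x).prodMk ((h ν).d1 x)).sub (((h ν₀).d0 x).prodMk ((h ν₀).d1 x)))
    have := norm_le_gronwallBound_of_norm_deriv_right_le (δ := 0) (K := K) (ε := |ν - ν₀| * Bm * Y)
      (a := 0) (b := L)
      (f := fun t => ((y ν t, y' ν t) : ℝ × ℝ) - (y ν₀ t, y' ν₀ t))
      (f' := fun x => ((y' ν x, -((1 + ν * B x) * y ν x)) : ℝ × ℝ) - (y' ν₀ x, -((1 + ν₀ * B x) * y ν₀ x)))
      (fun x _ => (hd x).continuousAt.continuousWithinAt)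
      (fun x _ => (hd x).hasDerivWithinAt) (by simp [h0, h0']) (by
        intro x hx
        set f : ℝ × ℝ := ((y ν x, y' ν x) : ℝ × ℝ) - (y ν₀ x, y' ν₀ x) with hf
        have h1 : |y ν x - y ν₀ x| ≤ ‖f‖ := norm_fst_le f
        have h2 : |y' ν x - y' ν₀ x| ≤ ‖f‖ := norm_snd_le f
        have hf0 := norm_nonneg f
        have h3 : |y ν₀ x| ≤ Y := hY x ⟨hx.1, hx.2.le⟩
        have hrest : 0 ≤ |ν - ν₀| * Bm * Y := by positivity
        rw [Prod.norm_def]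
        refine max_le ?_ ?_
        · show |y' ν x - y' ν₀ x| ≤ _
          have : 0 ≤ (|ν₀| + 1) * Bm * ‖f‖ := by positivity
          rw [hK]
          nlinarith
        · show |-((1 + ν * B x) * y ν x) - -((1 + ν₀ * B x) * y ν₀ x)| ≤ _
          have e : -((1 + ν * B x) * y ν x) - -((1 + ν₀ * B x) * y ν₀ x)
            = -((y ν x - y ν₀ x)) - (ν * B x * (y ν x - y ν₀ x)) - (ν - ν₀) * B x * y ν₀ x := by ring
          rw [e]
          have t1 : |ν * B x * (y ν x - y ν₀ x)| ≤ (|ν₀| + 1) * Bm * ‖f‖ := by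
            rw [abs_mul, abs_mul]
            have := hBm x
            gcongr
          have t2 : |(ν - ν₀) * B x * y ν₀ x| ≤ |ν - ν₀| * Bm * Y := by
            rw [abs_mul, abs_mul]
            have := hBm x
            gcongr
          have t3 := abs_sub (-((y ν x - y ν₀ x)) - (ν * B x * (y ν x - y ν₀ x))) ((ν - ν₀) * B x * y ν₀ x)
          have t4 := abs_sub (-((y ν x - y ν₀ x))) (ν * B x * (y ν x - y ν₀ x))
          rw [abs_neg] at t4
          rw [hK]
          nlinarith) t ht
    refine this.trans ?_
    rw [gronwallBound_of_K_ne_0 hKpos.ne']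
    simp only [zero_mul, zero_add, sub_zero]
    have e1 : Real.exp (K * t) - 1 ≤ Real.exp (K * L) := by
      have : Real.exp (K * t) ≤ Real.exp (K * L) :=
        Real.exp_le_exp.2 (mul_le_mul_of_nonneg_left ht.2 hKpos.le)
      linarith
    calc |ν - ν₀| * Bm * Y / K * (Real.exp (K * t) - 1)
        ≤ |ν - ν₀| * Bm * Y / K * Real.exp (K * L) := by gcongr
      _ = _ := by ring
  rw [continuous_iff_continuousAt]
  rintro ⟨ν₀, t₀⟩
  obtain ⟨D, hD⟩ := key ν₀
  have hcl : ∀ t : ℝ, max 0 (min t L) ∈ Set.Icc 0 L := fun t =>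
    ⟨le_max_left _ _, max_le hL (min_le_right _ _)⟩
  have hcont : Continuous fun p : ℝ × ℝ => ((y ν₀ (max 0 (min p.2 L)), y' ν₀ (max 0 (min p.2 L))) : ℝ × ℝ) := by
    have := (h ν₀).cont
    have := (h ν₀).cont'
    fun_prop
  have hdiff : Filter.Tendsto (fun p : ℝ × ℝ => ((y p.1 (max 0 (min p.2 L)), y' p.1 (max 0 (min p.2 L))) : ℝ × ℝ)
     - (y ν₀ (max 0 (min p.2 L)), y' ν₀ (max 0 (min p.2 L)))) (nhds (ν₀, t₀)) (nhds 0) := by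
    apply squeeze_zero_norm' (a := fun p : ℝ × ℝ => D * |p.1 - ν₀|)
    · have : ∀ᶠ p : ℝ × ℝ in nhds (ν₀, t₀), |p.1 - ν₀| < 1 := by
        have hc : Continuous fun p : ℝ × ℝ => |p.1 - ν₀| := by fun_prop
        exact hc.continuousAt.eventually_lt continuousAt_const (by simp)
      filter_upwards [this] with p hp
      exact hD p.1 hp.le _ (hcl _)
    · have hc : Continuous fun p : ℝ × ℝ => D * |p.1 - ν₀| := by fun_prop
      have := hc.tendsto (ν₀, t₀)
      simpa using this
  have := hdiff.add (hcont.tendsto (ν₀, t₀))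
  simp only [sub_add_cancel, zero_add] at this
  exact this


lemma periodic_bound {B : ℝ → ℝ} (hB : Continuous B) (hper : ∀ x, B (x + 2 * Real.pi) = B x) :
    ∃ Bm, ∀ x, |B x| ≤ Bm := by
  obtain ⟨M, hM⟩ := isCompact_Icc (a := (0:ℝ)) (b := 2 * Real.pi) |>.exists_bound_of_continuousOn
      hB.continuousOn
  refine ⟨M, fun x => ?_⟩
  have hp : Function.Periodic B (2 * Real.pi) := hper
  obtain ⟨y, hy, hxy⟩ := hp.exists_mem_Ico₀ Real.two_pi_pos x
  rw [hxy]
  exact hM y ⟨hy.1, hy.2.le⟩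

lemma sol_periodic {q y y' : ℝ → ℝ} (hq : Continuous q) (hper : ∀ x, q (x + 2 * Real.pi) = q x)
    (h : IsSol q y y') (h0 : y (2 * Real.pi) = y 0) (h0' : y' (2 * Real.pi) = y' 0) :
    ∀ x, y (x + 2 * Real.pi) = y x ∧ y' (x + 2 * Real.pi) = y' x := by
  obtain ⟨Q, hQ⟩ := periodic_bound hq hper
  obtain ⟨C, C', S, S', hF⟩ := fund_exists q hq Q hQ
  have hs : IsSol q (fun x => y (x + 2 * Real.pi)) (fun x => y' (x + 2 * Real.pi)) := by
    refine ⟨fun x => (h.d0 _).comp_add_const x _, fun x => ?_⟩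
    refine ((h.d1 _).comp_add_const x _).congr_deriv ?_
    rw [hper]
  intro x
  have h1 := hF.repr hs x
  have h2 := hF.repr h x
  simp only [zero_add, h0, h0'] at h1
  rw [h1.1, h1.2, h2.1, h2.2]
  exact ⟨rfl, rfl⟩

lemma kern_tendsto (M δ : ℝ) (hδ : 0 < δ) :
    Filter.Tendsto (fun n : ℕ => ∫ α in (0:ℝ)..M,
      1 / (Real.cos α ^ 2 + (1 + (n:ℝ) * δ) * Real.sin α ^ 2)) Filter.atTop (nhds 0) := by
  have h0 : (0:ℝ) = ∫ α in (0:ℝ)..M, (0:ℝ) := by simp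
  have hden : ∀ (n : ℕ) (α : ℝ), Real.cos α ^ 2 + (1 + (n:ℝ) * δ) * Real.sin α ^ 2
      = 1 + (n:ℝ) * (δ * Real.sin α ^ 2) := by
    intro n α
    linear_combination Real.sin_sq_add_cos_sq α
  have hge : ∀ (n : ℕ) (α : ℝ), 1 ≤ Real.cos α ^ 2 + (1 + (n:ℝ) * δ) * Real.sin α ^ 2 := by
    intro n α
    rw [hden]
    have : 0 ≤ (n:ℝ) * (δ * Real.sin α ^ 2) := by positivity
    linarith
  suffices hh : Filter.Tendsto (fun n : ℕ => ∫ α in (0:ℝ)..M,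
      1 / (Real.cos α ^ 2 + (1 + (n:ℝ) * δ) * Real.sin α ^ 2)) Filter.atTop
      (nhds (∫ α in (0:ℝ)..M, (0:ℝ))) by rwa [← h0] at hh
  apply intervalIntegral.tendsto_integral_filter_of_dominated_convergence (fun _ => (1:ℝ))
  · refine Filter.Eventually.of_forall fun n => ?_
    refine Continuous.aestronglyMeasurable ?_
    exact Continuous.div continuous_const (by fun_prop) fun α => (by linarith [hge n α] : _ < _).ne'
  · refine Filter.Eventually.of_forall fun n => Filter.Eventually.of_forall fun α _ => ?_
    have := hge n α
    rw [Real.norm_of_nonneg (by positivity), div_le_one (by linarith)]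
    exact this
  · simp
  · have hae : ∀ᵐ α : ℝ, Real.sin α ≠ 0 := by
      have hc : Set.Countable {α : ℝ | Real.sin α = 0} := by
        have : {α : ℝ | Real.sin α = 0} = Set.range (fun n : ℤ => (n:ℝ) * Real.pi) := by
          ext α
          simp only [Set.mem_ofPred_eq, Set.mem_range]
          exact Real.sin_eq_zero_iff
        rw [this]
        exact Set.countable_range _
      exact (hc.ae_notMem MeasureTheory.volume)
    filter_upwards [hae] with α hα _
    have hpos : 0 < δ * Real.sin α ^ 2 := by positivity
    have : Filter.Tendsto (fun n : ℕ => 1 + (n:ℝ) * (δ * Real.sin α ^ 2)) Filter.atTop Filter.atTop :=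
      Filter.tendsto_atTop_add_const_left _ _
        ((tendsto_natCast_atTop_atTop).atTop_mul_const hpos)
    simp only [hden, one_div]
    exact this.inv_tendsto_atTop

lemma prufer_growth {B : ℝ → ℝ} (hB : Continuous B) (hB0 : ∀ x, 0 ≤ B x) {x0 : ℝ}
    (hx0 : x0 ∈ Set.Ioo 0 (2 * Real.pi)) (hBx : 0 < B x0)
    {S S' : ℝ → ℝ → ℝ} (h : ∀ ν, IsSol (fun x => 1 + ν * B x) (S ν) (S' ν))
    (h0 : ∀ ν, S ν 0 = 0) (h0' : ∀ ν, S' ν 0 = 1)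
    (hN : ∀ ν x, 0 < S ν x ^ 2 + S' ν x ^ 2) (N M : ℝ) :
    ∃ ν, N ≤ ν ∧ M < ∫ t in (0:ℝ)..(2 * Real.pi), pruf (fun x => 1 + ν * B x) (S ν) (S' ν) t := by
  by_contra hcon
  push Not at hcon
  set δ := B x0 / 2 with hδ
  have hδpos : 0 < δ := by positivity
  have hev : ∀ᶠ x in nhds x0, δ < B x ∧ x ∈ Set.Ioo 0 (2 * Real.pi) :=
    (continuousAt_const.eventually_lt hB.continuousAt (by rw [hδ]; linarith)).and
      (Ioo_mem_nhds hx0.1 hx0.2)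
  obtain ⟨ε, hε, hball⟩ := Metric.eventually_nhds_iff.1 hev
  set c := x0 + ε / 2 with hc
  have hin : ∀ x ∈ Set.Icc x0 c, δ < B x ∧ x ∈ Set.Ioo 0 (2 * Real.pi) := by
    intro x hx
    apply hball
    rw [Real.dist_eq, abs_of_nonneg (by linarith [hx.1])]
    linarith [hx.2]
  have hlow : ∀ n : ℕ, N ≤ n → ε / 2 ≤ ∫ α in (0:ℝ)..M,
      1 / (Real.cos α ^ 2 + (1 + (n:ℝ) * δ) * Real.sin α ^ 2) := by
    intro n hn
    set q : ℝ → ℝ := fun x => 1 + (n:ℝ) * B x with hq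
    have hqc : Continuous q := by fun_prop
    have hq1 : ∀ x, 1 ≤ q x := by
      intro x
      have := mul_nonneg (Nat.cast_nonneg (α := ℝ) n) (hB0 x)
      simp only [hq]; linarith
    set Φ : ℝ → ℝ := fun x => ∫ t in (0:ℝ)..x, pruf q (S n) (S' n) t with hΦ
    obtain ⟨-, hΦd⟩ := prufer hqc (h n) (h0 n) (h0' n) (hN n) Φ (fun x => rfl)
    have hmono : Monotone Φ := by
      apply monotone_of_deriv_nonneg (fun x => (hΦd x).differentiableAt)
      intro x
      rw [(hΦd x).deriv]
      have := hq1 x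
      positivity
    have hΦ0 : Φ 0 = 0 := by simp [hΦ]
    have hΦM : Φ (2 * Real.pi) ≤ M := hcon n hn
    set k : ℝ → ℝ := fun α => 1 / (Real.cos α ^ 2 + (1 + (n:ℝ) * δ) * Real.sin α ^ 2) with hk
    have hden : ∀ α : ℝ, 1 ≤ Real.cos α ^ 2 + (1 + (n:ℝ) * δ) * Real.sin α ^ 2 := by
      intro α
      have : 0 ≤ (n:ℝ) * (δ * Real.sin α ^ 2) := by positivity
      nlinarith [Real.sin_sq_add_cos_sq α]
    have hkc : Continuous k :=
      Continuous.div continuous_const (by fun_prop) fun α => (by linarith [hden α] : _ < _).ne'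
    have hk0 : ∀ α, 0 ≤ k α := fun α => by
      have := hden α
      simp only [hk]; positivity
    have hFd : ∀ φ : ℝ, HasDerivAt (fun φ => ∫ α in (0:ℝ)..φ, k α) (k φ) φ := fun φ =>
      intervalIntegral.integral_hasDerivAt_right (hkc.intervalIntegrable 0 φ)
        (hkc.stronglyMeasurableAtFilter _ _) hkc.continuousAt
    have hcomp : ∀ x, HasDerivAt (fun x => ∫ α in (0:ℝ)..(Φ x), k α)
        (k (Φ x) * (Real.cos (Φ x) ^ 2 + q x * Real.sin (Φ x) ^ 2)) x := fun x =>
      (hFd (Φ x)).comp x (hΦd x)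
    have hxc : x0 ≤ c := by rw [hc]; linarith
    have hstep : (1:ℝ) * (c - x0) ≤ (∫ α in (0:ℝ)..(Φ c), k α) - ∫ α in (0:ℝ)..(Φ x0), k α := by
      apply (convex_Icc x0 c).mul_sub_le_image_sub_of_le_deriv
        (f := fun x => ∫ α in (0:ℝ)..(Φ x), k α)
      · exact fun x _ => (hcomp x).continuousAt.continuousWithinAt
      · exact fun x _ => (hcomp x).differentiableAt.differentiableWithinAt
      · intro x hx
        rw [interior_Icc] at hx
        rw [(hcomp x).deriv]
        have h1 := (hin x ⟨hx.1.le, hx.2.le⟩).1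
        have h2 := hden (Φ x)
        simp only [hk]
        rw [one_div, ← div_eq_inv_mul, le_div_iff₀ (by linarith), one_mul]
        have : (n:ℝ) * δ ≤ n * B x := by gcongr
        simp only [hq]
        gcongr
      · exact Set.left_mem_Icc.2 hxc
      · exact Set.right_mem_Icc.2 hxc
      · exact hxc
    have hFm : ∀ u v : ℝ, u ≤ v → (∫ α in (0:ℝ)..u, k α) ≤ ∫ α in (0:ℝ)..v, k α := by
      intro u v huv
      have : Monotone (fun φ => ∫ α in (0:ℝ)..φ, k α) := by
        apply monotone_of_deriv_nonneg (fun x => (hFd x).differentiableAt)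
        intro x
        rw [(hFd x).deriv]; exact hk0 x
      exact this huv
    have h1 : 0 ≤ ∫ α in (0:ℝ)..(Φ x0), k α := by
      have := hFm 0 (Φ x0) (by rw [← hΦ0]; exact hmono hx0.1.le)
      simpa using this
    have h2 := hFm (Φ c) M ((hmono (hin c ⟨hxc, le_rfl⟩).2.2.le).trans hΦM)
    have : c - x0 = ε / 2 := by rw [hc]; ring
    linarith
  have ht := kern_tendsto M δ hδpos
  have hl : ε / 2 ≤ 0 := by
    apply ge_of_tendsto ht
    filter_upwards [Filter.eventually_ge_atTop ⌈N⌉₊] with n hn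
    exact hlow n ((Nat.le_ceil N).trans (by exact_mod_cast hn))
  linarith

lemma eigen_exists {B : ℝ → ℝ} (hB : Continuous B) (hper : ∀ x, B (x + 2 * Real.pi) = B x)
    (hB0 : ∀ x, 0 ≤ B x) {x0 : ℝ}
    (hx0 : x0 ∈ Set.Ioo 0 (2 * Real.pi)) (hBx : 0 < B x0) (N : ℝ) :
    ∃ ν, N ≤ ν ∧ ∃ g g' : ℝ → ℝ, IsSol (fun x => 1 + ν * B x) g g' ∧
      (∀ x, g (x + 2 * Real.pi) = g x ∧ g' (x + 2 * Real.pi) = g' x) ∧ (∃ x, g x ≠ 0) := by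
  obtain ⟨Bm, hBm⟩ := periodic_bound hB hper
  have hqc : ∀ ν : ℝ, Continuous fun x => 1 + ν * B x := fun ν => by fun_prop
  have hqp : ∀ ν x : ℝ, 1 + ν * B (x + 2 * Real.pi) = 1 + ν * B x := fun ν x => by rw [hper]
  have hex : ∀ ν : ℝ, ∃ C C' S S' : ℝ → ℝ, Fund (fun x => 1 + ν * B x) C C' S S' := by
    intro ν
    obtain ⟨Q, hQ⟩ := periodic_bound (hqc ν) (hqp ν)
    exact fund_exists _ (hqc ν) Q hQ
  choose C C' S S' hF using hex
  have hL := Real.two_pi_pos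
  have hSN : ∀ ν x, 0 < S ν x ^ 2 + S' ν x ^ 2 := by
    intro ν x
    have := (hF ν).wr x
    by_contra hcon
    have h1 : S ν x = 0 := by nlinarith [sq_nonneg (S ν x), sq_nonneg (S' ν x)]
    have h2 : S' ν x = 0 := by nlinarith [sq_nonneg (S ν x), sq_nonneg (S' ν x)]
    rw [h1, h2] at this
    simp at this
  have hSc := cont_dep hBm (fun ν => (hF ν).hS) 0 1 (fun ν => (hF ν).s0) (fun ν => (hF ν).s0') _ hL.le
  have hCc := cont_dep hBm (fun ν => (hF ν).hC) 1 0 (fun ν => (hF ν).c0) (fun ν => (hF ν).c0') _ hL.le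
  set L := 2 * Real.pi with hLdef
  have hcl : max 0 L = L := max_eq_right hL.le
  have hSL' : Continuous fun ν => S' ν L := by
    have := (continuous_snd.comp hSc).comp (Continuous.prodMk_left L)
    simpa [Function.comp_def, hcl] using this
  have hCL : Continuous fun ν => C ν L := by
    have := (continuous_fst.comp hCc).comp (Continuous.prodMk_left L)
    simpa [Function.comp_def, hcl] using this
  set φ : ℝ → ℝ := fun ν => ∫ t in (0:ℝ)..L, pruf (fun x => 1 + ν * B x) (S ν) (S' ν) t with hφ
  have hφc : Continuous φ := by
    have h1 : φ = fun ν => ∫ t in (0:ℝ)..L,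
        pruf (fun x => 1 + ν * B x) (S ν) (S' ν) (max 0 (min t L)) := by
      funext ν
      apply intervalIntegral.integral_congr
      intro t ht
      rw [Set.uIcc_of_le hL.le] at ht
      simp only
      rw [min_eq_left ht.2, max_eq_right ht.1]
    rw [h1]
    apply intervalIntegral.continuous_parametric_intervalIntegral_of_continuous'
    have a1 : Continuous fun p : ℝ × ℝ => S p.1 (max 0 (min p.2 L)) := continuous_fst.comp hSc
    have a2 : Continuous fun p : ℝ × ℝ => S' p.1 (max 0 (min p.2 L)) := continuous_snd.comp hSc
    have a3 : Continuous fun p : ℝ × ℝ => B (max 0 (min p.2 L)) := by fun_prop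
    simp only [Function.uncurry_def, pruf]
    exact Continuous.div ((a2.pow 2).add ((continuous_const.add (continuous_fst.mul a3)).mul (a1.pow 2)))
      ((a1.pow 2).add (a2.pow 2)) fun p => (hSN _ _).ne'
  have hval : ∀ ν, ∃ c, 0 < c ∧ S ν L = c * Real.sin (φ ν) ∧ S' ν L = c * Real.cos (φ ν) := by
    intro ν
    exact (prufer (hqc ν) (hF ν).hS (hF ν).s0 (hF ν).s0' (hSN ν) _ (fun x => rfl)).1 L
  have hatt : ∀ v, φ N ≤ v → ∃ ν, N ≤ ν ∧ φ ν = v := by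
    intro v hv
    obtain ⟨ν1, h1, h2⟩ := prufer_growth hB hB0 hx0 hBx (fun ν => (hF ν).hS) (fun ν => (hF ν).s0)
      (fun ν => (hF ν).s0') hSN N v
    obtain ⟨ν, hν, hν'⟩ := intermediate_value_Icc h1 hφc.continuousOn ⟨hv, h2.le⟩
    exact ⟨ν, hν.1, hν'⟩
  obtain ⟨n, hn⟩ := exists_nat_ge (φ N / L)
  rw [div_le_iff₀ hL] at hn
  obtain ⟨νa, hNa, hva⟩ := hatt (n * L) hn
  obtain ⟨νb, hNb, hvb⟩ := hatt (n * L + Real.pi) (by linarith [Real.pi_pos])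
  have hsa : Real.sin (n * L) = 0 := by
    have := Real.sin_add_nat_mul_two_pi 0 n
    simpa [hLdef] using this
  have hca : Real.cos (n * L) = 1 := by
    have := Real.cos_add_nat_mul_two_pi 0 n
    simpa [hLdef] using this
  set Δ : ℝ → ℝ := fun ν => C ν L + S' ν L with hΔ
  have hΔc : Continuous Δ := hCL.add hSL'
  have hΔa : 2 ≤ Δ νa := by
    obtain ⟨c, hc, h1, h2⟩ := hval νa
    rw [hva, hsa, mul_zero] at h1
    rw [hva, hca, mul_one] at h2
    have hw := (hF νa).wr L
    rw [h1, h2] at hw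
    have : C νa L * c = 1 := by linarith
    simp only [hΔ]
    rw [h2]
    nlinarith [sq_nonneg (C νa L - c), sq_nonneg (C νa L + c - 2), mul_pos hc hc]
  have hΔb : Δ νb ≤ 2 := by
    obtain ⟨c, hc, h1, h2⟩ := hval νb
    rw [hvb, Real.sin_add_pi, hsa] at h1
    rw [hvb, Real.cos_add_pi, hca] at h2
    have hw := (hF νb).wr L
    rw [h1, h2] at hw
    have : C νb L * c = -1 := by linarith
    simp only [hΔ]
    rw [h2]
    have : C νb L < 0 := by nlinarith
    linarith
  obtain ⟨ν, hν, hν2⟩ : ∃ ν ∈ Set.uIcc νa νb, Δ ν = 2 := by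
    have := intermediate_value_uIcc (f := Δ) (a := νa) (b := νb) hΔc.continuousOn
    exact this (Set.mem_uIcc.2 (Or.inr ⟨hΔb, hΔa⟩))
  have hNν : N ≤ ν := (le_min hNa hNb).trans hν.1
  have hw := (hF ν).wr L
  simp only [hΔ] at hν2
  obtain ⟨a, b, hab, e1, e2⟩ : ∃ a b : ℝ, (a ≠ 0 ∨ b ≠ 0) ∧ a * C ν L + b * S ν L = a ∧
      a * C' ν L + b * S' ν L = b := by
    by_cases hs : S ν L = 0
    · by_cases hs' : S' ν L = 1
      · exact ⟨0, 1, Or.inr one_ne_zero, by rw [hs]; ring, by rw [hs']; ring⟩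
      · refine ⟨1 - S' ν L, C' ν L, Or.inl (sub_ne_zero.2 (Ne.symm hs')), ?_, ?_⟩
        · rw [hs] at hw ⊢
          linear_combination hν2 - hw
        · ring
    · refine ⟨S ν L, 1 - C ν L, Or.inl hs, by ring, ?_⟩
      linear_combination hν2 - hw
  refine ⟨ν, hNν, _, _, (hF ν).hC.lin (hF ν).hS a b, ?_, ?_⟩
  · apply sol_periodic (hqc ν) (hqp ν) ((hF ν).hC.lin (hF ν).hS a b)
    · simp only [(hF ν).c0, (hF ν).s0]; rw [← hLdef]; linarith
    · simp only [(hF ν).c0', (hF ν).s0']; rw [← hLdef]; linarith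
  · by_contra hcon
    push Not at hcon
    have h1 := hcon 0
    simp only [(hF ν).c0, (hF ν).s0] at h1
    have ha : a = 0 := by linarith
    have hb : b ≠ 0 := by tauto
    have hd := (((hF ν).hC.lin (hF ν).hS a b).d0 0)
    have hz : (fun x => a * C ν x + b * S ν x) = fun _ => 0 := funext hcon
    rw [hz] at hd
    have := hd.unique (hasDerivAt_const (0:ℝ) (0:ℝ))
    rw [(hF ν).c0', (hF ν).s0'] at this
    apply hb; linarith


lemma linalg_aux {V : Type*} [AddCommGroup V] [Module ℝ V] [FiniteDimensional ℝ V]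
    (A T : V →ₗ[ℝ] V) (H : ∀ v k, A k = 0 → A v + T k = 0 → k = 0) (w : V) :
    ∃ v k, A k = 0 ∧ A v + T k = w := by
  let Φ : (V × LinearMap.ker A) →ₗ[ℝ] V := A.coprod (T.comp (LinearMap.ker A).subtype)
  have hΦ : ∀ v k, Φ (v, k) = A v + T k := fun v k => by simp [Φ]
  have hk : ∀ x ∈ LinearMap.ker Φ, x.2 = 0 ∧ A x.1 = 0 := by
    rintro ⟨v, k⟩ hx
    rw [LinearMap.mem_ker, hΦ] at hx
    have hk0 : (k : V) = 0 := H v k k.2 hx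
    refine ⟨Subtype.ext hk0, ?_⟩
    rw [hk0, map_zero, add_zero] at hx
    exact hx
  let Ψ : LinearMap.ker Φ →ₗ[ℝ] LinearMap.ker A :=
    LinearMap.codRestrict (LinearMap.ker A) ((LinearMap.fst ℝ V (LinearMap.ker A)).comp
      (LinearMap.ker Φ).subtype) (fun x => (hk x x.2).2)
  have hinj : Function.Injective Ψ := by
    rw [← LinearMap.ker_eq_bot, LinearMap.ker_eq_bot']
    rintro ⟨⟨v, k⟩, hx⟩ h0
    have h1 : v = 0 := congrArg Subtype.val h0
    have h2 := (hk _ hx).1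
    simp only at h2
    subst h1; subst h2
    rfl
  have hle := LinearMap.finrank_le_finrank_of_injective hinj
  have hrn := Φ.finrank_range_add_finrank_ker
  rw [Module.finrank_prod] at hrn
  have htop : LinearMap.range Φ = ⊤ := by
    apply Submodule.eq_top_of_finrank_eq
    apply le_antisymm (Submodule.finrank_le _)
    omega
  obtain ⟨⟨v, k⟩, hvk⟩ := LinearMap.range_eq_top.1 htop w
  exact ⟨v, k, k.2, by rw [← hΦ]; exact hvk⟩

/-- Forced equation. -/
structure FSol (q h y y' : ℝ → ℝ) : Prop where
  d0 : ∀ x, HasDerivAt y (y' x) x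
  d1 : ∀ x, HasDerivAt y' (h x - q x * y x) x

lemma FSol.comb {q h y y' k w w' : ℝ → ℝ} (hy : FSol q h y y') (hw : FSol q k w w') (a b : ℝ) :
    FSol q (fun x => a * h x + b * k x) (fun x => a * y x + b * w x)
      (fun x => a * y' x + b * w' x) := by
  refine ⟨fun x => ((hy.d0 x).const_mul a).add ((hw.d0 x).const_mul b), fun x => ?_⟩
  exact (((hy.d1 x).const_mul a).add ((hw.d1 x).const_mul b)).congr_deriv (by ring)

lemma IsSol.fsol {q y y' : ℝ → ℝ} (h : IsSol q y y') : FSol q (fun _ => 0) y y' :=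
  ⟨h.d0, fun x => (h.d1 x).congr_deriv (by ring)⟩

lemma FSol.isSol {q y y' : ℝ → ℝ} (h : FSol q (fun _ => 0) y y') : IsSol q y y' :=
  ⟨h.d0, fun x => (h.d1 x).congr_deriv (by ring)⟩

lemma FSol.congr {q h k y y' : ℝ → ℝ} (hy : FSol q h y y') (hk : ∀ x, h x = k x) : FSol q k y y' :=
  ⟨hy.d0, fun x => (hy.d1 x).congr_deriv (by rw [hk])⟩

lemma FSol.cont {q h y y' : ℝ → ℝ} (hy : FSol q h y y') : Continuous y :=
  continuous_iff_continuousAt.2 fun x => (hy.d0 x).continuousAt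
lemma FSol.cont' {q h y y' : ℝ → ℝ} (hy : FSol q h y y') : Continuous y' :=
  continuous_iff_continuousAt.2 fun x => (hy.d1 x).continuousAt

lemma fsol_periodic {q h y y' : ℝ → ℝ} (hq : Continuous q) (hper : ∀ x, q (x + 2 * Real.pi) = q x)
    (hhper : ∀ x, h (x + 2 * Real.pi) = h x)
    (hy : FSol q h y y') (h0 : y (2 * Real.pi) = y 0) (h0' : y' (2 * Real.pi) = y' 0) :
    ∀ x, y (x + 2 * Real.pi) = y x ∧ y' (x + 2 * Real.pi) = y' x := by
  obtain ⟨Q, hQ⟩ := periodic_bound hq hper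
  obtain ⟨C, C', S, S', hF⟩ := fund_exists q hq Q hQ
  have hs : FSol q h (fun x => y (x + 2 * Real.pi)) (fun x => y' (x + 2 * Real.pi)) := by
    refine ⟨fun x => (hy.d0 _).comp_add_const x _, fun x => ?_⟩
    refine ((hy.d1 _).comp_add_const x _).congr_deriv ?_
    rw [hper, hhper]
  have hd := ((hs.comb hy 1 (-1)).congr (k := fun _ => 0) (fun x => by ring)).isSol
  intro x
  have h1 := hF.repr hd x
  simp only [zero_add, h0, h0'] at h1
  constructor
  · linarith [h1.1]
  · linarith [h1.2]

lemma part_exists {q C C' S S' h : ℝ → ℝ} (hF : Fund q C C' S S') (hh : Continuous h) :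
    ∃ p p' : ℝ → ℝ, FSol q h p p' ∧ p 0 = 0 ∧ p' 0 = 0 := by
  have hi : ∀ {f : ℝ → ℝ}, Continuous f → ∀ x, HasDerivAt (fun x => ∫ t in (0:ℝ)..x, f t) (f x) x :=
    fun {f} hf x => intervalIntegral.integral_hasDerivAt_right (hf.intervalIntegrable 0 x)
        (hf.stronglyMeasurableAtFilter _ _) hf.continuousAt
  have h1 : Continuous fun t => C t * h t := hF.hC.cont.mul hh
  have h2 : Continuous fun t => S t * h t := hF.hS.cont.mul hh
  refine ⟨fun x => S x * (∫ t in (0:ℝ)..x, C t * h t) - C x * ∫ t in (0:ℝ)..x, S t * h t,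
    fun x => S' x * (∫ t in (0:ℝ)..x, C t * h t) - C' x * ∫ t in (0:ℝ)..x, S t * h t, ⟨?_, ?_⟩, ?_, ?_⟩
  · intro x
    refine (((hF.hS.d0 x).mul (hi h1 x)).sub ((hF.hC.d0 x).mul (hi h2 x))).congr_deriv ?_
    ring
  · intro x
    refine (((hF.hS.d1 x).mul (hi h1 x)).sub ((hF.hC.d1 x).mul (hi h2 x))).congr_deriv ?_
    linear_combination h x * hF.wr x
  · simp
  · simp

lemma fredholm {B : ℝ → ℝ} (hB : Continuous B) (hper : ∀ x, B (x + 2 * Real.pi) = B x)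
    (hB0 : ∀ x, 0 ≤ B x) {x0 : ℝ}
    (hx0 : x0 ∈ Set.Ioo 0 (2 * Real.pi)) (hBx : 0 < B x0) (ν κ : ℝ) (hκ : κ ≠ 0)
    {h : ℝ → ℝ} (hh : Continuous h) (hhper : ∀ x, h (x + 2 * Real.pi) = h x) :
    ∃ g0 g0' g1 g1' : ℝ → ℝ, IsSol (fun x => 1 + ν * B x) g0 g0' ∧
      FSol (fun x => 1 + ν * B x) (fun x => h x - κ * B x * g0 x) g1 g1' ∧
      (∀ x, g0 (x + 2 * Real.pi) = g0 x) ∧ (∀ x, g1 (x + 2 * Real.pi) = g1 x) := by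
  set q : ℝ → ℝ := fun x => 1 + ν * B x with hq
  have hqc : Continuous q := by fun_prop
  have hqp : ∀ x : ℝ, q (x + 2 * Real.pi) = q x := fun x => by simp only [hq]; rw [hper]
  obtain ⟨Q, hQ⟩ := periodic_bound hqc hqp
  obtain ⟨C, C', S, S', hF⟩ := fund_exists _ hqc Q hQ
  obtain ⟨p, p', hp, hp0, hp0'⟩ := part_exists hF hh
  obtain ⟨p1, p1', hp1, hp10, hp10'⟩ := part_exists (h := fun x => B x * C x) hF (hB.mul hF.hC.cont)
  obtain ⟨p2, p2', hp2, hp20, hp20'⟩ := part_exists (h := fun x => B x * S x) hF (hB.mul hF.hS.cont)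
  set L := 2 * Real.pi with hL
  have hLpos : 0 < L := Real.two_pi_pos
  let A : (ℝ × ℝ) →ₗ[ℝ] (ℝ × ℝ) :=
    { toFun := fun v => (v.1 * (C L - 1) + v.2 * S L, v.1 * C' L + v.2 * (S' L - 1))
      map_add' := by intro v w; ext <;> simp <;> ring
      map_smul' := by intro c v; ext <;> simp <;> ring }
  let T : (ℝ × ℝ) →ₗ[ℝ] (ℝ × ℝ) :=
    { toFun := fun k => (κ * (k.1 * p1 L + k.2 * p2 L), κ * (k.1 * p1' L + k.2 * p2' L))
      map_add' := by intro v w; ext <;> simp <;> ring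
      map_smul' := by intro c v; ext <;> simp <;> ring }
  have hA : ∀ v, A v = (v.1 * (C L - 1) + v.2 * S L, v.1 * C' L + v.2 * (S' L - 1)) := fun v => rfl
  have hT : ∀ k, T k = (κ * (k.1 * p1 L + k.2 * p2 L), κ * (k.1 * p1' L + k.2 * p2' L)) := fun v => rfl
  have H : ∀ v k, A k = 0 → A v + T k = 0 → k = 0 := by
    rintro ⟨v1, v2⟩ ⟨k1, k2⟩ hk hvk
    rw [hA] at hk hvk
    rw [hT] at hvk
    simp only [Prod.mk_add_mk, Prod.mk_eq_zero] at hk hvk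
    have hg0 := hF.hC.lin hF.hS k1 k2
    have hg1 := (hp1.comb hp2 (κ * k1) (κ * k2)).comb (hF.hC.lin hF.hS v1 v2).fsol 1 1
    set g0 := fun x => k1 * C x + k2 * S x with hg0d
    set g0' := fun x => k1 * C' x + k2 * S' x with hg0d'
    obtain ⟨g1, hg1d⟩ : ∃ g1 : ℝ → ℝ, g1 = fun x => 1 * (κ * k1 * p1 x + κ * k2 * p2 x) + 1 * (v1 * C x + v2 * S x) := ⟨_, rfl⟩
    obtain ⟨g1', hg1d'⟩ : ∃ g1' : ℝ → ℝ, g1' = fun x => 1 * (κ * k1 * p1' x + κ * k2 * p2' x) + 1 * (v1 * C' x + v2 * S' x) := ⟨_, rfl⟩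
    rw [← hg1d, ← hg1d'] at hg1
    have hcont0 := hg0.cont
    have hd : ∀ x ∈ Set.uIcc 0 L, HasDerivAt (fun x => g1' x * g0 x - g1 x * g0' x) (κ * (B x * g0 x ^ 2)) x := by
      intro x _
      refine (((hg1.d1 x).mul (hg0.d0 x)).sub ((hg1.d0 x).mul (hg0.d1 x))).congr_deriv ?_
      simp only [hg0d]
      ring
    have hIntg := intervalIntegral.integral_eq_sub_of_hasDerivAt hd
      (Continuous.intervalIntegrable (by fun_prop) _ _)
    have e0 : g0 L = g0 0 := by
      simp only [hg0d, hF.c0, hF.s0]; linarith [hk.1]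
    have e0' : g0' L = g0' 0 := by
      simp only [hg0d', hF.c0', hF.s0']; linarith [hk.2]
    have e1 : g1 L = g1 0 := by
      simp only [hg1d, hF.c0, hF.s0, hp10, hp20]; linarith [hvk.1]
    have e1' : g1' L = g1' 0 := by
      simp only [hg1d', hF.c0', hF.s0', hp10', hp20']; linarith [hvk.2]
    rw [e0, e0', e1, e1', sub_self, intervalIntegral.integral_const_mul] at hIntg
    have hIntg0 : ∫ x in (0:ℝ)..L, B x * g0 x ^ 2 = 0 := by
      rcases mul_eq_zero.1 hIntg with h | h
      · exact absurd h hκ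
      · exact h
    have hz : ∀ x ∈ Set.Ioo 0 L, B x * g0 x ^ 2 = 0 := by
      intro x hx
      by_contra hne
      have hnn : ∀ x, 0 ≤ B x * g0 x ^ 2 := fun x => mul_nonneg (hB0 x) (sq_nonneg _)
      have := intervalIntegral.integral_pos (a := 0) (b := L) (f := fun x => B x * g0 x ^ 2) hLpos
        (Continuous.continuousOn (by fun_prop)) (fun x _ => hnn x)
        ⟨x, ⟨hx.1.le, hx.2.le⟩, lt_of_le_of_ne (hnn x) (Ne.symm hne)⟩
      linarith
    have hev : ∀ᶠ x in nhds x0, g0 x = 0 := by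
      filter_upwards [continuousAt_const.eventually_lt hB.continuousAt hBx,
        Ioo_mem_nhds hx0.1 hx0.2] with x h1 h2
      rcases mul_eq_zero.1 (hz x h2) with h | h
      · exact absurd h h1.ne'
      · exact pow_eq_zero_iff two_ne_zero |>.1 h
    have z0 : g0 x0 = 0 := hev.self_of_nhds
    have z1 : g0' x0 = 0 := by
      have h1 : HasDerivAt g0 0 x0 := (hasDerivAt_const x0 (0:ℝ)).congr_of_eventuallyEq hev
      exact (hg0.d0 x0).unique h1
    simp only [hg0d] at z0
    simp only [hg0d'] at z1
    have hw := hF.wr x0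
    have r1 : k1 = 0 := by linear_combination (-k1) * hw + S' x0 * z0 - S x0 * z1
    have r2 : k2 = 0 := by linear_combination (-k2) * hw + C x0 * z1 - C' x0 * z0
    simp [r1, r2]
  obtain ⟨⟨v1, v2⟩, ⟨k1, k2⟩, hk, hvk⟩ := linalg_aux A T H (-(p L), -(p' L))
  rw [hA] at hk hvk
  rw [hT] at hvk
  simp only [Prod.mk_add_mk, Prod.mk_eq_zero, Prod.mk.injEq] at hk hvk
  have hg0 := hF.hC.lin hF.hS (-k1) (-k2)
  have hg1 := (hp.comb (hp1.comb hp2 k1 k2) 1 κ).comb (hF.hC.lin hF.hS v1 v2).fsol 1 1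
  have hper0 := sol_periodic hqc hqp hg0 (by simp only [hF.c0, hF.s0]; linarith [hk.1])
    (by simp only [hF.c0', hF.s0']; linarith [hk.2])
  have hg1c := hg1.congr (k := fun x => h x - κ * B x * (-k1 * C x + -k2 * S x)) (fun x => by ring)
  refine ⟨_, _, _, _, hg0, hg1c, fun x => (hper0 x).1, ?_⟩
  have := fsol_periodic hqc hqp (fun x => by
      have h1 := (hper0 x).1
      rw [← hL] at h1
      rw [hhper, hper, h1]) hg1c
    (by simp only [← hL, hF.c0, hF.s0, hp0, hp10, hp20]; linarith [hvk.1])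
    (by simp only [← hL, hF.c0', hF.s0', hp0', hp10', hp20']; linarith [hvk.2])
  exact fun x => (this x).1


lemma fsol_smooth {q h y y' : ℝ → ℝ} (hq : ContDiff ℝ (⊤ : ℕ∞) q) (hh : ContDiff ℝ (⊤ : ℕ∞) h)
    (hy : FSol q h y y') : ContDiff ℝ (⊤ : ℕ∞) y := by
  have key : ∀ n : ℕ, ContDiff ℝ n y ∧ ContDiff ℝ n y' := by
    intro n
    induction n with
    | zero => exact ⟨contDiff_zero.2 hy.cont, contDiff_zero.2 hy.cont'⟩
    | succ n ih =>
      have e0 : deriv y = y' := funext fun x => (hy.d0 x).deriv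
      have e1 : deriv y' = fun x => h x - q x * y x := funext fun x => (hy.d1 x).deriv
      have hqn : ContDiff ℝ n q := hq.of_le (by exact_mod_cast le_top)
      have hhn : ContDiff ℝ n h := hh.of_le (by exact_mod_cast le_top)
      push_cast
      constructor
      · rw [contDiff_succ_iff_deriv]
        refine ⟨fun x => (hy.d0 x).differentiableAt, by simp, ?_⟩
        rw [e0]; exact ih.2
      · rw [contDiff_succ_iff_deriv]
        refine ⟨fun x => (hy.d1 x).differentiableAt, by simp, ?_⟩
        rw [e1]; exact hhn.sub (hqn.mul ih.1)
  exact contDiff_infty.2 fun n => (key n).1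

/-- Smooth periodic functions. -/
structure SP (F : ℝ → ℝ) : Prop where
  sm : ContDiff ℝ (⊤ : ℕ∞) F
  per : ∀ x, F (x + 2 * Real.pi) = F x

lemma SP.hd {F : ℝ → ℝ} (h : SP F) (x : ℝ) : HasDerivAt F (deriv F x) x :=
  (h.sm.differentiable (by simp) x).hasDerivAt

lemma SP.deriv {F : ℝ → ℝ} (h : SP F) : SP (deriv F) := by
  refine ⟨?_, fun x => ?_⟩
  · have := h.sm
    exact ((contDiff_infty_iff_deriv).1 this).2
  · rw [← deriv_comp_add_const F (2 * Real.pi) x]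
    congr 1
    exact funext h.per

lemma SP.add {F G : ℝ → ℝ} (h : SP F) (k : SP G) : SP (fun x => F x + G x) :=
  ⟨h.sm.add k.sm, fun x => by rw [h.per, k.per]⟩
lemma SP.sub {F G : ℝ → ℝ} (h : SP F) (k : SP G) : SP (fun x => F x - G x) :=
  ⟨h.sm.sub k.sm, fun x => by rw [h.per, k.per]⟩
lemma SP.mul {F G : ℝ → ℝ} (h : SP F) (k : SP G) : SP (fun x => F x * G x) :=
  ⟨h.sm.mul k.sm, fun x => by rw [h.per, k.per]⟩
lemma SP.neg {F : ℝ → ℝ} (h : SP F) : SP (fun x => - F x) :=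
  ⟨h.sm.neg, fun x => by rw [h.per]⟩
lemma SP.pow {F : ℝ → ℝ} (h : SP F) (n : ℕ) : SP (fun x => F x ^ n) :=
  ⟨h.sm.pow n, fun x => by rw [h.per]⟩
lemma SP.const (c : ℝ) : SP (fun _ => c) := ⟨contDiff_const, fun _ => rfl⟩
lemma SP.cmul {F : ℝ → ℝ} (c : ℝ) (h : SP F) : SP (fun x => c * F x) := (SP.const c).mul h
lemma SP.divc {F : ℝ → ℝ} (h : SP F) (c : ℝ) : SP (fun x => F x / c) := by
  simp only [div_eq_mul_inv]; exact h.mul (SP.const c⁻¹)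
lemma SP.cos : SP Real.cos := ⟨Real.contDiff_cos, Real.cos_add_two_pi⟩
lemma SP.sin : SP Real.sin := ⟨Real.contDiff_sin, Real.sin_add_two_pi⟩
lemma SP.div {F G : ℝ → ℝ} (h : SP F) (k : SP G) (hk : ∀ x, G x ≠ 0) : SP (fun x => F x / G x) :=
  ⟨h.sm.div k.sm hk, fun x => by rw [h.per, k.per]⟩
lemma SP.rpow {F : ℝ → ℝ} (h : SP F) (hp : ∀ x, 0 < F x) (a : ℝ) : SP (fun x => F x ^ a) :=
  ⟨h.sm.rpow_const_of_ne (fun x => (hp x).ne'), fun x => by rw [h.per]⟩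
lemma SP.log {F : ℝ → ℝ} (h : SP F) (hp : ∀ x, 0 < F x) : SP (fun x => Real.log (F x)) :=
  ⟨h.sm.log (fun x => (hp x).ne'), fun x => by rw [h.per]⟩

/-- Six polar equations. -/
structure PolSys (m d μ : ℝ) (P e1 e2 e3 f0 f1 α0 α1 β0 β1 : ℝ → ℝ) : Prop where
  hf0 : SP f0
  hf1 : SP f1
  hα0 : SP α0
  hα1 : SP α1
  hβ0 : SP β0
  hβ1 : SP β1
  q1 : ∀ x, (d + 1) * α0 x = - (m * μ * P x * f0 x)
  q1' : ∀ x, (d + 1) * α1 x + α0 x = e1 x - m * P x * (μ * f1 x + f0 x)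
  q2 : ∀ x, d * β0 x + deriv α0 x + m * P x * deriv f0 x + μ * deriv P x * f0 x = 0
  q2' : ∀ x, d * β1 x + β0 x + deriv α1 x + m * P x * deriv f1 x
    + deriv P x * (μ * f1 x + f0 x) = e2 x
  q3 : ∀ x, deriv β0 x + α0 x + deriv P x * deriv f0 x = 0
  q3' : ∀ x, deriv β1 x + α1 x + deriv P x * deriv f1 x = e3 x

lemma polsys_of_ell {m d μ : ℝ} {P e1 e2 e3 f0 f1 : ℝ → ℝ} (hd : 0 < d) (hμ : μ = d - m + 2)
    (hP : SP P) (he1 : SP e1) (he2 : SP e2) (he3 : SP e3) (hf0 : SP f0) (hf1 : SP f1)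
    (h0 : ∀ x, m * (m - 1) * P x * (μ * f0 x + deriv (deriv f0) x)
      + μ * (μ - 1) * f0 x * (m * P x + deriv (deriv P) x)
      - 2 * (m - 1) * (μ - 1) * deriv P x * deriv f0 x = 0)
    (h1 : ∀ x, m * (m - 1) * P x * (μ * f1 x + deriv (deriv f1) x)
      + μ * (μ - 1) * f1 x * (m * P x + deriv (deriv P) x)
      - 2 * (m - 1) * (μ - 1) * deriv P x * deriv f1 x
      + (m * (m - 1) * P x * f0 x + (2 * μ - 1) * (m * P x + deriv (deriv P) x) * f0 x
        - 2 * (m - 1) * deriv P x * deriv f0 x)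
      = (d + 1) * deriv e2 x - deriv (deriv e1) x + d * e1 x - d * (d + 1) * e3 x) :
    ∃ α0 α1 β0 β1, PolSys m d μ P e1 e2 e3 f0 f1 α0 α1 β0 β1 := by
  have hd1 : d + 1 ≠ 0 := by positivity
  have hd0 : d ≠ 0 := hd.ne'
  have hα0 : SP (fun x => - (m * μ * (P x * f0 x)) / (d + 1)) :=
    ((hP.mul hf0).cmul (m * μ)).neg.divc _
  obtain ⟨α0, hα0d⟩ : ∃ α0 : ℝ → ℝ, α0 = fun x => - (m * μ * (P x * f0 x)) / (d + 1) := ⟨_, rfl⟩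
  rw [← hα0d] at hα0
  have dα0 : ∀ x, deriv α0 x = - (m * μ * (deriv P x * f0 x + P x * deriv f0 x)) / (d + 1) := by
    intro x; rw [hα0d]
    exact (((((hP.hd x).mul (hf0.hd x)).const_mul (m * μ)).neg).div_const _).deriv
  have ddα0 : ∀ x, deriv (deriv α0) x = - (m * μ * (deriv (deriv P) x * f0 x
      + 2 * deriv P x * deriv f0 x + P x * deriv (deriv f0) x)) / (d + 1) := by
    intro x; rw [show deriv α0 = _ from funext dα0]
    refine (((((((hP.deriv.hd x).mul (hf0.hd x)).add ((hP.hd x).mul (hf0.deriv.hd x))).const_mul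
      (m * μ)).neg).div_const _).congr_deriv ?_).deriv
    ring
  have hα1 : SP (fun x => (e1 x - m * (P x * (μ * f1 x + f0 x)) - α0 x) / (d + 1)) :=
    ((he1.sub ((hP.mul ((hf1.cmul μ).add hf0)).cmul m)).sub hα0).divc _
  obtain ⟨α1, hα1d⟩ : ∃ α1 : ℝ → ℝ,
    α1 = fun x => (e1 x - m * (P x * (μ * f1 x + f0 x)) - α0 x) / (d + 1) := ⟨_, rfl⟩
  rw [← hα1d] at hα1
  have dα1 : ∀ x, deriv α1 x = (deriv e1 x - m * (deriv P x * (μ * f1 x + f0 x)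
      + P x * (μ * deriv f1 x + deriv f0 x)) - deriv α0 x) / (d + 1) := by
    intro x; rw [hα1d]
    exact ((((he1.hd x).sub (((hP.hd x).mul (((hf1.hd x).const_mul μ).add (hf0.hd x))).const_mul
      m)).sub (hα0.hd x)).div_const _).deriv
  have ddα1 : ∀ x, deriv (deriv α1) x = (deriv (deriv e1) x
      - m * (deriv (deriv P) x * (μ * f1 x + f0 x)
      + 2 * deriv P x * (μ * deriv f1 x + deriv f0 x)
      + P x * (μ * deriv (deriv f1) x + deriv (deriv f0) x)) - deriv (deriv α0) x) / (d + 1) := by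
    intro x; rw [show deriv α1 = _ from funext dα1]
    refine (((((he1.deriv.hd x).sub ((((hP.deriv.hd x).mul (((hf1.hd x).const_mul μ).add
      (hf0.hd x))).add ((hP.hd x).mul (((hf1.deriv.hd x).const_mul μ).add
      (hf0.deriv.hd x)))).const_mul m)).sub (hα0.deriv.hd x)).div_const _).congr_deriv ?_).deriv
    simp only [Pi.add_apply]
    ring
  have hβ0 : SP (fun x => -(deriv α0 x + m * (P x * deriv f0 x) + μ * (deriv P x * f0 x)) / d) :=
    ((hα0.deriv.add ((hP.mul hf0.deriv).cmul m)).add ((hP.deriv.mul hf0).cmul μ)).neg.divc _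
  obtain ⟨β0, hβ0d⟩ : ∃ β0 : ℝ → ℝ,
    β0 = fun x => -(deriv α0 x + m * (P x * deriv f0 x) + μ * (deriv P x * f0 x)) / d := ⟨_, rfl⟩
  rw [← hβ0d] at hβ0
  have dβ0 : ∀ x, deriv β0 x = -(deriv (deriv α0) x + m * (deriv P x * deriv f0 x
      + P x * deriv (deriv f0) x)
      + μ * (deriv (deriv P) x * f0 x + deriv P x * deriv f0 x)) / d := by
    intro x; rw [hβ0d]
    exact ((((hα0.deriv.hd x).add (((hP.hd x).mul (hf0.deriv.hd x)).const_mul m)).add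
      (((hP.deriv.hd x).mul (hf0.hd x)).const_mul μ)).neg.div_const _).deriv
  have hβ1 : SP (fun x => (e2 x - β0 x - deriv α1 x - m * (P x * deriv f1 x)
      - deriv P x * (μ * f1 x + f0 x)) / d) :=
    ((((he2.sub hβ0).sub hα1.deriv).sub ((hP.mul hf1.deriv).cmul m)).sub
      (hP.deriv.mul ((hf1.cmul μ).add hf0))).divc _
  obtain ⟨β1, hβ1d⟩ : ∃ β1 : ℝ → ℝ,
    β1 = fun x => (e2 x - β0 x - deriv α1 x - m * (P x * deriv f1 x)
      - deriv P x * (μ * f1 x + f0 x)) / d := ⟨_, rfl⟩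
  rw [← hβ1d] at hβ1
  have dβ1 : ∀ x, deriv β1 x = (deriv e2 x - deriv β0 x - deriv (deriv α1) x
      - m * (deriv P x * deriv f1 x + P x * deriv (deriv f1) x)
      - (deriv (deriv P) x * (μ * f1 x + f0 x)
        + deriv P x * (μ * deriv f1 x + deriv f0 x))) / d := by
    intro x; rw [hβ1d]
    exact (((((he2.hd x).sub (hβ0.hd x)).sub (hα1.deriv.hd x)).sub
      (((hP.hd x).mul (hf1.deriv.hd x)).const_mul m)).sub
      ((hP.deriv.hd x).mul (((hf1.hd x).const_mul μ).add (hf0.hd x)))).div_const _ |>.deriv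
  refine ⟨α0, α1, β0, β1, hf0, hf1, hα0, hα1, hβ0, hβ1, ?_, ?_, ?_, ?_, ?_, ?_⟩
  · intro x; simp only [hα0d]; field_simp
  · intro x; simp only [hα1d]; field_simp; ring
  · intro x; simp only [hβ0d]; field_simp; ring
  · intro x; simp only [hβ1d]; field_simp; ring
  · intro x
    have := h0 x
    rw [dβ0, ddα0]; simp only [hα0d]; subst hμ; field_simp
    linear_combination -this
  · intro x
    rw [dβ1, dβ0, ddα1, ddα0]; simp only [hα1d, hα0d]; subst hμ; field_simp
    linear_combination -(d * (d + 1)) * h1 x + (2 * d + 1) * h0 x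


/-- normalised curvature coefficient -/
def Bf (m : ℝ) (P : ℝ → ℝ) (x : ℝ) : ℝ :=
  (m ^ 2 * P x ^ 2 + m * P x * deriv (deriv P) x - (m - 1) * (deriv P x) ^ 2)
    / (m ^ 2 * (m - 1) * P x ^ 2)

lemma Bf_SP {m : ℝ} (hm : 2 ≤ m) {P : ℝ → ℝ} (hP : SP P) (hpos : ∀ x, 0 < P x) : SP (Bf m P) := by
  refine SP.div (((hP.pow 2).cmul (m ^ 2) |>.add ((hP.cmul m).mul hP.deriv.deriv)).sub
    ((hP.deriv.pow 2).cmul (m - 1))) ((hP.pow 2).cmul (m ^ 2 * (m - 1))) ?_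
  intro x
  have := hpos x
  have : 0 < m - 1 := by linarith
  positivity

lemma dQ {P : ℝ → ℝ} (hP : SP P) (hpos : ∀ x, 0 < P x) (a x : ℝ) :
    deriv (fun x => P x ^ a) x = a * deriv P x / P x * P x ^ a := by
  rw [((hP.hd x).rpow_const (p := a) (Or.inl (hpos x).ne')).deriv, Real.rpow_sub_one (hpos x).ne']
  ring

lemma ddQ {P : ℝ → ℝ} (hP : SP P) (hpos : ∀ x, 0 < P x) (a x : ℝ) :
    deriv (deriv (fun x => P x ^ a)) x = (a * deriv (deriv P) x / P x
      + (a ^ 2 - a) * (deriv P x) ^ 2 / P x ^ 2) * P x ^ a := by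
  have hp := (hpos x).ne'
  rw [show deriv (fun x => P x ^ a) = _ from funext (dQ hP hpos a)]
  refine ((((((hP.deriv.hd x).const_mul a).div (hP.hd x) hp).mul
    (((hP.rpow hpos a).hd x)))).congr_deriv ?_).deriv
  rw [dQ hP hpos]
  simp only [Pi.div_apply]
  field_simp
  ring

lemma ell_transform {m μ : ℝ} (hm : 2 ≤ m) {P g : ℝ → ℝ} (hP : SP P) (hpos : ∀ x, 0 < P x)
    (hg : SP g) {f : ℝ → ℝ} (hf : f = fun x => P x ^ ((μ - 1) / m) * g x) (x : ℝ) :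
    m * (m - 1) * P x * (μ * f x + deriv (deriv f) x)
      + μ * (μ - 1) * f x * (m * P x + deriv (deriv P) x)
      - 2 * (m - 1) * (μ - 1) * deriv P x * deriv f x
    = m * (m - 1) * P x * P x ^ ((μ - 1) / m) *
      (deriv (deriv g) x + (1 + (μ - 1) * (μ + m - 1) * Bf m P x) * g x) := by
  set a := (μ - 1) / m with ha
  have hQ := hP.rpow hpos a
  have hp := (hpos x).ne'
  have hm0 : m ≠ 0 := by linarith
  have hm1 : m - 1 ≠ 0 := by linarith
  have d1 : ∀ x, deriv f x = deriv (fun x => P x ^ a) x * g x + P x ^ a * deriv g x := by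
    intro x; rw [hf]
    exact ((hQ.hd x).mul (hg.hd x)).deriv
  have d2 : deriv (deriv f) x = deriv (deriv (fun x => P x ^ a)) x * g x
      + 2 * deriv (fun x => P x ^ a) x * deriv g x + P x ^ a * deriv (deriv g) x := by
    rw [show deriv f = _ from funext d1]
    refine ((((hQ.deriv.hd x).mul (hg.hd x)).add ((hQ.hd x).mul
      (hg.deriv.hd x))).congr_deriv ?_).deriv
    ring
  rw [d2, d1, ddQ hP hpos, dQ hP hpos, hf]
  simp only [Bf]
  have hμ : μ = a * m + 1 := by rw [ha]; field_simp; ring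
  rw [hμ]
  field_simp
  ring

lemma bf_solve {m d μ : ℝ} {P e1 e2 e3 : ℝ → ℝ} (hm : 2 ≤ m) (hd : 0 < d) (hμ : μ = d - m + 2)
    (hP : SP P) (hpos : ∀ x, 0 < P x) (hB0 : ∀ x, 0 ≤ Bf m P x) {x0 : ℝ}
    (hx0 : x0 ∈ Set.Ioo 0 (2 * Real.pi)) (hBx : 0 < Bf m P x0) (hκ : 2 * μ + m - 2 ≠ 0)
    (he1 : SP e1) (he2 : SP e2) (he3 : SP e3) :
    ∃ f0 f1 α0 α1 β0 β1, PolSys m d μ P e1 e2 e3 f0 f1 α0 α1 β0 β1 := by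
  have hB := Bf_SP hm hP hpos
  set a := (μ - 1) / m with ha
  have hm0 : m ≠ 0 := by linarith
  have hm1 : m - 1 ≠ 0 := by linarith
  have hQ := hP.rpow hpos a
  have hQpos : ∀ x, 0 < P x ^ a := fun x => Real.rpow_pos_of_pos (hpos x) a
  have hh : SP (fun x => ((d + 1) * deriv e2 x - deriv (deriv e1) x + d * e1 x
      - d * (d + 1) * e3 x) / (m * (m - 1) * (P x * P x ^ a))) := by
    refine SP.div ((((he2.deriv.cmul _).sub he1.deriv.deriv).add (he1.cmul d)).sub
      (he3.cmul _)) ((hP.mul hQ).cmul _) ?_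
    intro x
    have := (hpos x).ne'
    have := (hQpos x).ne'
    positivity
  set h : ℝ → ℝ := fun x => ((d + 1) * deriv e2 x - deriv (deriv e1) x + d * e1 x
      - d * (d + 1) * e3 x) / (m * (m - 1) * (P x * P x ^ a)) with hhd
  obtain ⟨g0, g0', g1, g1', s0, s1, p0, p1⟩ := fredholm hB.sm.continuous hB.per hB0 hx0 hBx
    ((μ - 1) * (μ + m - 1)) (2 * μ + m - 2) hκ hh.sm.continuous hh.per
  have hq : ContDiff ℝ (⊤ : ℕ∞) (fun x => 1 + (μ - 1) * (μ + m - 1) * Bf m P x) :=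
    contDiff_const.add (contDiff_const.mul hB.sm)
  have hg0 : SP g0 := ⟨fsol_smooth hq contDiff_const s0.fsol, p0⟩
  have hg1 : SP g1 := ⟨fsol_smooth hq (hh.sm.sub ((contDiff_const.mul hB.sm).mul hg0.sm)) s1, p1⟩
  have dg0 : deriv g0 = g0' := funext fun x => (s0.d0 x).deriv
  have dg1 : deriv g1 = g1' := funext fun x => (s1.d0 x).deriv
  have ddg0 : ∀ x, deriv (deriv g0) x = _ := fun x => (congrArg (fun F => deriv F x) dg0).trans (s0.d1 x).deriv
  have ddg1 : ∀ x, deriv (deriv g1) x = _ := fun x => (congrArg (fun F => deriv F x) dg1).trans (s1.d1 x).deriv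
  have hL : SP (fun x => Real.log (P x) / m) := (hP.log hpos).divc m
  have hL1 : ∀ x, HasDerivAt (fun x => Real.log (P x) / m) (deriv P x / P x / m) x := fun x =>
    ((hP.hd x).log (hpos x).ne').div_const m
  have hL2 : ∀ x, HasDerivAt (fun x => deriv P x / P x / m)
      ((deriv (deriv P) x * P x - deriv P x * deriv P x) / P x ^ 2 / m) x := fun x =>
    ((hP.deriv.hd x).div (hP.hd x) (hpos x).ne').div_const m
  obtain ⟨k, hk⟩ : ∃ k : ℝ → ℝ, k = fun x => g1 x + Real.log (P x) / m * g0 x := ⟨_, rfl⟩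
  have hkS : SP k := by rw [hk]; exact hg1.add (hL.mul hg0)
  have dk : ∀ x, deriv k x = deriv g1 x + (deriv P x / P x / m * g0 x
      + Real.log (P x) / m * deriv g0 x) := fun x => by
    rw [hk]; exact ((hg1.hd x).add ((hL1 x).mul (hg0.hd x))).deriv
  have ddk : ∀ x, deriv (deriv k) x = deriv (deriv g1) x
      + ((deriv (deriv P) x * P x - deriv P x * deriv P x) / P x ^ 2 / m * g0 x
      + 2 * (deriv P x / P x / m) * deriv g0 x
      + Real.log (P x) / m * deriv (deriv g0) x) := fun x => by
    rw [show deriv k = _ from funext dk]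
    refine (((hg1.deriv.hd x).add (((hL2 x).mul (hg0.hd x)).add
      ((hL1 x).mul (hg0.deriv.hd x)))).congr_deriv ?_).deriv
    ring
  obtain ⟨f0, hf0⟩ : ∃ f0 : ℝ → ℝ, f0 = fun x => P x ^ a * g0 x := ⟨_, rfl⟩
  obtain ⟨f1, hf1⟩ : ∃ f1 : ℝ → ℝ, f1 = fun x => P x ^ a * k x := ⟨_, rfl⟩
  have hf0S : SP f0 := by rw [hf0]; exact hQ.mul hg0
  have hf1S : SP f1 := by rw [hf1]; exact hQ.mul hkS
  refine ⟨f0, f1, polsys_of_ell hd hμ hP he1 he2 he3 hf0S hf1S ?_ ?_⟩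
  · intro x
    rw [ell_transform hm hP hpos hg0 hf0 x, ddg0]
    ring
  · intro x
    rw [ell_transform hm hP hpos hkS hf1 x, ddk, ddg1, ddg0]
    have df0 : deriv f0 x = a * deriv P x / P x * P x ^ a * g0 x + P x ^ a * deriv g0 x := by
      rw [hf0, ← dQ hP hpos]
      exact ((hQ.hd x).mul (hg0.hd x)).deriv
    rw [df0, hf0, hk]
    simp only [hhd, ← ha]
    have hp := (hpos x).ne'
    have hQx := (hQpos x).ne'
    generalize P x ^ a = Q at *
    simp only [Bf]
    have hμ' : μ = a * m + 1 := by rw [ha]; field_simp; ring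
    rw [hμ']
    field_simp
    ring

lemma bf_eigen {m : ℝ} {P : ℝ → ℝ} (hm : 2 ≤ m) 
    (hP : SP P) (hpos : ∀ x, 0 < P x) (hB0 : ∀ x, 0 ≤ Bf m P x) {x0 : ℝ}
    (hx0 : x0 ∈ Set.Ioo 0 (2 * Real.pi)) (hBx : 0 < Bf m P x0) (N : ℝ) :
    ∃ l, N ≤ l ∧ ∃ f α β, PolSys m (l + m - 2) l P (fun _ => 0) (fun _ => 0) (fun _ => 0)
      (fun _ => 0) f (fun _ => 0) α (fun _ => 0) β ∧ ∃ x, f x ≠ 0 := by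
  have hB := Bf_SP hm hP hpos
  have hm0 : m ≠ 0 := by linarith
  set M := max N 1 with hM
  have hM1 : 1 ≤ M := le_max_right _ _
  obtain ⟨ν, hν, g, g', s, p, x1, hx1⟩ := eigen_exists hB.sm.continuous hB.per hB0 hx0 hBx
    ((M - 1) * (M + m - 1))
  have hν0 : 0 ≤ ν := le_trans (mul_nonneg (by linarith) (by linarith)) hν
  obtain ⟨l, hl⟩ : ∃ l, l = -(m - 2) / 2 + Real.sqrt (ν + m ^ 2 / 4) := ⟨_, rfl⟩
  have hsq := Real.sq_sqrt (show 0 ≤ ν + m ^ 2 / 4 by positivity)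
  have hlν : (l - 1) * (l + m - 1) = ν := by
    rw [hl]; linear_combination hsq
  have hMl : M ≤ l := by
    have : M + (m - 2) / 2 ≤ Real.sqrt (ν + m ^ 2 / 4) := by
      apply Real.le_sqrt_of_sq_le
      nlinarith
    rw [hl]; linarith
  have hq : ContDiff ℝ (⊤ : ℕ∞) (fun x => 1 + ν * Bf m P x) :=
    contDiff_const.add (contDiff_const.mul hB.sm)
  have hg : SP g := ⟨fsol_smooth hq contDiff_const s.fsol, fun x => (p x).1⟩
  have dg : deriv g = g' := funext fun x => (s.d0 x).deriv
  have ddg : ∀ x, deriv (deriv g) x = _ := fun x => (congrArg (fun F => deriv F x) dg).trans (s.d1 x).deriv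
  set a := (l - 1) / m with ha
  have hQ := hP.rpow hpos a
  obtain ⟨f, hf⟩ : ∃ f : ℝ → ℝ, f = fun x => P x ^ a * g x := ⟨_, rfl⟩
  have hfS : SP f := by rw [hf]; exact hQ.mul hg
  have hd : 0 < l + m - 2 := by linarith
  have hell : ∀ x, m * (m - 1) * P x * (l * f x + deriv (deriv f) x)
      + l * (l - 1) * f x * (m * P x + deriv (deriv P) x)
      - 2 * (m - 1) * (l - 1) * deriv P x * deriv f x = 0 := by
    intro x
    rw [ell_transform hm hP hpos hg hf x, ddg, hlν]; ring
  obtain ⟨α0, α, β0, β, H⟩ := polsys_of_ell (m := m) (d := l + m - 2) (μ := l) (e1 := fun _ => 0)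
    (e2 := fun _ => 0) (e3 := fun _ => 0) hd (by ring) hP
    (SP.const 0) (SP.const 0) (SP.const 0) (SP.const 0) hfS (by intro x; simp) (by
      intro x; simp; linarith [hell x])
  have z1 : α0 = fun _ => 0 := by
    funext x
    have := H.q1 x
    have h1 : l + m - 2 + 1 ≠ 0 := by linarith
    simpa [h1] using this
  have z2 : β0 = fun _ => 0 := by
    funext x
    have := H.q2 x
    rw [z1] at this
    simpa [hd.ne'] using this
  rw [z1, z2] at H
  refine ⟨l, le_trans (le_max_left _ _) hMl, f, α, β, H, x1, ?_⟩
  rw [hf]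
  exact mul_ne_zero (Real.rpow_pos_of_pos (hpos _) _).ne' hx1


/-- complex number of a planar point -/
def cpt (p : ℝ × ℝ) : ℂ := ⟨p.1, p.2⟩

lemma cpt_cont : Continuous cpt := by
  have : cpt = fun p : ℝ × ℝ => (p.1 : ℂ) + (p.2 : ℂ) * Complex.I := by
    funext p
    apply Complex.ext <;> simp [cpt]
  rw [this]
  fun_prop

lemma cpt_ne {p : ℝ × ℝ} (hp : p ≠ 0) : cpt p ≠ 0 := by
  intro h
  apply hp
  have h1 := congrArg Complex.re h
  have h2 := congrArg Complex.im h
  exact Prod.ext h1 h2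

lemma polar_rep {p : ℝ × ℝ} (hp : p ≠ 0) : ∃ r : ℝ, 0 < r ∧ r = ‖cpt p‖ ∧ ∃ θ : ℝ,
    p = (r * Real.cos θ, r * Real.sin θ) := by
  refine ⟨‖cpt p‖, norm_pos_iff.2 (cpt_ne hp), rfl, (cpt p).arg, ?_⟩
  apply Prod.ext
  · exact (Complex.norm_mul_cos_arg (cpt p)).symm
  · exact (Complex.norm_mul_sin_arg (cpt p)).symm

/-- polar class -/
def PC (a : ℝ) (F G : ℝ → ℝ) (φ : ℝ × ℝ → ℝ) : Prop :=
  ∀ r : ℝ, 0 < r → ∀ θ : ℝ, φ (r * Real.cos θ, r * Real.sin θ) = r ^ a * (F θ + Real.log r * G θ)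

/-- the canonical function of a polar class -/
def mkp (a : ℝ) (F G : ℝ → ℝ) (p : ℝ × ℝ) : ℝ :=
  ‖cpt p‖ ^ a * (F (cpt p).arg + Real.log ‖cpt p‖ * G (cpt p).arg)

lemma mkp_zero {a : ℝ} (ha : a ≠ 0) (F G : ℝ → ℝ) : mkp a F G 0 = 0 := by
  have : cpt 0 = 0 := rfl
  simp [mkp, this, Real.zero_rpow ha]

lemma per_angle {F : ℝ → ℝ} (hF : SP F) {x y : ℝ} (h : (x : Real.Angle) = y) : F x = F y := by
  obtain ⟨k, hk⟩ := Real.Angle.angle_eq_iff_two_pi_dvd_sub.1 h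
  have hp : Function.Periodic F (2 * Real.pi) := hF.per
  have := hp.int_mul k y
  rw [← this]
  congr 1
  linarith

lemma mkp_PC (a : ℝ) {F G : ℝ → ℝ} (hF : SP F) (hG : SP G) : PC a F G (mkp a F G) := by
  intro r hr θ
  have h0 : cpt (r * Real.cos θ, r * Real.sin θ)
      = (r : ℂ) * ((Real.cos θ : ℂ) + (Real.sin θ : ℂ) * Complex.I) := by
    apply Complex.ext <;> simp [cpt,
      -Complex.ofReal_cos, -Complex.ofReal_sin]
  have h1 : ‖cpt (r * Real.cos θ, r * Real.sin θ)‖ = r := by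
    rw [h0, norm_mul, Complex.ofReal_cos, Complex.ofReal_sin, Complex.norm_cos_add_sin_mul_I]
    simp [abs_of_pos hr]
  have h2 : ((cpt (r * Real.cos θ, r * Real.sin θ)).arg : Real.Angle) = θ := by
    rw [h0]
    have := Complex.arg_mul_cos_add_sin_mul_I_coe_angle hr (θ : Real.Angle)
    simpa using this
  unfold mkp
  rw [h1, per_angle hF h2, per_angle hG h2]

/-- linear form with given coefficients -/
def lf (A B : ℝ) : ℝ × ℝ →L[ℝ] ℝ :=
  A • ContinuousLinearMap.fst ℝ ℝ ℝ + B • ContinuousLinearMap.snd ℝ ℝ ℝ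

lemma lf_apply (A B : ℝ) (v : ℝ × ℝ) : lf A B v = A * v.1 + B * v.2 := by
  simp [lf]

lemma pc_fderiv {a : ℝ} {F G : ℝ → ℝ} {φ : ℝ × ℝ → ℝ} (hφ : PC a F G φ) {θ F' G' : ℝ}
    (hF : HasDerivAt F F' θ) (hG : HasDerivAt G G' θ) {r : ℝ} (hr : 0 < r) :
    HasFDerivAt φ (lf
      (r ^ (a - 1) * (Real.cos θ * (a * F θ + G θ + a * Real.log r * G θ)
        - Real.sin θ * (F' + Real.log r * G')))
      (r ^ (a - 1) * (Real.sin θ * (a * F θ + G θ + a * Real.log r * G θ)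
        + Real.cos θ * (F' + Real.log r * G'))))
      (r * Real.cos θ, r * Real.sin θ) := by
  set p0 : ℝ × ℝ := (r * Real.cos θ, r * Real.sin θ) with hp0
  have hcs := Real.cos_sq_add_sin_sq θ
  let X : ℝ × ℝ → ℝ := fun p => lf (Real.cos θ) (Real.sin θ) p
  let Y : ℝ × ℝ → ℝ := fun p => lf (-Real.sin θ) (Real.cos θ) p
  have hX : HasFDerivAt X (lf (Real.cos θ) (Real.sin θ)) p0 := (lf _ _).hasFDerivAt
  have hY : HasFDerivAt Y (lf (-Real.sin θ) (Real.cos θ)) p0 := (lf _ _).hasFDerivAt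
  have hX0 : X p0 = r := by
    simp only [X, lf_apply, hp0]; linear_combination r * hcs
  have hY0 : Y p0 = 0 := by
    simp only [Y, lf_apply, hp0]; ring
  have hXpos : ∀ᶠ p in nhds p0, 0 < X p := by
    have hc : ContinuousAt X p0 := hX.continuousAt
    exact hc.eventually_const_lt (by rw [hX0]; exact hr)
  let σ : ℝ × ℝ → ℝ := fun p => Real.log (X p * X p + Y p * Y p) / 2
  let Θ : ℝ × ℝ → ℝ := fun p => θ + Real.arctan (Y p / X p)
  have hσ0 : σ p0 = Real.log r := by
    simp only [σ, hX0, hY0]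
    rw [mul_zero, add_zero, Real.log_mul hr.ne' hr.ne']; ring
  have hΘ0 : Θ p0 = θ := by simp [Θ, hY0]
  have hσ : HasFDerivAt σ (lf (Real.cos θ / r) (Real.sin θ / r)) p0 := by
    have h1 := (((hX.mul hX).add (hY.mul hY)).log (by
      simp only [Pi.add_apply, Pi.mul_apply]
      rw [hX0, hY0]; positivity)).mul_const (1 / 2 : ℝ)
    have h2 : σ = fun p => Real.log ((X * X + Y * Y) p) * (1 / 2) := by
      funext p; simp only [σ, Pi.add_apply, Pi.mul_apply]; ring
    rw [h2]
    refine h1.congr_fderiv ?_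
    ext <;> simp [lf, hX0, hY0] <;> field_simp <;> ring
  have hΘ : HasFDerivAt Θ (lf (-Real.sin θ / r) (Real.cos θ / r)) p0 := by
    have h1 : HasFDerivAt (fun p => Y p * (X p)⁻¹) _ p0 :=
      hY.mul ((hasDerivAt_inv (by rw [hX0]; exact hr.ne')).comp_hasFDerivAt p0 hX)
    have h2 := (h1.arctan).const_add θ
    have h3 : Θ = fun p => θ + Real.arctan (Y p * (X p)⁻¹) := by
      funext p; simp only [Θ, div_eq_mul_inv]
    rw [h3]
    refine h2.congr_fderiv ?_
    ext <;> simp [lf, hX0, hY0] <;> field_simp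
  have hev : φ =ᶠ[nhds p0] fun p => Real.exp (a * σ p) * (F (Θ p) + σ p * G (Θ p)) := by
    filter_upwards [hXpos] with p hp
    have hN : 0 < X p * X p + Y p * Y p :=
      add_pos_of_pos_of_nonneg (mul_pos hp hp) (mul_self_nonneg _)
    have e1 : Real.exp (σ p) = X p * Real.sqrt (1 + (Y p / X p) ^ 2) := by
      have : Real.exp (σ p) = Real.sqrt (X p * X p + Y p * Y p) := by
        rw [← Real.exp_log (Real.sqrt_pos.2 hN), Real.log_sqrt hN.le]
      rw [this]
      have h4 : X p * X p + Y p * Y p = X p ^ 2 * (1 + (Y p / X p) ^ 2) := by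
        field_simp
      rw [h4, Real.sqrt_mul (sq_nonneg _), Real.sqrt_sq hp.le]
    have hs : Real.sqrt (1 + (Y p / X p) ^ 2) ≠ 0 := by positivity
    have ec : Real.exp (σ p) * Real.cos (Real.arctan (Y p / X p)) = X p := by
      rw [e1, Real.cos_arctan]; field_simp
    have es : Real.exp (σ p) * Real.sin (Real.arctan (Y p / X p)) = Y p := by
      rw [e1, Real.sin_arctan]; field_simp
    have hXp : X p = Real.cos θ * p.1 + Real.sin θ * p.2 := lf_apply _ _ _
    have hYp : Y p = -Real.sin θ * p.1 + Real.cos θ * p.2 := lf_apply _ _ _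
    have hp' : p = (Real.exp (σ p) * Real.cos (Θ p), Real.exp (σ p) * Real.sin (Θ p)) := by
      apply Prod.ext
      · simp only [Θ]; rw [Real.cos_add]
        linear_combination (-Real.cos θ) * (ec.trans hXp) + Real.sin θ * (es.trans hYp) - p.1 * hcs
      · simp only [Θ]; rw [Real.sin_add]
        linear_combination (-Real.sin θ) * (ec.trans hXp) - Real.cos θ * (es.trans hYp) - p.2 * hcs
    have := hφ (Real.exp (σ p)) (Real.exp_pos _) (Θ p)
    rw [← hp', Real.log_exp, ← Real.exp_mul] at this
    rw [this, mul_comm a]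
  have hF' : HasFDerivAt (fun p => F (Θ p)) (F' • lf (-Real.sin θ / r) (Real.cos θ / r)) p0 :=
    HasDerivAt.comp_hasFDerivAt p0 (by rw [hΘ0]; exact hF) hΘ
  have hG' : HasFDerivAt (fun p => G (Θ p)) (G' • lf (-Real.sin θ / r) (Real.cos θ / r)) p0 :=
    HasDerivAt.comp_hasFDerivAt p0 (by rw [hΘ0]; exact hG) hΘ
  have hmain := ((hσ.const_mul a).exp).mul (hF'.add (hσ.mul hG'))
  refine (hmain.congr_of_eventuallyEq hev).congr_fderiv ?_
  have hexp : Real.exp (a * Real.log r) = r ^ (a - 1) * r := by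
    rw [Real.rpow_sub_one hr.ne', Real.rpow_def_of_pos hr, mul_comm a]; field_simp
  ext <;> simp [lf, hσ0, hΘ0, hexp] <;> field_simp <;> ring


lemma pc_small {a c : ℝ} (hac : c < a) {F G : ℝ → ℝ} (hF : SP F) (hG : SP G) {φ : ℝ × ℝ → ℝ}
    (hφ : PC a F G φ) (h0 : φ 0 = 0) {ε : ℝ} (hε : 0 < ε) :
    ∀ᶠ p in nhds (0 : ℝ × ℝ), |φ p| ≤ ε * ‖cpt p‖ ^ c := by
  obtain ⟨M, hM⟩ := periodic_bound hF.sm.continuous hF.per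
  obtain ⟨K, hK⟩ := periodic_bound hG.sm.continuous hG.per
  have hd : 0 < a - c := by linarith
  have t1 : Filter.Tendsto (fun r : ℝ => r ^ (a - c)) (nhdsWithin 0 (Set.Ioi 0)) (nhds 0) := by
    have : ContinuousAt (fun r : ℝ => r ^ (a - c)) 0 := Real.continuousAt_rpow_const _ _ (Or.inr hd.le)
    have h := this.tendsto
    simp only [Real.zero_rpow hd.ne'] at h
    exact h.mono_left nhdsWithin_le_nhds
  have t2 := (tendsto_log_mul_rpow_nhdsGT_zero hd).abs
  rw [abs_zero] at t2
  have t3 := (t1.mul_const M).add (t2.mul_const K)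
  rw [zero_mul, zero_mul, add_zero] at t3
  have ev : ∀ᶠ r in nhdsWithin (0:ℝ) (Set.Ioi 0),
      r ^ (a - c) * M + |Real.log r * r ^ (a - c)| * K < ε := t3.eventually_lt_const hε
  rw [eventually_nhdsWithin_iff] at ev
  have tn : Filter.Tendsto (fun p : ℝ × ℝ => ‖cpt p‖) (nhds 0) (nhds 0) := by
    have h := (cpt_cont.norm).tendsto 0
    have : ‖cpt 0‖ = 0 := by rw [show cpt 0 = 0 from rfl, norm_zero]
    rwa [this] at h
  filter_upwards [tn.eventually ev] with p hp
  by_cases hp0 : p = 0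
  · rw [hp0, h0, abs_zero]; positivity
  obtain ⟨r, hr, hrn, θ, hpθ⟩ := polar_rep hp0
  rw [← hrn] at hp ⊢
  have h1 := hp hr
  rw [hpθ, hφ r hr θ]
  have e : r ^ a = r ^ (a - c) * r ^ c := by rw [← Real.rpow_add hr]; congr 1; ring
  have hc : 0 < r ^ c := Real.rpow_pos_of_pos hr c
  have hac' : 0 < r ^ (a - c) := Real.rpow_pos_of_pos hr _
  rw [e]
  have h2 : |r ^ (a - c) * r ^ c * (F θ + Real.log r * G θ)|
      = |r ^ (a - c) * F θ + (Real.log r * r ^ (a - c)) * G θ| * r ^ c := by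
    rw [← abs_of_pos hc, ← abs_mul, abs_of_pos hc]; congr 1; ring
  rw [h2]
  refine mul_le_mul_of_nonneg_right ?_ hc.le
  refine le_trans (abs_add_le _ _) (le_trans ?_ h1.le)
  rw [abs_mul, abs_mul (_ * _) (G θ), abs_of_pos hac']
  exact add_le_add (mul_le_mul_of_nonneg_left (hM θ) hac'.le)
    (mul_le_mul_of_nonneg_left (hK θ) (abs_nonneg _))

lemma cpt_norm_le (p : ℝ × ℝ) : ‖cpt p‖ ≤ 2 * ‖p‖ := by
  refine le_trans (Complex.norm_le_abs_re_add_abs_im _) ?_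
  have h1 := norm_fst_le p
  have h2 := norm_snd_le p
  rw [Real.norm_eq_abs] at h1 h2
  simp only [cpt]
  linarith

lemma pc_zero_fderiv {a : ℝ} (ha : 1 < a) {F G : ℝ → ℝ} (hF : SP F) (hG : SP G) {φ : ℝ × ℝ → ℝ}
    (hφ : PC a F G φ) (h0 : φ 0 = 0) : HasFDerivAt φ (0 : ℝ × ℝ →L[ℝ] ℝ) 0 := by
  rw [hasFDerivAt_iff_isLittleO_nhds_zero, Asymptotics.isLittleO_iff]
  intro ε hε
  filter_upwards [pc_small ha hF hG hφ h0 (half_pos hε)] with p hp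
  rw [Real.rpow_one] at hp
  simp only [zero_add, h0, sub_zero, _root_.zero_apply, Real.norm_eq_abs]
  have := cpt_norm_le p
  nlinarith

/-- coefficients of the derivatives -/
def csF (a : ℝ) (F G : ℝ → ℝ) (x : ℝ) : ℝ := Real.cos x * (a * F x + G x) - Real.sin x * deriv F x
def csG (a : ℝ) (G : ℝ → ℝ) (x : ℝ) : ℝ := Real.cos x * (a * G x) - Real.sin x * deriv G x
def ctF (a : ℝ) (F G : ℝ → ℝ) (x : ℝ) : ℝ := Real.sin x * (a * F x + G x) + Real.cos x * deriv F x
def ctG (a : ℝ) (G : ℝ → ℝ) (x : ℝ) : ℝ := Real.sin x * (a * G x) + Real.cos x * deriv G x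

lemma pc_fderiv' {a : ℝ} {F G : ℝ → ℝ} {φ : ℝ × ℝ → ℝ} (hφ : PC a F G φ) (hF : SP F) (hG : SP G)
    {r : ℝ} (hr : 0 < r) (θ : ℝ) :
    HasFDerivAt φ (lf (r ^ (a - 1) * (csF a F G θ + Real.log r * csG a G θ))
      (r ^ (a - 1) * (ctF a F G θ + Real.log r * ctG a G θ)))
      (r * Real.cos θ, r * Real.sin θ) := by
  refine (pc_fderiv hφ (hF.hd θ) (hG.hd θ) hr).congr_fderiv ?_
  unfold csF csG ctF ctG
  congr 1 <;> ring

lemma pc_contDiff (k : ℕ) : ∀ {a : ℝ} {F G : ℝ → ℝ} {φ : ℝ × ℝ → ℝ}, (k : ℝ) < a → SP F → SP G →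
    PC a F G φ → φ 0 = 0 → ContDiff ℝ k φ := by
  induction k with
  | zero =>
    intro a F G φ ha hF hG hφ h0
    refine contDiff_zero.2 (continuous_iff_continuousAt.2 fun p => ?_)
    by_cases hp : p = 0
    · subst hp
      rw [Metric.continuousAt_iff']
      intro ε hε
      filter_upwards [pc_small (by exact_mod_cast ha : (0:ℝ) < a) hF hG hφ h0 (half_pos hε)] with p hp
      rw [Real.rpow_zero] at hp
      rw [h0, Real.dist_eq, sub_zero]
      linarith
    · obtain ⟨r, hr, -, θ, rfl⟩ := polar_rep hp
      exact (pc_fderiv' hφ hF hG hr θ).continuousAt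
  | succ k ih =>
    intro a F G φ ha hF hG hφ h0
    push_cast at ha ⊢
    have hk : (0:ℝ) ≤ k := Nat.cast_nonneg k
    have hz := pc_zero_fderiv (by linarith) hF hG hφ h0
    rw [contDiff_succ_iff_fderiv]
    refine ⟨?_, by simp, ?_⟩
    · intro p
      by_cases hp : p = 0
      · subst hp; exact hz.differentiableAt
      · obtain ⟨r, hr, -, θ, rfl⟩ := polar_rep hp
        exact (pc_fderiv' hφ hF hG hr θ).differentiableAt
    · have e : fderiv ℝ φ = fun p => (fderiv ℝ φ p (1, 0)) • ContinuousLinearMap.fst ℝ ℝ ℝ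
          + (fderiv ℝ φ p (0, 1)) • ContinuousLinearMap.snd ℝ ℝ ℝ := by
        funext p
        ext <;> simp
      have c1 : ContDiff ℝ k (fun p => fderiv ℝ φ p (1, 0)) := by
        refine ih (a := a - 1) (F := csF a F G) (G := csG a G) (by linarith) ?_ ?_ ?_ ?_
        · exact (SP.cos.mul ((hF.cmul a).add hG)).sub (SP.sin.mul hF.deriv)
        · exact (SP.cos.mul (hG.cmul a)).sub (SP.sin.mul hG.deriv)
        · intro r hr θ
          beta_reduce
          rw [(pc_fderiv' hφ hF hG hr θ).fderiv, lf_apply]; ring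
        · rw [hz.fderiv]; simp
      have c2 : ContDiff ℝ k (fun p => fderiv ℝ φ p (0, 1)) := by
        refine ih (a := a - 1) (F := ctF a F G) (G := ctG a G) (by linarith) ?_ ?_ ?_ ?_
        · exact (SP.sin.mul ((hF.cmul a).add hG)).add (SP.cos.mul hF.deriv)
        · exact (SP.sin.mul (hG.cmul a)).add (SP.cos.mul hG.deriv)
        · intro r hr θ
          beta_reduce
          rw [(pc_fderiv' hφ hF hG hr θ).fderiv, lf_apply]; ring
        · rw [hz.fderiv]; simp
      rw [e]
      exact (c1.smul contDiff_const).add (c2.smul contDiff_const)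





/-- shorthand partial derivatives -/
def Ds (φ : ℝ × ℝ → ℝ) (p : ℝ × ℝ) : ℝ := fderiv ℝ φ p (1, 0)
def Dt (φ : ℝ × ℝ → ℝ) (p : ℝ × ℝ) : ℝ := fderiv ℝ φ p (0, 1)

lemma pds_eq_s4 {φ : ℝ × ℝ → ℝ} {p : ℝ × ℝ} (h : DifferentiableAt ℝ φ p) : pds φ p = Ds φ p := by
  have h1 : HasDerivAt (fun s : ℝ => (s, p.2)) ((1 : ℝ), (0 : ℝ)) p.1 :=
    (hasDerivAt_id p.1).prodMk (hasDerivAt_const p.1 p.2)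
  exact (h.hasFDerivAt.comp_hasDerivAt (f := fun s : ℝ => (s, p.2)) p.1 h1).deriv

lemma pdt_eq_s4 {φ : ℝ × ℝ → ℝ} {p : ℝ × ℝ} (h : DifferentiableAt ℝ φ p) : pdt φ p = Dt φ p := by
  have h1 : HasDerivAt (fun t : ℝ => (p.1, t)) ((0 : ℝ), (1 : ℝ)) p.2 :=
    (hasDerivAt_const p.2 p.1).prodMk (hasDerivAt_id p.2)
  exact (h.hasFDerivAt.comp_hasDerivAt (f := fun t : ℝ => (p.1, t)) p.2 h1).deriv

lemma pc_Ds {a : ℝ} {F G : ℝ → ℝ} {φ : ℝ × ℝ → ℝ} (hφ : PC a F G φ) (hF : SP F) (hG : SP G)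
    {r : ℝ} (hr : 0 < r) (θ : ℝ) : Ds φ (r * Real.cos θ, r * Real.sin θ)
      = r ^ (a - 1) * (csF a F G θ + Real.log r * csG a G θ) := by
  unfold Ds
  rw [(pc_fderiv' hφ hF hG hr θ).fderiv, lf_apply]; ring

lemma pc_Dt {a : ℝ} {F G : ℝ → ℝ} {φ : ℝ × ℝ → ℝ} (hφ : PC a F G φ) (hF : SP F) (hG : SP G)
    {r : ℝ} (hr : 0 < r) (θ : ℝ) : Dt φ (r * Real.cos θ, r * Real.sin θ)
      = r ^ (a - 1) * (ctF a F G θ + Real.log r * ctG a G θ) := by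
  unfold Dt
  rw [(pc_fderiv' hφ hF hG hr θ).fderiv, lf_apply]; ring

lemma pc_diff {a : ℝ} {F G : ℝ → ℝ} {φ : ℝ × ℝ → ℝ} (hφ : PC a F G φ) (hF : SP F) (hG : SP G)
    {p : ℝ × ℝ} (hp : p ≠ 0) : DifferentiableAt ℝ φ p := by
  obtain ⟨r, hr, -, θ, rfl⟩ := polar_rep hp
  exact (pc_fderiv' hφ hF hG hr θ).differentiableAt

/-- rotated frame to Cartesian components -/
def rotu (α β : ℝ → ℝ) (x : ℝ) : ℝ := Real.cos x * α x - Real.sin x * β x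
def rotv (α β : ℝ → ℝ) (x : ℝ) : ℝ := Real.sin x * α x + Real.cos x * β x

lemma rotu_SP {α β : ℝ → ℝ} (hα : SP α) (hβ : SP β) : SP (rotu α β) :=
  (SP.cos.mul hα).sub (SP.sin.mul hβ)
lemma rotv_SP {α β : ℝ → ℝ} (hα : SP α) (hβ : SP β) : SP (rotv α β) :=
  (SP.sin.mul hα).add (SP.cos.mul hβ)

lemma rotu_deriv {α β : ℝ → ℝ} (hα : SP α) (hβ : SP β) (x : ℝ) : deriv (rotu α β) x =
    -Real.sin x * α x + Real.cos x * deriv α x - (Real.cos x * β x + Real.sin x * deriv β x) :=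
  (((Real.hasDerivAt_cos x).mul (hα.hd x)).sub ((Real.hasDerivAt_sin x).mul (hβ.hd x))).deriv
lemma rotv_deriv {α β : ℝ → ℝ} (hα : SP α) (hβ : SP β) (x : ℝ) : deriv (rotv α β) x =
    Real.cos x * α x + Real.sin x * deriv α x + (-Real.sin x * β x + Real.cos x * deriv β x) :=
  (((Real.hasDerivAt_sin x).mul (hα.hd x)).add ((Real.hasDerivAt_cos x).mul (hβ.hd x))).deriv

lemma solve_cart {m d μ : ℝ} {P e1 e2 e3 f0 f1 α0 α1 β0 β1 : ℝ → ℝ}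
    (H : PolSys m d μ P e1 e2 e3 f0 f1 α0 α1 β0 β1) (hP : SP P) (hdμ : d = μ + m - 2)
    {z u v w : ℝ × ℝ → ℝ} (hz : PC m P (fun _ => 0) z) (hu : PC (d + 1) (rotu α1 β1) (rotu α0 β0) u)
    (hv : PC (d + 1) (rotv α1 β1) (rotv α0 β0) v) (hw : PC μ f1 f0 w) {r : ℝ} (hr : 0 < r) (θ : ℝ)
    {p : ℝ × ℝ} (hp : p = (r * Real.cos θ, r * Real.sin θ)) :
    Ds u p + Ds z p * Ds w p = r ^ d * (Real.cos θ ^ 2 * e1 θ - Real.cos θ * Real.sin θ * e2 θ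
      + Real.sin θ ^ 2 * e3 θ) ∧
    Dt u p + Ds v p + (Ds z p * Dt w p + Dt z p * Ds w p)
      = r ^ d * (2 * Real.cos θ * Real.sin θ * e1 θ + (Real.cos θ ^ 2 - Real.sin θ ^ 2) * e2 θ
      - 2 * Real.cos θ * Real.sin θ * e3 θ) ∧
    Dt v p + Dt z p * Dt w p = r ^ d * (Real.sin θ ^ 2 * e1 θ + Real.cos θ * Real.sin θ * e2 θ
      + Real.cos θ ^ 2 * e3 θ) := by
  have su1 := rotu_SP H.hα1 H.hβ1
  have su0 := rotu_SP H.hα0 H.hβ0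
  have sv1 := rotv_SP H.hα1 H.hβ1
  have sv0 := rotv_SP H.hα0 H.hβ0
  rw [hp, pc_Ds hu su1 su0 hr, pc_Dt hu su1 su0 hr, pc_Ds hv sv1 sv0 hr, pc_Dt hv sv1 sv0 hr,
    pc_Ds hw H.hf1 H.hf0 hr, pc_Dt hw H.hf1 H.hf0 hr, pc_Ds hz hP (SP.const 0) hr,
    pc_Dt hz hP (SP.const 0) hr]
  have hpow : r ^ d = r ^ (m - 1) * r ^ (μ - 1) := by
    rw [← Real.rpow_add hr]; congr 1; rw [hdμ]; ring
  rw [show d + 1 - 1 = d by ring, hpow]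
  simp only [csF, csG, ctF, ctG, rotu_deriv H.hα1 H.hβ1, rotu_deriv H.hα0 H.hβ0,
    rotv_deriv H.hα1 H.hβ1, rotv_deriv H.hα0 H.hβ0, deriv_const']
  simp only [rotu, rotv]
  have q1 := H.q1 θ
  have q1' := H.q1' θ
  have q2 := H.q2 θ
  have q2' := H.q2' θ
  have q3 := H.q3 θ
  have q3' := H.q3' θ
  generalize Real.log r = L
  generalize r ^ (m - 1) = R1
  generalize r ^ (μ - 1) = R2
  generalize Real.cos θ = c at *
  generalize Real.sin θ = s at *
  refine ⟨?_, ?_, ?_⟩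
  · linear_combination R1 * R2 * (c ^ 2 * (q1' + L * q1) - c * s * (q2' + L * q2)
      + s ^ 2 * (q3' + L * q3))
  · linear_combination R1 * R2 * (2 * c * s * (q1' + L * q1) + (c ^ 2 - s ^ 2) * (q2' + L * q2)
      - 2 * c * s * (q3' + L * q3))
  · linear_combination R1 * R2 * (s ^ 2 * (q1' + L * q1) + c * s * (q2' + L * q2)
      + c ^ 2 * (q3' + L * q3))

lemma curv_nonneg {m : ℝ} (hm : 2 ≤ m) {P : ℝ → ℝ} (hP : SP P) (hpos : ∀ x, 0 < P x)
    (hcurv : ∃ T : Finset ℝ, ∀ θ ∈ Set.Ico (0 : ℝ) (2 * Real.pi), θ ∉ T →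
      0 < m ^ 2 * P θ ^ 2 + m * P θ * deriv (deriv P) θ - (m - 1) * (deriv P θ) ^ 2) :
    (∀ x, 0 ≤ Bf m P x) ∧ ∃ x0 ∈ Set.Ioo 0 (2 * Real.pi), 0 < Bf m P x0 := by
  obtain ⟨T, hT⟩ := hcurv
  have hm1 : 0 < m - 1 := by linarith
  have hB := Bf_SP hm hP hpos
  have key : ∀ x ∈ Set.Ioo 0 (2 * Real.pi), x ∉ T → 0 < Bf m P x := by
    intro x hx hxT
    have h1 := hT x ⟨hx.1.le, hx.2⟩ hxT
    have h2 := hpos x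
    unfold Bf
    positivity
  have hpi := Real.pi_pos
  have hinf : ∀ s : Set ℝ, s.Infinite → ∃ x ∈ s, x ∉ T := by
    intro s hs
    obtain ⟨x, hx⟩ := (hs.sdiff T.finite_toSet).nonempty
    exact ⟨x, hx.1, fun h => hx.2 (by simpa using h)⟩
  have hIoo : ∀ x ∈ Set.Ioo 0 (2 * Real.pi), 0 ≤ Bf m P x := by
    intro x hx
    by_contra hneg
    push Not at hneg
    have hmem : {y | Bf m P y < 0} ∩ Set.Ioo 0 (2 * Real.pi) ∈ nhds x :=
      Filter.inter_mem (hB.sm.continuous.continuousAt.eventually_lt continuousAt_const hneg)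
        (Ioo_mem_nhds hx.1 hx.2)
    obtain ⟨y, hy, hyT⟩ := hinf _ (infinite_of_mem_nhds x hmem)
    have := key y hy.2 hyT
    have h2 : Bf m P y < 0 := hy.1
    linarith
  constructor
  · intro x
    have hp : Function.Periodic (Bf m P) (2 * Real.pi) := hB.per
    obtain ⟨y, hy, hxy⟩ := hp.exists_mem_Ico₀ (by positivity) x
    rw [hxy]
    have hcl : IsClosed {y | 0 ≤ Bf m P y} := isClosed_le continuous_const hB.sm.continuous
    have h1 : Set.Ioo 0 (2 * Real.pi) ⊆ {y | 0 ≤ Bf m P y} := hIoo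
    have h2 := closure_minimal h1 hcl
    rw [closure_Ioo (by positivity)] at h2
    exact h2 ⟨hy.1, hy.2.le⟩
  · obtain ⟨y, hy, hyT⟩ := hinf _ (Set.Ioo_infinite (show (0:ℝ) < 2 * Real.pi by positivity))
    exact ⟨y, hy, key y hy hyT⟩


lemma vec_contDiff {k : ℕ} {u v w : ℝ × ℝ → ℝ} (hu : ContDiff ℝ k u) (hv : ContDiff ℝ k v)
    (hw : ContDiff ℝ k w) : ContDiff ℝ ((k : ℕ∞) : WithTop ℕ∞) (fun p => ![u p, v p, w p]) := by
  have hu' : ContDiff ℝ ((k : ℕ∞) : WithTop ℕ∞) u := by exact_mod_cast hu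
  have hv' : ContDiff ℝ ((k : ℕ∞) : WithTop ℕ∞) v := by exact_mod_cast hv
  have hw' : ContDiff ℝ ((k : ℕ∞) : WithTop ℕ∞) w := by exact_mod_cast hw
  rw [contDiff_pi]
  intro i
  fin_cases i
  · simpa using hu'
  · simpa using hv'
  · simpa using hw'

lemma vds_vec {u v w : ℝ × ℝ → ℝ} {p : ℝ × ℝ} (hu : DifferentiableAt ℝ u p)
    (hv : DifferentiableAt ℝ v p) (hw : DifferentiableAt ℝ w p) :
    vds (fun p => ![u p, v p, w p]) p = ![Ds u p, Ds v p, Ds w p] := by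
  funext i
  fin_cases i
  · exact pds_eq_s4 hu
  · exact pds_eq_s4 hv
  · exact pds_eq_s4 hw

lemma vdt_vec {u v w : ℝ × ℝ → ℝ} {p : ℝ × ℝ} (hu : DifferentiableAt ℝ u p)
    (hv : DifferentiableAt ℝ v p) (hw : DifferentiableAt ℝ w p) :
    vdt (fun p => ![u p, v p, w p]) p = ![Dt u p, Dt v p, Dt w p] := by
  funext i
  fin_cases i
  · exact pdt_eq_s4 hu
  · exact pdt_eq_s4 hv
  · exact pdt_eq_s4 hw

lemma Ds_add {u v : ℝ × ℝ → ℝ} {p : ℝ × ℝ} (hu : DifferentiableAt ℝ u p)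
    (hv : DifferentiableAt ℝ v p) : Ds (fun p => u p + v p) p = Ds u p + Ds v p := by
  unfold Ds
  rw [fderiv_fun_add hu hv]; rfl

lemma Dt_add {u v : ℝ × ℝ → ℝ} {p : ℝ × ℝ} (hu : DifferentiableAt ℝ u p)
    (hv : DifferentiableAt ℝ v p) : Dt (fun p => u p + v p) p = Dt u p + Dt v p := by
  unfold Dt
  rw [fderiv_fun_add hu hv]; rfl

/-- Theorem "Homogeneous1".
If the spectral quantities `b₁, b₂` of the graph of a homogeneous function of order `m ≥ 2`
with nonnegative curvature satisfy `b₁ − b₂ ∉ πℤ` and `(2m−1)b₁ − b₂ ∉ πℤ`, then for every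
`k` there is a nontrivial infinitesimal bending of order 2 with `C^k` bending fields. -/
theorem homogeneous_graph_second_order_bending
    (m : ℝ) (hm : 2 ≤ m)
    (P : ℝ → ℝ) (hP : ContDiff ℝ (⊤ : ℕ∞) P)
    (hper : ∀ θ, P (θ + 2 * Real.pi) = P θ) (hPpos : ∀ θ, 0 < P θ)
    (z : ℝ × ℝ → ℝ)
    (hz : ∀ r : ℝ, 0 < r → ∀ θ : ℝ, z (r * Real.cos θ, r * Real.sin θ) = r ^ m * P θ)
    (hzsm : ContDiffOn ℝ (⊤ : ℕ∞) z {p : ℝ × ℝ | p ≠ 0})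
    (hcurv : ∃ T : Finset ℝ, ∀ θ ∈ Set.Ico (0 : ℝ) (2 * Real.pi), θ ∉ T →
      0 < m ^ 2 * P θ ^ 2 + m * P θ * deriv (deriv P) θ - (m - 1) * (deriv P θ) ^ 2)
    (Zss Zst Ztt : ℝ → ℝ)
    (hZss : ∀ θ, Zss θ = pds (pds z) (Real.cos θ, Real.sin θ))
    (hZst : ∀ θ, Zst θ = pdt (pds z) (Real.cos θ, Real.sin θ))
    (hZtt : ∀ θ, Ztt θ = pdt (pdt z) (Real.cos θ, Real.sin θ))
    (b c1 c2 : ℝ → ℝ)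
    (hb : ∀ θ, b θ = Real.sqrt (Ztt θ * Zss θ - Zst θ ^ 2) / ((m ^ 2 - m) * P θ))
    (hc1 : ∀ θ, c1 θ = Zst θ / Real.sqrt (Ztt θ * Zss θ - Zst θ ^ 2)
        * deriv (fun τ => Real.log (Ztt τ)) θ)
    (hc2 : ∀ θ, c2 θ = Zst θ / Real.sqrt (Ztt θ * Zss θ - Zst θ ^ 2)
        * deriv (fun τ => Real.log (Zss τ)) θ)
    (hc1L1 : MeasureTheory.IntegrableOn c1 (Set.Icc 0 (2 * Real.pi)))
    (hc2L1 : MeasureTheory.IntegrableOn c2 (Set.Icc 0 (2 * Real.pi)))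
    (b1 b2 : ℝ)
    (hb1 : b1 = ∫ θ in (0 : ℝ)..(2 * Real.pi), b θ)
    (hb2 : b2 = -(1 / 4) * ∫ θ in (0 : ℝ)..(2 * Real.pi), (c1 θ - c2 θ))
    (hnr1 : ¬ ∃ a : ℤ, b1 - b2 = Real.pi * a)
    (hnr2 : ¬ ∃ a : ℤ, (2 * m - 1) * b1 - b2 = Real.pi * a) :
    ∀ k : ℕ, ∃ U1 U2 : ℝ × ℝ → Fin 3 → ℝ,
      ContDiff ℝ (k : ℕ∞) U1 ∧ ContDiff ℝ (k : ℕ∞) U2 ∧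
      (∀ p : ℝ × ℝ, p ≠ 0 →
        (dot3 (vds (fun q : ℝ × ℝ => ![q.1, q.2, z q]) p) (vds U1 p) = 0 ∧
         dot3 (vds (fun q : ℝ × ℝ => ![q.1, q.2, z q]) p) (vdt U1 p)
           + dot3 (vdt (fun q : ℝ × ℝ => ![q.1, q.2, z q]) p) (vds U1 p) = 0 ∧
         dot3 (vdt (fun q : ℝ × ℝ => ![q.1, q.2, z q]) p) (vdt U1 p) = 0) ∧
        (dot3 (vds (fun q : ℝ × ℝ => ![q.1, q.2, z q]) p) (vds U2 p)
           = -(dot3 (vds U1 p) (vds U1 p)) ∧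
         dot3 (vds (fun q : ℝ × ℝ => ![q.1, q.2, z q]) p) (vdt U2 p)
           + dot3 (vdt (fun q : ℝ × ℝ => ![q.1, q.2, z q]) p) (vds U2 p)
           = -(dot3 (vds U1 p) (vdt U1 p) + dot3 (vdt U1 p) (vds U1 p)) ∧
         dot3 (vdt (fun q : ℝ × ℝ => ![q.1, q.2, z q]) p) (vdt U2 p)
           = -(dot3 (vdt U1 p) (vdt U1 p)))) ∧
      ¬ ∃ (A B : Fin 3 → ℝ), ∀ p : ℝ × ℝ, U1 p = cross3 A ![p.1, p.2, z p] + B := by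
  intro k
  have hPS : SP P := ⟨hP, hper⟩
  obtain ⟨hB0, x0, hx0, hBx⟩ := curv_nonneg hm hPS hPpos hcurv
  have hzP : PC m P (fun _ => 0) z := by
    intro r hr θ
    rw [hz r hr θ]; ring
  obtain ⟨l, hl, f, α, β, H1, x1, hx1⟩ := bf_eigen hm hPS hPpos hB0 hx0 hBx ((k : ℝ) + m + 1)
  have hk0 : (0 : ℝ) ≤ k := Nat.cast_nonneg k
  have hf := H1.hf1
  have hα := H1.hα1
  have hβ := H1.hβ1
  have rz : rotu (fun _ => 0) (fun _ => 0) = fun _ => 0 := by funext x; simp [rotu]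
  have rz' : rotv (fun _ => 0) (fun _ => 0) = fun _ => 0 := by funext x; simp [rotv]
  have hU := rotu_SP hα hβ
  have hV := rotv_SP hα hβ
  obtain ⟨U, hUd⟩ : ∃ U, U = rotu α β := ⟨_, rfl⟩
  obtain ⟨V, hVd⟩ : ∃ V, V = rotv α β := ⟨_, rfl⟩
  rw [← hUd] at hU
  rw [← hVd] at hV
  have h0 : SP (fun _ => 0) := SP.const 0
  have a1 : SP (fun x => -((l + m - 1) ^ 2 * (U x * U x + V x * V x))) :=
    (((hU.mul hU).add (hV.mul hV)).cmul _).neg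
  have a2 : SP (fun x => -(2 * (l + m - 1) * (U x * deriv U x + V x * deriv V x))) :=
    (((hU.mul hU.deriv).add (hV.mul hV.deriv)).cmul _).neg
  have a3 : SP (fun x => -(deriv U x * deriv U x + deriv V x * deriv V x)) :=
    ((hU.deriv.mul hU.deriv).add (hV.deriv.mul hV.deriv)).neg
  have b1' : SP (fun x => -(l ^ 2 * (f x * f x))) := ((hf.mul hf).cmul _).neg
  have b2' : SP (fun x => -(2 * l * (f x * deriv f x))) := ((hf.mul hf.deriv).cmul _).neg
  have b3' : SP (fun x => -(deriv f x * deriv f x)) := (hf.deriv.mul hf.deriv).neg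
  obtain ⟨f0, f1, α0, α1, β0, β1, H2⟩ := bf_solve (d := 2 * (l + m - 2)) (μ := 2 * l + m - 2) hm
    (by linarith) (by ring) hPS hPpos hB0 hx0 hBx (by linarith) a1 a2 a3
  obtain ⟨f0', f1', α0', α1', β0', β1', H3⟩ := bf_solve (d := 2 * l - 2) (μ := 2 * l - m) hm
    (by linarith) (by ring) hPS hPpos hB0 hx0 hBx (by linarith) b1' b2' b3'
  have pu1 := mkp_PC (l + m - 2 + 1) hU h0
  have pv1 := mkp_PC (l + m - 2 + 1) hV h0
  have pw1 := mkp_PC l hf h0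
  have pu2 := mkp_PC (2 * (l + m - 2) + 1) (rotu_SP H2.hα1 H2.hβ1) (rotu_SP H2.hα0 H2.hβ0)
  have pv2 := mkp_PC (2 * (l + m - 2) + 1) (rotv_SP H2.hα1 H2.hβ1) (rotv_SP H2.hα0 H2.hβ0)
  have pw2 := mkp_PC (2 * l + m - 2) H2.hf1 H2.hf0
  have pu3 := mkp_PC (2 * l - 2 + 1) (rotu_SP H3.hα1 H3.hβ1) (rotu_SP H3.hα0 H3.hβ0)
  have pv3 := mkp_PC (2 * l - 2 + 1) (rotv_SP H3.hα1 H3.hβ1) (rotv_SP H3.hα0 H3.hβ0)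
  have pw3 := mkp_PC (2 * l - m) H3.hf1 H3.hf0
  have cu1 := pc_contDiff k (by linarith) hU h0 pu1 (mkp_zero (by linarith) _ _)
  have cv1 := pc_contDiff k (by linarith) hV h0 pv1 (mkp_zero (by linarith) _ _)
  have zw1 : mkp l f (fun _ => 0) 0 = 0 := mkp_zero (by linarith) _ _
  have cw1 := pc_contDiff k (by linarith) hf h0 pw1 zw1
  have cu2 := pc_contDiff k (by linarith) (rotu_SP H2.hα1 H2.hβ1) (rotu_SP H2.hα0 H2.hβ0) pu2
    (mkp_zero (by linarith) _ _)
  have cv2 := pc_contDiff k (by linarith) (rotv_SP H2.hα1 H2.hβ1) (rotv_SP H2.hα0 H2.hβ0) pv2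
    (mkp_zero (by linarith) _ _)
  have cw2 := pc_contDiff k (by linarith) H2.hf1 H2.hf0 pw2 (mkp_zero (by linarith) _ _)
  have cu3 := pc_contDiff k (by linarith) (rotu_SP H3.hα1 H3.hβ1) (rotu_SP H3.hα0 H3.hβ0) pu3
    (mkp_zero (by linarith) _ _)
  have cv3 := pc_contDiff k (by linarith) (rotv_SP H3.hα1 H3.hβ1) (rotv_SP H3.hα0 H3.hβ0) pv3
    (mkp_zero (by linarith) _ _)
  have cw3 := pc_contDiff k (by linarith) H3.hf1 H3.hf0 pw3 (mkp_zero (by linarith) _ _)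
  generalize mkp (l + m - 2 + 1) U (fun _ => 0) = u1 at *
  generalize mkp (l + m - 2 + 1) V (fun _ => 0) = v1 at *
  generalize mkp l f (fun _ => 0) = w1 at *
  generalize mkp (2 * (l + m - 2) + 1) (rotu α1 β1) (rotu α0 β0) = u2 at *
  generalize mkp (2 * (l + m - 2) + 1) (rotv α1 β1) (rotv α0 β0) = v2 at *
  generalize mkp (2 * l + m - 2) f1 f0 = w2 at *
  generalize mkp (2 * l - 2 + 1) (rotu α1' β1') (rotu α0' β0') = u3 at *
  generalize mkp (2 * l - 2 + 1) (rotv α1' β1') (rotv α0' β0') = v3 at *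
  generalize mkp (2 * l - m) f1' f0' = w3 at *
  refine ⟨fun p => ![u1 p, v1 p, w1 p], fun p => ![u2 p + u3 p, v2 p + v3 p, w2 p + w3 p],
    vec_contDiff cu1 cv1 cw1, vec_contDiff (cu2.add cu3) (cv2.add cv3) (cw2.add cw3), ?_, ?_⟩
  · intro p hp
    have du1 := pc_diff pu1 hU h0 hp
    have dv1 := pc_diff pv1 hV h0 hp
    have dw1 := pc_diff pw1 hf h0 hp
    have du2 := pc_diff pu2 (rotu_SP H2.hα1 H2.hβ1) (rotu_SP H2.hα0 H2.hβ0) hp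
    have dv2 := pc_diff pv2 (rotv_SP H2.hα1 H2.hβ1) (rotv_SP H2.hα0 H2.hβ0) hp
    have dw2 := pc_diff pw2 H2.hf1 H2.hf0 hp
    have du3 := pc_diff pu3 (rotu_SP H3.hα1 H3.hβ1) (rotu_SP H3.hα0 H3.hβ0) hp
    have dv3 := pc_diff pv3 (rotv_SP H3.hα1 H3.hβ1) (rotv_SP H3.hα0 H3.hβ0) hp
    have dw3 := pc_diff pw3 H3.hf1 H3.hf0 hp
    have dz := pc_diff hzP hPS h0 hp
    have s1 : Ds (fun q : ℝ × ℝ => q.1) p = 1 := by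
      unfold Ds; rw [(hasFDerivAt_fst (𝕜 := ℝ)).fderiv]; rfl
    have s2 : Ds (fun q : ℝ × ℝ => q.2) p = 0 := by
      unfold Ds; rw [(hasFDerivAt_snd (𝕜 := ℝ)).fderiv]; rfl
    have t1 : Dt (fun q : ℝ × ℝ => q.1) p = 0 := by
      unfold Dt; rw [(hasFDerivAt_fst (𝕜 := ℝ)).fderiv]; rfl
    have t2 : Dt (fun q : ℝ × ℝ => q.2) p = 1 := by
      unfold Dt; rw [(hasFDerivAt_snd (𝕜 := ℝ)).fderiv]; rfl
    rw [vds_vec differentiableAt_fst differentiableAt_snd dz,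
      vdt_vec differentiableAt_fst differentiableAt_snd dz, vds_vec du1 dv1 dw1,
      vdt_vec du1 dv1 dw1, vds_vec (du2.fun_add du3) (dv2.fun_add dv3) (dw2.fun_add dw3),
      vdt_vec (du2.fun_add du3) (dv2.fun_add dv3) (dw2.fun_add dw3), Ds_add du2 du3, Ds_add dv2 dv3,
      Ds_add dw2 dw3, Dt_add du2 du3, Dt_add dv2 dv3, Dt_add dw2 dw3, s1, s2, t1, t2]
    simp only [dot3, Matrix.cons_val_zero, Matrix.cons_val_one, Matrix.cons_val]
    obtain ⟨r, hr, -, θ, hpθ⟩ := polar_rep hp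
    obtain ⟨A1, A2, A3⟩ := solve_cart H1 hPS (by ring) hzP (by rw [rz, ← hUd]; exact pu1)
      (by rw [rz', ← hVd]; exact pv1) pw1 hr θ hpθ
    obtain ⟨B1, B2, B3⟩ := solve_cart H2 hPS (by ring) hzP pu2 pv2 pw2 hr θ hpθ
    obtain ⟨C1, C2, C3⟩ := solve_cart H3 hPS (by ring) hzP pu3 pv3 pw3 hr θ hpθ
    have eu := pc_Ds pu1 hU h0 hr θ
    have eu' := pc_Dt pu1 hU h0 hr θ
    have ev := pc_Ds pv1 hV h0 hr θ
    have ev' := pc_Dt pv1 hV h0 hr θ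
    have ew := pc_Ds pw1 hf h0 hr θ
    have ew' := pc_Dt pw1 hf h0 hr θ
    rw [← hpθ] at eu eu' ev ev' ew ew'
    simp only [csF, csG, ctF, ctG, deriv_const'] at eu eu' ev ev' ew ew'
    have hpow1 : r ^ (2 * (l + m - 2)) = r ^ (l + m - 2 + 1 - 1) * r ^ (l + m - 2 + 1 - 1) := by
      rw [← Real.rpow_add hr]; congr 1; ring
    have hpow2 : r ^ (2 * l - 2) = r ^ (l - 1) * r ^ (l - 1) := by
      rw [← Real.rpow_add hr]; congr 1; ring
    rw [hpow1] at B1 B2 B3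
    rw [hpow2] at C1 C2 C3
    refine ⟨⟨?_, ?_, ?_⟩, ?_, ?_, ?_⟩
    · linear_combination A1
    · linear_combination A2
    · linear_combination A3
    · rw [eu, ev, ew]
      linear_combination B1 + C1
    · rw [eu, ev, ew, eu', ev', ew']
      linear_combination B2 + C2
    · rw [eu', ev', ew']
      linear_combination B3 + C3
  · rintro ⟨A, B, hAB⟩
    have e : ∀ p : ℝ × ℝ, w1 p = A 0 * p.2 - A 1 * p.1 + B 2 := by
      intro p
      have := congrFun (hAB p) 2
      simpa [cross3] using this
    have hB2 : B 2 = 0 := by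
      have := e 0
      rw [zw1] at this
      simp at this
      linarith
    have e1 := e (1 * Real.cos x1, 1 * Real.sin x1)
    have e2 := e (2 * Real.cos x1, 2 * Real.sin x1)
    rw [pw1 1 one_pos, hB2] at e1
    rw [pw1 2 two_pos, hB2] at e2
    simp only [Real.one_rpow] at e1
    have h2 : (2 : ℝ) < 2 ^ l := by
      have := Real.rpow_lt_rpow_of_exponent_lt (x := 2) one_lt_two (show (1 : ℝ) < l by linarith)
      rwa [Real.rpow_one] at this
    have h3 : (2 ^ l - 2) * f x1 = 0 := by linear_combination e2 - 2 * e1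
    rcases mul_eq_zero.1 h3 with h | h
    · linarith
    · exact hx1 h
end
end

section
/- Let m, n be positive integers, let h be a holomorphic function on the disc D(0,R) ⊂ ℂ, and let D denote the operator (Df)(z) = z^{−m} f''(z). Define H_j(X^{m+2}) = (1/A_j^n) D^j[h(X^{m+2})] and M(X,Y) = Σ_{j≥0} H_j(X^{m+2}) Y^{j(n+2)}. Then with C = min{((m+1)/(4(m+2)))^{1/(m+2)}, ((n+2)(n+1)/(4(m+2)²))^{1/(n+2)}}, the series defining M converges and M is holomorphic on the polydisc |X| < C·R^{1/(m+2)}, |Y| < C·R^{1/(n+2)}. In particular, if h is an entire function on ℂ, then M is an entire function on ℂ². -/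
open scoped BigOperators

noncomputable section

/-- `A_β^α = ∏_{k=1}^β [k(α+2)−1][k(α+2)]`, with `A_0^α = 1`. -/
def Acoef (α β : ℕ) : ℕ := ∏ k ∈ Finset.Icc 1 β, ((k * (α + 2) - 1) * (k * (α + 2)))

/-- The operator `D f (z) = f''(z) / z^m`. -/
def Dop (m : ℕ) (f : ℂ → ℂ) : ℂ → ℂ := fun z => deriv (deriv f) z / z ^ m

/-- The constant `C(m,n)` of the lemma. -/
def Cbound (m n : ℕ) : ℝ :=
  min (((m + 1 : ℝ) / (4 * (m + 2))) ^ ((1 : ℝ) / (m + 2)))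
    ((((n + 2 : ℝ) * (n + 1)) / (4 * (m + 2) ^ 2)) ^ ((1 : ℝ) / (n + 2)))

lemma hs_congr {f g : ℕ → ℂ} {a b : ℂ} (hg : HasSum g b) (h1 : ∀ k, f k = g k) (h2 : a = b) :
    HasSum f a := by
  rw [show f = g from funext h1, h2]
  exact hg

/-- termwise differentiation of a (lacunary) power series -/
lemma termwise_deriv (b : ℕ → ℂ) (e : ℕ → ℕ) (ρ : ℝ) (g : ℂ → ℂ)
    (H : ∀ x : ℂ, ‖x‖ < ρ → HasSum (fun k => b k * x ^ e k) (g x)) :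
    ∀ x : ℂ, ‖x‖ < ρ → HasSum (fun k => (b k * e k) * x ^ (e k - 1)) (deriv g x) := by
  intro x hx
  obtain ⟨r, hxr, hr⟩ := exists_between hx
  have hr0 : 0 ≤ r := (norm_nonneg x).trans hxr.le
  have hs : Summable (fun k => ‖b k * (r : ℂ) ^ e k‖) :=
    ((H r (by simpa [abs_of_nonneg hr0] using hr)).summable).norm
  have hU : IsOpen (Metric.ball (0 : ℂ) r) := Metric.isOpen_ball
  have hxU : x ∈ Metric.ball (0 : ℂ) r := by simpa using hxr
  have key := Complex.hasSum_deriv_of_summable_norm (F := fun k (x : ℂ) => b k * x ^ e k)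
    hs (fun i => by fun_prop) hU
    (fun i w hw => by
      have hw' : ‖w‖ < r := by simpa using hw
      simp only [norm_mul, norm_pow, Complex.norm_real, Real.norm_eq_abs, abs_of_nonneg hr0]
      gcongr) hxU
  have heq : (fun w => ∑' k, b k * w ^ e k) =ᶠ[nhds x] g := by
    filter_upwards [hU.mem_nhds hxU] with w hw
    exact (H w (lt_trans (by simpa using hw) hr)).tsum_eq
  rw [heq.deriv_eq] at key
  refine hs_congr key (fun k => ?_) rfl
  simp [mul_assoc]

/-- the factor produced by one application of `D` on `X^(k(m+2))` -/
def cfac (m k : ℕ) : ℕ := (k * (m + 2)) * (k * (m + 2) - 1)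

/-- the factor produced by `j` applications -/
def Wfac (m k j : ℕ) : ℕ := ∏ i ∈ Finset.range j, cfac m (k + i + 1)

/-- Taylor coefficients at 0 -/
def tay (h : ℂ → ℂ) (k : ℕ) : ℂ := ((k.factorial : ℂ))⁻¹ * iteratedDeriv k h 0

lemma Dop_iter (m : ℕ) (R : ℝ) (hR : 0 < R) (h : ℂ → ℂ)
    (hh : DifferentiableOn ℂ h (Metric.ball 0 R)) (ρ : ℝ)
    (hρ : ∀ x : ℂ, ‖x‖ < ρ → ‖x‖ ^ (m + 2) < R) (j : ℕ) :
    ∃ g : ℂ → ℂ, ∀ x : ℂ, ‖x‖ < ρ →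
      HasSum (fun k => (tay h (k + j) * Wfac m k j) * x ^ (k * (m + 2))) (g x) ∧
      (x ≠ 0 → (Dop m)^[j] (fun X => h (X ^ (m + 2))) x = g x) := by
  induction j with
  | zero =>
    refine ⟨fun X => h (X ^ (m + 2)), fun x hx => ⟨?_, fun _ => rfl⟩⟩
    have hz : x ^ (m + 2) ∈ Metric.ball (0 : ℂ) R := by simpa using hρ x hx
    have := Complex.hasSum_taylorSeries_on_ball hh hz
    refine hs_congr this (fun k => ?_) rfl
    simp [tay, Wfac, pow_mul', smul_eq_mul]
    ring
  | succ j ih =>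
    obtain ⟨g, hg⟩ := ih
    refine ⟨fun x => if x = 0 then tay h (0 + (j+1)) * Wfac m 0 (j+1)
      else deriv (deriv g) x / x ^ m, fun x hx => ?_⟩
    by_cases hx0 : x = 0
    · subst hx0
      refine ⟨?_, fun h => absurd rfl h⟩
      simp only [if_true]
      convert hasSum_single 0 ?_ using 1
      · simp
      · intro k hk
        simp [hk]
    simp only [hx0, if_false]
    constructor
    · have h1 := termwise_deriv _ _ ρ g (fun x hx => (hg x hx).1)
      have h2 := (termwise_deriv _ _ ρ _ h1 x hx).div_const (x ^ m)
      rw [← hasSum_nat_add_iff' 1] at h2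
      refine hs_congr h2 (fun k => ?_) ?_
      · have e1 : (k + 1) * (m + 2) - 1 - 1 = k * (m + 2) + m := by
          have : (k + 1) * (m + 2) = k * (m + 2) + m + 2 := by ring
          omega
        rw [e1, pow_add]
        have e2 : Wfac m k (j + 1) = Wfac m (k + 1) j * cfac m (k + 1) := by
          unfold Wfac
          rw [Finset.prod_range_succ']
          congr 1
          refine Finset.prod_congr rfl fun i _ => ?_
          congr 1
          ring
        rw [e2, cfac, show k + 1 + j = k + (j + 1) by ring]
        field_simp
        push_cast
        ring
      · simp
    · intro _
      rw [Function.iterate_succ_apply', Dop]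
      have heq : (Dop m)^[j] (fun X => h (X ^ (m + 2))) =ᶠ[nhds x] g := by
        have hU : IsOpen {y : ℂ | ‖y‖ < ρ ∧ y ≠ 0} :=
          (isOpen_lt continuous_norm continuous_const).inter isOpen_ne
        filter_upwards [hU.mem_nhds ⟨hx, hx0⟩] with y hy
        exact (hg y hy.1).2 hy.2
      rw [heq.deriv.deriv_eq]

lemma Acoef_ge (n j : ℕ) : ((n + 2) * (n + 1)) ^ j * j.factorial ^ 2 ≤ Acoef n j := by
  induction j with
  | zero => simp [Acoef]
  | succ j ih =>
    have : Acoef n (j + 1) = Acoef n j * (((j + 1) * (n + 2) - 1) * ((j + 1) * (n + 2))) := by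
      unfold Acoef
      rw [Finset.prod_Icc_succ_top (by omega)]
    rw [this]
    have h1 : (j + 1) * (n + 1) ≤ (j + 1) * (n + 2) - 1 := by
      have : (j + 1) * (n + 2) = (j + 1) * (n + 1) + j + 1 := by ring
      omega
    calc _ = (((n + 2) * (n + 1)) ^ j * j.factorial ^ 2) *
          (((j + 1) * (n + 1)) * ((j + 1) * (n + 2))) := by
          rw [Nat.factorial_succ]; ring
      _ ≤ _ := by gcongr

lemma Wfac_le (m k j : ℕ) :
    Wfac m k j * k.factorial ^ 2 ≤ ((m + 2) ^ 2) ^ j * (k + j).factorial ^ 2 := by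
  induction j with
  | zero => simp [Wfac]
  | succ j ih =>
    have : Wfac m k (j + 1) = Wfac m k j * cfac m (k + j + 1) := by
      unfold Wfac
      rw [Finset.prod_range_succ]
    rw [this]
    have h1 : cfac m (k + j + 1) ≤ ((k + j + 1) * (m + 2)) ^ 2 := by
      rw [cfac, sq]
      exact Nat.mul_le_mul_left _ (Nat.sub_le _ _)
    calc _ = (Wfac m k j * k.factorial ^ 2) * cfac m (k + j + 1) := by ring
      _ ≤ (((m + 2) ^ 2) ^ j * (k + j).factorial ^ 2) * ((k + j + 1) * (m + 2)) ^ 2 := by gcongr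
      _ = _ := by rw [← add_assoc, Nat.factorial_succ]; ring

lemma Wfac_bound (m n k j : ℕ) :
    (Wfac m k j : ℝ) / Acoef n j ≤
      4 ^ k * (4 * ((m + 2) ^ 2 / ((n + 2) * (n + 1)) : ℝ)) ^ j := by
  have hA : (((n + 2) * (n + 1)) ^ j * j.factorial ^ 2 : ℝ) ≤ Acoef n j := by
    exact_mod_cast Acoef_ge n j
  have hW : (Wfac m k j * k.factorial ^ 2 : ℝ) ≤ ((m + 2) ^ 2) ^ j * (k + j).factorial ^ 2 := by
    exact_mod_cast Wfac_le m k j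
  have hc : ((k + j).factorial : ℝ) = (k + j).choose j * k.factorial * j.factorial := by
    exact_mod_cast (Nat.add_choose_mul_factorial_mul_factorial k j).symm
  have hc2 : ((k + j).choose j : ℝ) ≤ 2 ^ (k + j) := by
    exact_mod_cast Nat.choose_le_two_pow _ _
  have hk : (0 : ℝ) < k.factorial := by exact_mod_cast Nat.factorial_pos k
  have hj : (0 : ℝ) < j.factorial := by exact_mod_cast Nat.factorial_pos j
  have hN : (0 : ℝ) < ((n + 2) * (n + 1)) ^ j := by positivity
  have hApos : (0 : ℝ) < Acoef n j := lt_of_lt_of_le (by positivity) hA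
  have hW2 : (Wfac m k j : ℝ) ≤ ((m + 2) ^ 2) ^ j * ((2 ^ (k + j)) ^ 2 * j.factorial ^ 2) := by
    have : (Wfac m k j * k.factorial ^ 2 : ℝ) ≤
        (((m + 2) ^ 2) ^ j * ((2 ^ (k + j)) ^ 2 * j.factorial ^ 2)) * k.factorial ^ 2 := by
      refine hW.trans ?_
      rw [hc]
      calc _ = ((m + 2 : ℝ) ^ 2) ^ j * (((k + j).choose j : ℝ) ^ 2 * j.factorial ^ 2)
              * k.factorial ^ 2 := by ring
        _ ≤ _ := by gcongr
    exact le_of_mul_le_mul_right this (by positivity)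
  rw [div_le_iff₀ hApos]
  refine hW2.trans ?_
  calc _ = 4 ^ k * (4 * ((m + 2) ^ 2 / ((n + 2) * (n + 1)) : ℝ)) ^ j *
        (((n + 2) * (n + 1)) ^ j * j.factorial ^ 2) := by
        rw [mul_pow 4, div_pow, ← pow_mul 2, mul_comm (k + j) 2, pow_mul 2, pow_add]
        field_simp
        norm_num
    _ ≤ _ := by gcongr

/-- double power series coefficients, index `(j,k)` -/
def cf (m n : ℕ) (h : ℂ → ℂ) (x : ℕ × ℕ) : ℂ :=
  (1 / (Acoef n x.1 : ℂ)) * (tay h (x.2 + x.1) * Wfac m x.2 x.1)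

lemma cf_summable (m n : ℕ) (R : ℝ) (hR : 0 < R) (h : ℂ → ℂ)
    (hh : DifferentiableOn ℂ h (Metric.ball 0 R)) (s t : ℝ) (hs : 0 ≤ s) (ht : 0 ≤ t)
    (hsR : 4 * s < R) (htR : 4 * ((m + 2) ^ 2 / ((n + 2) * (n + 1)) : ℝ) * t < R) :
    Summable (fun x => ‖cf m n h x‖ * (t ^ x.1 * s ^ x.2)) := by
  obtain ⟨ρ, hρ1, hρ2⟩ := exists_between (max_lt hsR htR)
  set q : ℝ := 4 * ((m + 2) ^ 2 / ((n + 2) * (n + 1)) : ℝ) with hq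
  have hq0 : 0 ≤ q := by positivity
  have hρs : 4 * s < ρ := (le_max_left _ _).trans_lt hρ1
  have hρt : q * t < ρ := (le_max_right _ _).trans_lt hρ1
  have hρ0 : 0 < ρ := lt_of_le_of_lt (by positivity) hρs
  have hsum : Summable (fun k => ‖tay h k * (ρ : ℂ) ^ k‖) := by
    have hz : (ρ : ℂ) ∈ Metric.ball (0 : ℂ) R := by simpa [abs_of_pos hρ0] using hρ2
    have := (Complex.hasSum_taylorSeries_on_ball hh hz).summable.norm
    refine this.congr fun k => ?_
    congr 1
    simp [tay, smul_eq_mul]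
    ring
  have hB : ∀ k, ‖tay h k‖ * ρ ^ k ≤ ∑' k, ‖tay h k * (ρ : ℂ) ^ k‖ := by
    intro k
    have := hsum.le_tsum k (fun _ _ => norm_nonneg _)
    simpa [abs_of_pos hρ0] using this
  set B := ∑' k, ‖tay h k * (ρ : ℂ) ^ k‖
  have h1 : Summable (fun j : ℕ => (q * t / ρ) ^ j) :=
    summable_geometric_of_lt_one (by positivity) (by rwa [div_lt_one hρ0])
  have h2 : Summable (fun j : ℕ => (4 * s / ρ) ^ j) :=
    summable_geometric_of_lt_one (by positivity) (by rwa [div_lt_one hρ0])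
  have h3 := (h1.mul_of_nonneg h2 (fun _ => by positivity) (fun _ => by positivity)).mul_left B
  refine Summable.of_nonneg_of_le (fun _ => by positivity) ?_ h3
  rintro ⟨j, k⟩
  have hn : ‖cf m n h (j, k)‖ = ‖tay h (k + j)‖ * ((Wfac m k j : ℝ) / Acoef n j) := by
    simp [cf]
    ring
  rw [hn]
  calc _ ≤ ‖tay h (k + j)‖ * (4 ^ k * q ^ j) * (t ^ j * s ^ k) := by
        gcongr
        exact Wfac_bound m n k j
    _ = (‖tay h (k + j)‖ * ρ ^ (k + j)) * ((q * t / ρ) ^ j * (4 * s / ρ) ^ k) := by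
        clear_value q
        rw [div_pow, div_pow, pow_add]
        field_simp
        ring
    _ ≤ _ := by
        gcongr
        exact hB _

lemma pow_deriv_bound (k : ℕ) (a s : ℝ) (ha : 0 ≤ a) (has : a < s) :
    k * a ^ (k - 1) ≤ s ^ k / (s - a) := by
  rw [le_div_iff₀ (by linarith)]
  have hs : 0 < s := by linarith
  cases k with
  | zero => simp
  | succ k =>
    have : ((k + 1 : ℕ) : ℝ) * a ^ k * (s - a) + a ^ (k + 1) ≤ s ^ (k + 1) := by
      induction k with
      | zero => simp
      | succ k ih =>
        have h1 : a ^ (k + 1) ≤ s ^ (k + 1) := by gcongr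
        have h2 : 0 ≤ (s - a) * a ^ k * (s - a) * (k + 1) := by
          have : 0 ≤ s - a := by linarith
          positivity
        have h3 := mul_le_mul_of_nonneg_left ih ha
        have h4 := mul_le_mul_of_nonneg_left h1 (show 0 ≤ s - a by linarith)
        push_cast at *
        simp only [pow_succ] at *
        linarith
    have h5 : 0 ≤ a ^ (k + 1) := by positivity
    simp only [Nat.add_sub_cancel]
    linarith

/-- a double power series is holomorphic on an open polydisc where it converges absolutely -/
lemma double_series_diff (c : ℕ × ℕ → ℂ) (s t : ℝ)
    (hsum : Summable (fun x => ‖c x‖ * (t ^ x.1 * s ^ x.2))) (p : ℂ × ℂ)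
    (hp1 : ‖p.1‖ < s) (hp2 : ‖p.2‖ < t) :
    DifferentiableAt ℂ (fun p : ℂ × ℂ => ∑' x : ℕ × ℕ, c x * (p.2 ^ x.1 * p.1 ^ x.2)) p := by
  obtain ⟨a, ha, has⟩ := exists_between hp1
  obtain ⟨b, hb, hbt⟩ := exists_between hp2
  have ha0 : 0 < a := (norm_nonneg _).trans_lt ha
  have hb0 : 0 < b := (norm_nonneg _).trans_lt hb
  have hu := hsum.mul_right (1 / (t - b) + 1 / (s - a))
  have hd : ∀ (x : ℕ × ℕ) (p : ℂ × ℂ), HasFDerivAt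
      (fun p : ℂ × ℂ => c x * (p.2 ^ x.1 * p.1 ^ x.2))
      (c x • ((p.2 ^ x.1) • ((x.2 * p.1 ^ (x.2 - 1)) • ContinuousLinearMap.fst ℂ ℂ ℂ) +
        (p.1 ^ x.2) • ((x.1 * p.2 ^ (x.1 - 1)) • ContinuousLinearMap.snd ℂ ℂ ℂ))) p := by
    intro x p
    have h1 : HasFDerivAt (fun p : ℂ × ℂ => p.1 ^ x.2)
        ((x.2 * p.1 ^ (x.2 - 1)) • ContinuousLinearMap.fst ℂ ℂ ℂ) p :=
      (hasDerivAt_pow x.2 p.1).comp_hasFDerivAt p hasFDerivAt_fst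
    have h2 : HasFDerivAt (fun p : ℂ × ℂ => p.2 ^ x.1)
        ((x.1 * p.2 ^ (x.1 - 1)) • ContinuousLinearMap.snd ℂ ℂ ℂ) p :=
      (hasDerivAt_pow x.1 p.2).comp_hasFDerivAt p hasFDerivAt_snd
    exact (h2.mul h1).const_mul (c x)
  have hopen : IsOpen (Metric.ball (0 : ℂ) a ×ˢ Metric.ball (0 : ℂ) b) :=
    Metric.isOpen_ball.prod Metric.isOpen_ball
  have hconn : IsPreconnected (Metric.ball (0 : ℂ) a ×ˢ Metric.ball (0 : ℂ) b) :=
    ((convex_ball _ _).prod (convex_ball _ _)).isPreconnected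
  have hmem : p ∈ Metric.ball (0 : ℂ) a ×ˢ Metric.ball (0 : ℂ) b := by
    simp [Set.mem_prod, ha, hb]
  refine (hasFDerivAt_tsum_of_isPreconnected hu hopen hconn (fun x p _ => hd x p) ?_
    hmem ?_ hmem).differentiableAt
  · rintro ⟨j, k⟩ ⟨u, v⟩ hx
    obtain ⟨h1, h2⟩ : ‖u‖ < a ∧ ‖v‖ < b := by simpa [Set.mem_prod] using hx
    simp only
    have hj := pow_deriv_bound j b t hb0.le hbt
    have hk := pow_deriv_bound k a s ha0.le has
    have hs0 : 0 < s := by linarith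
    have ht0 : 0 < t := by linarith
    have hfst := ContinuousLinearMap.norm_fst_le ℂ ℂ ℂ
    have hsnd := ContinuousLinearMap.norm_snd_le ℂ ℂ ℂ
    rw [norm_smul, mul_assoc]
    refine mul_le_mul_of_nonneg_left ?_ (norm_nonneg _)
    refine (norm_add_le _ _).trans ?_
    simp only [norm_smul, norm_mul, norm_pow, Complex.norm_natCast]
    calc _ ≤ t ^ j * ((k * a ^ (k - 1)) * 1) + s ^ k * ((j * b ^ (j - 1)) * 1) := by
          gcongr <;> linarith
      _ ≤ t ^ j * (s ^ k / (s - a) * 1) + s ^ k * (t ^ j / (t - b) * 1) := by gcongr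
      _ = _ := by ring
  · refine Summable.of_norm_bounded hsum fun x => ?_
    simp only [norm_mul, norm_pow]
    have ht0 : 0 ≤ t := by linarith
    gcongr

/-- the sum -/
def Mfun (m n : ℕ) (h : ℂ → ℂ) (p : ℂ × ℂ) : ℂ :=
  ∑' x : ℕ × ℕ, cf m n h x * ((p.2 ^ (n + 2)) ^ x.1 * (p.1 ^ (m + 2)) ^ x.2)

lemma Mfun_core (m n : ℕ) (R : ℝ) (hR : 0 < R) (h : ℂ → ℂ)
    (hh : DifferentiableOn ℂ h (Metric.ball 0 R)) (p : ℂ × ℂ)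
    (hp1 : 4 * ‖p.1‖ ^ (m + 2) < R)
    (hp2 : 4 * ((m + 2) ^ 2 / ((n + 2) * (n + 1)) : ℝ) * ‖p.2‖ ^ (n + 2) < R) :
    DifferentiableAt ℂ (Mfun m n h) p ∧ (p.1 ≠ 0 →
      HasSum (fun j : ℕ =>
            (1 / (Acoef n j : ℂ)) * ((Dop m)^[j] (fun X => h (X ^ (m + 2))) p.1)
              * p.2 ^ (j * (n + 2)))
          (Mfun m n h p)) := by
  constructor
  · have hq0 : (0 : ℝ) < 4 * ((m + 2) ^ 2 / ((n + 2) * (n + 1))) := by positivity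
    have e1 : ‖p.1‖ ^ (m + 2) < R / 4 := by rw [lt_div_iff₀ (by norm_num)]; linarith
    have e2 : ‖p.2‖ ^ (n + 2) < R / (4 * ((m + 2) ^ 2 / ((n + 2) * (n + 1)))) := by
      rw [lt_div_iff₀ hq0]; linarith
    obtain ⟨s, hs1, hs2⟩ := exists_between e1
    obtain ⟨t, ht1, ht2⟩ := exists_between e2
    rw [lt_div_iff₀ (by norm_num)] at hs2
    rw [lt_div_iff₀ hq0] at ht2
    have hs0 : 0 ≤ s := le_trans (by positivity) hs1.le
    have ht0 : 0 ≤ t := le_trans (by positivity) ht1.le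
    have hsum := cf_summable m n R hR h hh s t hs0 ht0 (by linarith) (by linarith)
    have hd := double_series_diff (cf m n h) s t hsum (p.1 ^ (m + 2), p.2 ^ (n + 2))
      (by simpa using hs1) (by simpa using ht1)
    exact hd.comp p (f := fun p : ℂ × ℂ => (p.1 ^ (m + 2), p.2 ^ (n + 2))) (by fun_prop)
  · intro hp0
    have hsum := cf_summable m n R hR h hh (‖p.1‖ ^ (m + 2)) (‖p.2‖ ^ (n + 2))
      (by positivity) (by positivity) hp1 hp2
    have hS : Summable (fun x : ℕ × ℕ =>
        cf m n h x * ((p.2 ^ (n + 2)) ^ x.1 * (p.1 ^ (m + 2)) ^ x.2)) := by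
      refine Summable.of_norm ?_
      simpa only [norm_mul, norm_pow] using hsum
    refine hS.hasSum.prod_fiberwise fun j => ?_
    have hlt : ‖p.1‖ ^ (m + 2) < R := by
      have : 0 ≤ ‖p.1‖ ^ (m + 2) := by positivity
      linarith
    obtain ⟨ρ, hρ1, hρ2⟩ : ∃ ρ : ℝ, ‖p.1‖ < ρ ∧ ρ ^ (m + 2) < R := by
      have hc : ContinuousAt (fun x : ℝ => x ^ (m + 2)) ‖p.1‖ := by fun_prop
      have h1 := (hc.eventually_lt_const hlt).filter_mono
        (nhdsWithin_le_nhds (s := Set.Ioi ‖p.1‖))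
      obtain ⟨ρ, h2, h3⟩ := (h1.and self_mem_nhdsWithin).exists
      exact ⟨ρ, h3, h2⟩
    obtain ⟨g, hg⟩ := Dop_iter m R hR h hh ρ
      (fun x hx => lt_of_le_of_lt (by gcongr) hρ2) j
    obtain ⟨h1, h2⟩ := hg p.1 hρ1
    rw [h2 hp0]
    have h3 := (h1.mul_left (1 / (Acoef n j : ℂ))).mul_right (p.2 ^ (j * (n + 2)))
    refine hs_congr h3 (fun k => ?_) rfl
    simp only [cf, ← pow_mul]
    rw [mul_comm (n + 2) j, mul_comm (m + 2) k]
    ring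

lemma root_bound (x c C R : ℝ) (N : ℕ) (e : ℝ) (he : e = N) (hN : 0 < N) (hx : 0 ≤ x) (hc : 0 ≤ c)
    (hR : 0 ≤ R) (hC : C ≤ c ^ (1 / e)) (hlt : x < C * R ^ (1 / e)) : x ^ N < c * R := by
  subst he
  have h1 : x < (c * R) ^ (1 / (N : ℝ)) := by
    rw [Real.mul_rpow hc hR]
    exact hlt.trans_le (by gcongr)
  have h2 : x ^ N < ((c * R) ^ (1 / (N : ℝ))) ^ N := by gcongr
  rwa [one_div, Real.rpow_inv_natCast_pow (by positivity) (by omega)] at h2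

/-- Lemma "convergence1".
For `h` holomorphic on `D(0,R)`, the series `M(X,Y) = Σ_j (1/A_j^n) D^j[h(X^{m+2})] Y^{j(n+2)}`
converges and defines a holomorphic function on `|X| < C·R^{1/(m+2)}`, `|Y| < C·R^{1/(n+2)}`;
in particular, if `h` is entire then `M` is entire on `ℂ²`. -/
theorem series_M_holomorphic
    (m n : ℕ) (hm : 0 < m) (hn : 0 < n) (R : ℝ) (hR : 0 < R)
    (h : ℂ → ℂ) (hh : DifferentiableOn ℂ h (Metric.ball 0 R)) :
    (∃ M : ℂ × ℂ → ℂ,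
      DifferentiableOn ℂ M
        {p : ℂ × ℂ | ‖p.1‖ < Cbound m n * R ^ ((1 : ℝ) / (m + 2))
          ∧ ‖p.2‖ < Cbound m n * R ^ ((1 : ℝ) / (n + 2))} ∧
      ∀ p : ℂ × ℂ, ‖p.1‖ < Cbound m n * R ^ ((1 : ℝ) / (m + 2)) →
        ‖p.2‖ < Cbound m n * R ^ ((1 : ℝ) / (n + 2)) → p.1 ≠ 0 →
        HasSum (fun j : ℕ =>
            (1 / (Acoef n j : ℂ)) * ((Dop m)^[j] (fun X => h (X ^ (m + 2))) p.1)
              * p.2 ^ (j * (n + 2)))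
          (M p)) ∧
    (Differentiable ℂ h →
      ∃ M : ℂ × ℂ → ℂ, Differentiable ℂ M ∧
        ∀ p : ℂ × ℂ, p.1 ≠ 0 →
          HasSum (fun j : ℕ =>
              (1 / (Acoef n j : ℂ)) * ((Dop m)^[j] (fun X => h (X ^ (m + 2))) p.1)
                * p.2 ^ (j * (n + 2)))
            (M p)) := by
  constructor
  · have key : ∀ p : ℂ × ℂ, ‖p.1‖ < Cbound m n * R ^ ((1 : ℝ) / (m + 2)) →
        ‖p.2‖ < Cbound m n * R ^ ((1 : ℝ) / (n + 2)) →
        4 * ‖p.1‖ ^ (m + 2) < R ∧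
        4 * ((m + 2) ^ 2 / ((n + 2) * (n + 1)) : ℝ) * ‖p.2‖ ^ (n + 2) < R := by
      intro p h1 h2
      have e1 := root_bound ‖p.1‖ _ (Cbound m n) R (m + 2) (m + 2) (by push_cast; rfl)
        (by omega) (norm_nonneg _) (by positivity) hR.le (min_le_left _ _) h1
      have e2 := root_bound ‖p.2‖ _ (Cbound m n) R (n + 2) (n + 2) (by push_cast; rfl)
        (by omega) (norm_nonneg _) (by positivity) hR.le (min_le_right _ _) h2
      constructor
      · have : ((m + 1 : ℝ) / (4 * (m + 2))) ≤ 1 / 4 := by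
          rw [div_le_div_iff₀ (by positivity) (by positivity)]
          linarith
        have := mul_le_mul_of_nonneg_right this hR.le
        linarith
      · have hq0 : (0 : ℝ) < 4 * ((m + 2) ^ 2 / ((n + 2) * (n + 1))) := by positivity
        have := mul_lt_mul_of_pos_left e2 hq0
        refine this.trans_eq ?_
        field_simp
    refine ⟨Mfun m n h, ?_, ?_⟩
    · rintro p ⟨h1, h2⟩
      obtain ⟨k1, k2⟩ := key p h1 h2
      exact (Mfun_core m n R hR h hh p k1 k2).1.differentiableWithinAt
    · intro p h1 h2 hp
      obtain ⟨k1, k2⟩ := key p h1 h2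
      exact (Mfun_core m n R hR h hh p k1 k2).2 hp
  · intro hd
    have key : ∀ p : ℂ × ℂ, ∃ R : ℝ, 0 < R ∧ 4 * ‖p.1‖ ^ (m + 2) < R ∧
        4 * ((m + 2) ^ 2 / ((n + 2) * (n + 1)) : ℝ) * ‖p.2‖ ^ (n + 2) < R := by
      intro p
      obtain ⟨S, hS⟩ := exists_gt (max (4 * ‖p.1‖ ^ (m + 2))
        (4 * ((m + 2) ^ 2 / ((n + 2) * (n + 1)) : ℝ) * ‖p.2‖ ^ (n + 2)))
      have k1 := (le_max_left _ _).trans_lt hS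
      exact ⟨S, lt_of_le_of_lt (by positivity) k1, k1, (le_max_right _ _).trans_lt hS⟩
    refine ⟨Mfun m n h, fun p => ?_, fun p hp => ?_⟩
    · obtain ⟨S, hS, k1, k2⟩ := key p
      exact (Mfun_core m n S hS h hd.differentiableOn p k1 k2).1
    · obtain ⟨S, hS, k1, k2⟩ := key p
      exact (Mfun_core m n S hS h hd.differentiableOn p k1 k2).2 hp
end
end

section
/- Let m, n be positive integers. For all integers p, j ≥ 0, the quantities A^m_β = ∏_{k=1}^β [k(m+2)−1][k(m+2)] and A^n_β = ∏_{k=1}^β [k(n+2)−1][k(n+2)] satisfy the inequality A^m_{p+j} / (A^m_p · A^n_j) ≤ ((m+2)/(m+1))^p · ((m+2)²/((n+2)(n+1)))^j · ((p+j)!/(p!·j!))². -/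
open scoped BigOperators

theorem Acoef_succ (a b : ℕ) :
    Acoef a (b + 1) = Acoef a b * (((b + 1) * (a + 2) - 1) * ((b + 1) * (a + 2))) := by
  unfold Acoef
  rw [Finset.prod_Icc_succ_top (by omega)]

theorem Acoef_upper (m p j : ℕ) :
    Acoef m (p + j) * (p.factorial) ^ 2 ≤
      Acoef m p * ((m + 2) ^ 2) ^ j * ((p + j).factorial) ^ 2 := by
  induction j with
  | zero => simp
  | succ j ih =>
    rw [← add_assoc, Acoef_succ, Nat.factorial_succ]
    have h : ((p + j + 1) * (m + 2) - 1) * ((p + j + 1) * (m + 2)) ≤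
        ((p + j + 1) * (m + 2)) * ((p + j + 1) * (m + 2)) :=
      Nat.mul_le_mul_right _ (Nat.sub_le _ _)
    calc _ = (Acoef m (p + j) * (p.factorial) ^ 2) *
          (((p + j + 1) * (m + 2) - 1) * ((p + j + 1) * (m + 2))) := by ring
      _ ≤ _ := Nat.mul_le_mul ih h
      _ = _ := by ring

theorem Acoef_lower (n j : ℕ) :
    ((n + 2) * (n + 1)) ^ j * (j.factorial) ^ 2 ≤ Acoef n j := by
  induction j with
  | zero => simp [Acoef]
  | succ j ih =>
    rw [Acoef_succ, Nat.factorial_succ]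
    have h0 : (j + 1) * (n + 1) ≤ (j + 1) * (n + 2) - 1 := by
      apply Nat.le_sub_of_add_le
      nlinarith
    have h : ((j + 1) * (n + 1)) * ((j + 1) * (n + 2)) ≤
        ((j + 1) * (n + 2) - 1) * ((j + 1) * (n + 2)) :=
      Nat.mul_le_mul_right _ h0
    calc _ = (((n + 2) * (n + 1)) ^ j * (j.factorial) ^ 2) *
          (((j + 1) * (n + 1)) * ((j + 1) * (n + 2))) := by ring
      _ ≤ _ := Nat.mul_le_mul ih h

theorem Acoef_pos (n j : ℕ) : 0 < Acoef n j :=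
  lt_of_lt_of_le (by positivity) (Acoef_lower n j)

/-- estimate \eqref{combinatorial}. For positive integers `m, n` and all
`p, j ≥ 0`:
`A^m_{p+j}/(A^m_p A^n_j) ≤ ((m+2)/(m+1))^p ((m+2)²/((n+2)(n+1)))^j ((p+j)!/(p!j!))²`. -/
theorem Acoef_ratio_bound (m n : ℕ) (hm : 0 < m) (hn : 0 < n) (p j : ℕ) :
    (Acoef m (p + j) : ℝ) / ((Acoef m p : ℝ) * (Acoef n j : ℝ)) ≤
      ((m + 2 : ℝ) / (m + 1)) ^ p * ((m + 2 : ℝ) ^ 2 / ((n + 2 : ℝ) * (n + 1))) ^ j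
        * ((Nat.factorial (p + j) : ℝ) / ((Nat.factorial p : ℝ) * (Nat.factorial j : ℝ))) ^ 2 := by
  have hA : (0 : ℝ) < Acoef m p := by exact_mod_cast Acoef_pos m p
  have hB : (0 : ℝ) < Acoef n j := by exact_mod_cast Acoef_pos n j
  have hU : (Acoef m (p + j) : ℝ) * (p.factorial : ℝ) ^ 2 ≤
      Acoef m p * ((m + 2 : ℝ) ^ 2) ^ j * ((p + j).factorial : ℝ) ^ 2 := by
    exact_mod_cast Acoef_upper m p j
  have hL : ((n + 2 : ℝ) * (n + 1)) ^ j * (j.factorial : ℝ) ^ 2 ≤ Acoef n j := by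
    exact_mod_cast Acoef_lower n j
  have h1 : (1 : ℝ) ≤ ((m + 2 : ℝ) / (m + 1)) ^ p := by
    apply one_le_pow₀
    rw [one_le_div (by positivity)]
    linarith
  have hp : (0 : ℝ) < p.factorial := by exact_mod_cast p.factorial_pos
  have hj : (0 : ℝ) < j.factorial := by exact_mod_cast j.factorial_pos
  have key : (Acoef m (p + j) : ℝ) / ((Acoef m p : ℝ) * (Acoef n j : ℝ)) ≤
      ((m + 2 : ℝ) ^ 2 / ((n + 2 : ℝ) * (n + 1))) ^ j
        * (((p + j).factorial : ℝ) / ((p.factorial : ℝ) * (j.factorial : ℝ))) ^ 2 := by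
    rw [div_pow, div_pow, div_mul_div_comm, div_le_div_iff₀ (by positivity) (by positivity)]
    calc _ = ((Acoef m (p + j) : ℝ) * (p.factorial : ℝ) ^ 2) *
          (((n + 2 : ℝ) * (n + 1)) ^ j * (j.factorial : ℝ) ^ 2) := by ring
      _ ≤ (Acoef m p * ((m + 2 : ℝ) ^ 2) ^ j * ((p + j).factorial : ℝ) ^ 2) * Acoef n j := by
        gcongr
      _ = _ := by ring
  rw [mul_assoc]
  exact key.trans (le_mul_of_one_le_left (by positivity) h1)
end
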